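/- arXiv:2503.18518 — 3 statements merged into one kernel-verified Lean document; each statement's English description precedes it below -/
import Mathlib

section
/- The set of functions f ∈ C(λ) satisfying both liminf_{n→∞} H_n(μ_f)/n = 0 and limsup_{n→∞} H_n(μ_f)/(n·log n) = 1 is comeager (residual) in C(λ). In other words, for the generic f ∈ C(λ), the normalized sampling entropy H_n(μ_f)/n has liminf 0 while H_n(μ_f)/(n·log n) has limsup 1, so H_n(μ_f) converges neither after normalizing by n nor by n·log n. -/
open MeasureTheory Filter

/-- The probability that `n` i.i.d. points sampled from `μ` realize the pattern `π`. -/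
noncomputable def patternProb {n : ℕ} (μ : Measure (ℝ × ℝ)) (π : Equiv.Perm (Fin n)) : ℝ :=
  (n.factorial : ℝ) *
    ((Measure.pi fun _ : Fin n => μ)
      {p : Fin n → ℝ × ℝ | ∀ i j : Fin n, i < j →
        (p i).1 < (p j).1 ∧ ((p i).2 < (p j).2 ↔ π i < π j)}).toReal

/-- Sampling entropy `H_n(μ)`. -/
noncomputable def samplingEntropy (μ : Measure (ℝ × ℝ)) (n : ℕ) : ℝ :=
  ∑ π : Equiv.Perm (Fin n), Real.negMulLog (patternProb μ π)

/-- A pre-permuton: a Borel probability measure on `ℝ²` with atomless marginals. -/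
def IsPrePermuton (μ : Measure (ℝ × ℝ)) : Prop :=
  IsProbabilityMeasure μ ∧ (∀ x : ℝ, μ.map Prod.fst {x} = 0) ∧ ∀ y : ℝ, μ.map Prod.snd {y} = 0

/-- A permuton: a Borel probability measure on `[0,1]²` with uniform marginals. -/
def IsPermuton (μ : Measure (ℝ × ℝ)) : Prop :=
  μ (Set.Icc (0:ℝ) 1 ×ˢ Set.Icc (0:ℝ) 1)ᶜ = 0 ∧
  μ.map Prod.fst = volume.restrict (Set.Icc (0:ℝ) 1) ∧
  μ.map Prod.snd = volume.restrict (Set.Icc (0:ℝ) 1)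

/-- The space C(λ) of continuous Lebesgue-measure-preserving maps [0,1] → [0,1],
with the supremum metric (inherited from C([0,1],[0,1]) as a subtype). -/
def MPContinuousMap : Type :=
  {f : C(unitInterval, unitInterval) // MeasurePreserving f volume volume}

noncomputable instance : MetricSpace MPContinuousMap :=
  inferInstanceAs (MetricSpace {f : C(unitInterval, unitInterval) //
    MeasurePreserving f volume volume})

/-- The permuton of f ∈ C(λ): the pushforward of Lebesgue measure on [0,1] under
x ↦ (x, f x). -/
noncomputable def graphPermutonCM (f : MPContinuousMap) : Measure (ℝ × ℝ) :=
  Measure.map (fun t : unitInterval => ((t : ℝ), (f.1 t : ℝ))) volume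

section
open scoped unitInterval ENNReal

namespace GSE

/-- cell label -/
noncomputable def lab (M : ℕ) (x : I) : ℕ := min ⌊(M:ℝ) * x⌋₊ (M - 1)

lemma lab_lt {M : ℕ} (hM : 0 < M) (x : I) : lab M x < M := by unfold lab; omega

lemma lab_mono (M : ℕ) : Monotone (lab M) := by
  intro x y h
  unfold lab
  have h' : (x:ℝ) ≤ y := h
  have : ⌊(M:ℝ) * x⌋₊ ≤ ⌊(M:ℝ) * y⌋₊ := Nat.floor_mono (by gcongr)
  omega

lemma lab_le {M : ℕ} (x : I) : (lab M x : ℝ) ≤ M * x := by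
  have h1 : (⌊(M:ℝ) * x⌋₊ : ℝ) ≤ M * x := Nat.floor_le (mul_nonneg (by positivity) x.2.1)
  have h2 : (lab M x : ℝ) ≤ (⌊(M:ℝ) * x⌋₊ : ℝ) := by
    exact_mod_cast min_le_left _ _
  linarith

lemma le_lab {M : ℕ} (hM : 0 < M) (x : I) : (M:ℝ) * x ≤ lab M x + 1 := by
  have h1 : (M:ℝ) * x < ⌊(M:ℝ) * x⌋₊ + 1 := Nat.lt_floor_add_one _
  have h3 : (M:ℝ) * x ≤ M := by
    have := x.2.2
    have hM' : (0:ℝ) ≤ M := by positivity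
    nlinarith
  rcases le_total ⌊(M:ℝ) * x⌋₊ (M-1) with h | h
  · simp only [lab, min_eq_left h]; exact h1.le
  · simp only [lab, min_eq_right h]
    rw [Nat.cast_sub (by omega)]; push_cast; linarith

lemma lab_eq {M : ℕ} {x : I} {a : ℕ} (ha : a < M) (h1 : (a:ℝ) ≤ M * x) (h2 : (M:ℝ) * x < a + 1) :
    lab M x = a := by
  have : ⌊(M:ℝ) * x⌋₊ = a := by
    rw [Nat.floor_eq_iff (le_trans (by positivity) h1)]; exact ⟨h1, h2⟩
  unfold lab; omega

lemma measurable_lab (M : ℕ) : Measurable (lab M) := by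
  unfold lab
  apply Measurable.min _ measurable_const
  exact Nat.measurable_floor.comp (by fun_prop)

lemma measurableSet_cell (M a : ℕ) : MeasurableSet (lab M ⁻¹' {a}) :=
  measurable_lab M (MeasurableSet.singleton a)

lemma volume_cell_le {M : ℕ} (hM : 0 < M) (a : ℕ) :
    volume (lab M ⁻¹' {a}) ≤ ENNReal.ofReal (1 / M) := by
  rw [unitInterval.volume_apply]
  have hM' : (0:ℝ) < M := by positivity
  calc volume (Subtype.val '' (lab M ⁻¹' {a})) ≤ volume (Set.Icc ((a:ℝ)/M) ((a+1)/M)) := by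
        apply measure_mono
        rintro _ ⟨x, hx, rfl⟩
        have hx : lab M x = a := hx
        have h1 := lab_le (M := M) x
        have h2 := le_lab hM x
        rw [hx] at h1 h2
        constructor
        · rw [div_le_iff₀ hM']; linarith
        · rw [le_div_iff₀ hM']; linarith
    _ = _ := by rw [Real.volume_Icc]; congr 1; field_simp; ring

lemma le_volume_cell {M : ℕ} (hM : 0 < M) {a : ℕ} (ha : a < M) :
    ENNReal.ofReal (1 / M) ≤ volume (lab M ⁻¹' {a}) := by
  rw [unitInterval.volume_apply]
  have hM' : (0:ℝ) < M := by positivity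
  have ha' : (a:ℝ) + 1 ≤ M := by exact_mod_cast ha
  calc _ = volume (Set.Ico ((a:ℝ)/M) ((a+1)/M)) := by
        rw [Real.volume_Ico]; congr 1; field_simp; ring
    _ ≤ _ := by
        apply measure_mono
        intro x hx
        have h0 : 0 ≤ x := le_trans (by positivity) hx.1
        have h1 : x ≤ 1 := hx.2.le.trans (by rw [div_le_one hM']; exact ha')
        refine ⟨⟨x, h0, h1⟩, ?_, rfl⟩
        apply lab_eq ha
        · have := hx.1; rw [div_le_iff₀ hM'] at this; simp only; linarith
        · have := hx.2; rw [lt_div_iff₀ hM'] at this; simp only; linarith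

lemma volume_cell {M : ℕ} (hM : 0 < M) {a : ℕ} (ha : a < M) :
    volume (lab M ⁻¹' {a}) = ENNReal.ofReal (1 / M) :=
  le_antisymm (volume_cell_le hM a) (le_volume_cell hM ha)

/-- The measure of a union of cells. -/
lemma volume_cells {M : ℕ} (hM : 0 < M) (A : Finset ℕ) (hA : ∀ a ∈ A, a < M) :
    volume {x : I | lab M x ∈ A} = ENNReal.ofReal (A.card / M) := by
  have : {x : I | lab M x ∈ A} = ⋃ a ∈ A, lab M ⁻¹' {a} := by ext x; simp
  rw [this, measure_biUnion_finset]
  · rw [Finset.sum_congr rfl (fun a ha => volume_cell hM (hA a ha)), Finset.sum_const,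
      nsmul_eq_mul, div_eq_mul_one_div (A.card : ℝ), ENNReal.ofReal_mul (by positivity), ENNReal.ofReal_natCast]
  · intro a _ b _ hab
    exact Disjoint.preimage _ (by simpa using hab)
  · intro a _; exact measurableSet_cell M a

section product
variable {n : ℕ}

/-- product Lebesgue measure -/
noncomputable abbrev lamN (n : ℕ) : Measure (Fin n → I) := Measure.pi fun _ : Fin n => (volume : Measure I)

lemma lamN_two {i j : Fin n} (hij : i ≠ j) (A : Set I) :
    lamN n {x | x i ∈ A ∧ x j ∈ A} = volume A * volume A := by
  have : {x : Fin n → I | x i ∈ A ∧ x j ∈ A} =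
      Set.pi ((({i, j} : Finset (Fin n)) : Set (Fin n))) (fun _ => A) := by
    ext x; simp
  rw [this, Measure.pi_pi_finset, Finset.prod_pair hij]

lemma collision_le {i j : Fin n} (hij : i ≠ j) {L : ℕ} (hL : 0 < L) :
    lamN n {x | lab L (x i) = lab L (x j)} ≤ ENNReal.ofReal (1 / L) := by
  have : {x : Fin n → I | lab L (x i) = lab L (x j)} ⊆
      ⋃ c ∈ Finset.range L, {x | x i ∈ lab L ⁻¹' {c} ∧ x j ∈ lab L ⁻¹' {c}} := by
    intro x hx
    simp only [Set.mem_iUnion]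
    exact ⟨lab L (x i), by simpa using lab_lt hL _, rfl, hx.symm⟩
  have hL' : (0:ℝ) < L := by positivity
  calc _ ≤ _ := measure_mono this
    _ ≤ ∑ c ∈ Finset.range L, lamN n {x | x i ∈ lab L ⁻¹' {c} ∧ x j ∈ lab L ⁻¹' {c}} :=
      measure_biUnion_finset_le _ _
    _ ≤ ∑ c ∈ Finset.range L, ENNReal.ofReal (1 / L * (1 / L)) := by
      apply Finset.sum_le_sum
      intro c _
      rw [lamN_two hij, ENNReal.ofReal_mul (by positivity)]
      exact mul_le_mul' (volume_cell_le hL c) (volume_cell_le hL c)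
    _ = ENNReal.ofReal (1 / L) := by
      rw [Finset.sum_const, Finset.card_range, nsmul_eq_mul, ← ENNReal.ofReal_natCast,
        ← ENNReal.ofReal_mul (by positivity)]
      congr 1; field_simp

lemma diag_null {i j : Fin n} (hij : i ≠ j) : lamN n {x | x i = x j} = 0 := by
  have h : ∀ L : ℕ, lamN n {x | x i = x j} ≤ ENNReal.ofReal (1 / ((L:ℝ)+1)) := by
    intro L
    refine le_trans (measure_mono ?_) ((collision_le hij (Nat.succ_pos L)).trans_eq (by push_cast; rfl))
    intro x (hx : x i = x j)
    simp [hx]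
  have t : Tendsto (fun L : ℕ => ENNReal.ofReal (1 / ((L:ℝ)+1))) atTop (nhds 0) := by
    have := ENNReal.tendsto_ofReal (tendsto_one_div_add_atTop_nhds_zero_nat (𝕜 := ℝ))
    simpa using this
  exact le_antisymm (ge_of_tendsto' t h) bot_le

lemma ae_injective : ∀ᵐ x ∂(lamN n), Function.Injective x := by
  have : ∀ᵐ x ∂(lamN n), ∀ i j : Fin n, i ≠ j → x i ≠ x j := by
    rw [ae_all_iff]; intro i
    rw [ae_all_iff]; intro j
    rw [ae_all_iff]; intro hij
    exact measure_eq_zero_iff_ae_notMem.1 (diag_null hij)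
  filter_upwards [this] with x hx i j hij
  by_contra h
  exact hx i j h hij

lemma mp_comp {f : I → I} (hf : MeasurePreserving f volume volume) :
    MeasurePreserving (fun (x : Fin n → I) i => f (x i)) (lamN n) (lamN n) :=
  measurePreserving_pi _ _ (fun _ => hf)

lemma ae_injective_comp {f : I → I} (hf : MeasurePreserving f volume volume) :
    ∀ᵐ x ∂(lamN n), Function.Injective (fun i => f (x i)) :=
  (mp_comp hf).quasiMeasurePreserving.ae ae_injective

lemma mp_perm (s : Equiv.Perm (Fin n)) :
    MeasurePreserving (fun (x : Fin n → I) i => x (s i)) (lamN n) (lamN n) := by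
  have := measurePreserving_piCongrLeft (fun _ : Fin n => (volume : Measure I)) s.symm
  convert this using 1
  ext x i
  simp [MeasurableEquiv.piCongrLeft, Equiv.piCongrLeft, Equiv.piCongrLeft']

lemma measurableSet_lt_coord (i j : Fin n) : MeasurableSet {x : Fin n → I | x i < x j} :=
  measurableSet_lt (measurable_pi_apply i) (measurable_pi_apply j)

lemma measurableSet_strictMono : MeasurableSet {x : Fin n → I | StrictMono x} := by
  have : {x : Fin n → I | StrictMono x} = ⋂ i, ⋂ j, {x | i < j → x i < x j} := by
    ext x; simp [StrictMono]
  rw [this]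
  refine MeasurableSet.iInter fun i => MeasurableSet.iInter fun j => ?_
  by_cases h : i < j
  · simpa [h] using measurableSet_lt_coord i j
  · simp [h]

lemma exists_perm_strictMono {α : Type*} [LinearOrder α] (x : Fin n → α) (hx : Function.Injective x) :
    ∃ s : Equiv.Perm (Fin n), StrictMono (x ∘ s) :=
  ⟨Tuple.sort x, (Tuple.monotone_sort x).strictMono_of_injective (hx.comp (Tuple.sort x).injective)⟩

lemma perm_strictMono_unique {α : Type*} [LinearOrder α] {x : Fin n → α} {s τ : Equiv.Perm (Fin n)}
    (hs : StrictMono (x ∘ s)) (hτ : StrictMono (x ∘ τ)) : s = τ := by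
  have hr : Set.range (x ∘ s) = Set.range (x ∘ τ) := by
    rw [Set.range_comp, Set.range_comp, s.surjective.range_eq, τ.surjective.range_eq]
  have h : x ∘ s = x ∘ τ := (hs.range_inj hτ).1 hr
  have hx : Function.Injective x := by
    have := hs.injective
    intro i j hij
    have := this (a₁ := s.symm i) (a₂ := s.symm j) (by simpa using hij)
    simpa using this
  ext i
  have := congrFun h i
  rw [hx this]

lemma volume_strictMono : lamN n {x | StrictMono x} = (n.factorial : ℝ≥0∞)⁻¹ := by
  have key : ∑ s : Equiv.Perm (Fin n), lamN n {x | StrictMono (x ∘ s)} = 1 := by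
    rw [← measure_biUnion_finset]
    · have : (⋃ b ∈ (Finset.univ : Finset (Equiv.Perm (Fin n))), {x : Fin n → I | StrictMono (x ∘ b)})
          =ᵐ[lamN n] Set.univ := by
        rw [eventuallyEq_univ]
        filter_upwards [ae_injective] with x hx
        simpa using exists_perm_strictMono x hx
      rw [measure_congr this, measure_univ]
    · intro s _ τ _ h
      refine Set.disjoint_left.2 fun x hx hx' => h (perm_strictMono_unique hx hx')
    · intro s _
      exact (mp_perm s).measurable measurableSet_strictMono
  have each : ∀ s : Equiv.Perm (Fin n), lamN n {x | StrictMono (x ∘ s)} = lamN n {x | StrictMono x} :=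
    fun s => (mp_perm s).measure_preimage measurableSet_strictMono.nullMeasurableSet
  simp only [each, Finset.sum_const, Finset.card_univ, Fintype.card_perm, Fintype.card_fin,
    nsmul_eq_mul] at key
  exact ENNReal.eq_inv_of_mul_eq_one_left (by rw [mul_comm]; exact key)

lemma volume_strictMono_perm (s : Equiv.Perm (Fin n)) :
    lamN n {x | StrictMono (x ∘ s)} = (n.factorial : ℝ≥0∞)⁻¹ := by
  rw [← volume_strictMono]
  exact (mp_perm s).measure_preimage measurableSet_strictMono.nullMeasurableSet

/-- the y-pattern set -/
def Pat (π : Equiv.Perm (Fin n)) : Set (Fin n → I) :=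
  {y | ∀ i j : Fin n, i < j → (y i < y j ↔ π i < π j)}

lemma measurableSet_Pat (π : Equiv.Perm (Fin n)) : MeasurableSet (Pat π) := by
  have : Pat π = ⋂ i, ⋂ j, {x | i < j → (x i < x j ↔ π i < π j)} := by
    ext x; simp [Pat]
  rw [this]
  refine MeasurableSet.iInter fun i => MeasurableSet.iInter fun j => ?_
  by_cases h : i < j
  · by_cases h' : π i < π j
    · simpa [h, h'] using measurableSet_lt_coord i j
    · have := (measurableSet_lt_coord (n := n) i j).compl
      simp only [h, h', forall_const, iff_false]
      exact this
  · simp [h]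

lemma Pat_iff {y : Fin n → I} (hy : Function.Injective y) (π : Equiv.Perm (Fin n)) :
    y ∈ Pat π ↔ StrictMono (y ∘ π.symm) := by
  constructor
  · intro h i j hij
    simp only [Function.comp]
    rcases lt_trichotomy (π.symm i) (π.symm j) with h1 | h1 | h1
    · exact (h _ _ h1).2 (by simpa using hij)
    · exact absurd (π.symm.injective h1) hij.ne
    · have h2 := (h _ _ h1).not.2 (by simpa using hij.le)
      exact lt_of_le_of_ne (not_lt.1 h2) (fun e => h1.ne' (hy e))
  · intro h i j _
    have := h.lt_iff_lt (a := π i) (b := π j)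
    simpa using this

lemma volume_Pat (π : Equiv.Perm (Fin n)) : lamN n (Pat π) = (n.factorial : ℝ≥0∞)⁻¹ := by
  rw [← volume_strictMono_perm π.symm]
  apply measure_congr
  filter_upwards [ae_injective] with y hy
  exact propext (Pat_iff hy π)

lemma pi_le_pi {α : Type*} [MeasurableSpace α] (μ ν : Fin n → Measure α)
    [∀ i, SigmaFinite (μ i)] [∀ i, SigmaFinite (ν i)]
    (h : ∀ i, μ i ≤ ν i) : Measure.pi μ ≤ Measure.pi ν := by
  rw [Measure.le_iff]
  intro s hs
  have h1 : (Measure.pi μ).toOuterMeasure ≤ OuterMeasure.pi (fun i => (ν i).toOuterMeasure) := by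
    rw [OuterMeasure.le_pi]
    intro s _
    change Measure.pi μ _ ≤ _
    rw [Measure.pi_pi]
    exact Finset.prod_le_prod' fun i _ => h i (s i)
  refine (h1 s).trans_eq ?_
  rw [Measure.pi, toMeasure_apply _ _ hs]

lemma pi_smul_const (C : ℝ≥0∞) (hC : C ≠ ∞) :
    Measure.pi (fun _ : Fin n => C • (volume : Measure I)) = C ^ n • lamN n := by
  have : SigmaFinite (C • (volume : Measure I)) := by
    have : IsFiniteMeasure (C • (volume : Measure I)) := ⟨by simpa using hC.lt_top⟩
    infer_instance
  apply Measure.pi_eq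
  intro s hs
  simp [Measure.pi_pi, Finset.prod_mul_distrib]

end product
end GSE
end

section
open scoped unitInterval ENNReal

namespace GSE
section entropy
variable {n : ℕ}

/-- the sample set with pattern -/
def PS (f : I → I) (π : Equiv.Perm (Fin n)) : Set (Fin n → I) :=
  {x | StrictMono x} ∩ {x | (fun i => f (x i)) ∈ Pat π}

lemma measurableSet_PS {f : I → I} (hf : Measurable f) (π : Equiv.Perm (Fin n)) :
    MeasurableSet (PS f π) :=
  measurableSet_strictMono.inter
    ((measurable_pi_lambda _ fun i => hf.comp (measurable_pi_apply i)) (measurableSet_Pat π))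

lemma mem_PS_iff {f : I → I} {π : Equiv.Perm (Fin n)} {x : Fin n → I} :
    x ∈ PS f π ↔ ∀ i j : Fin n, i < j → x i < x j ∧ (f (x i) < f (x j) ↔ π i < π j) := by
  constructor
  · rintro ⟨h1, h2⟩ i j hij
    exact ⟨h1 hij, h2 i j hij⟩
  · intro h
    exact ⟨fun i j hij => (h i j hij).1, fun i j hij => (h i j hij).2⟩

lemma patternProb_eq (f : MPContinuousMap) (π : Equiv.Perm (Fin n)) :
    patternProb (graphPermutonCM f) π = n.factorial * (lamN n (PS f.1 π)).toReal := by
  unfold patternProb graphPermutonCM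
  congr 2
  have hm : Measurable (fun t : I => ((t : ℝ), (f.1 t : ℝ))) := by
    have := f.1.continuous
    fun_prop
  have : IsProbabilityMeasure (Measure.map (fun t : I => ((t : ℝ), (f.1 t : ℝ))) volume) :=
    Measure.isProbabilityMeasure_map hm.aemeasurable
  have key := Measure.pi_map_pi (μ := fun _ : Fin n => (volume : Measure I))
    (f := fun _ (t : I) => ((t : ℝ), (f.1 t : ℝ))) (fun _ => hm.aemeasurable)
  rw [← key, Measure.map_apply]
  · congr 1
    ext x
    rw [mem_PS_iff]
    rfl
  · exact measurable_pi_lambda _ fun i => hm.comp (measurable_pi_apply i)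
  · have : {p : Fin n → ℝ × ℝ | ∀ i j : Fin n, i < j →
        (p i).1 < (p j).1 ∧ ((p i).2 < (p j).2 ↔ π i < π j)} =
        ⋂ i, ⋂ j, {p | i < j → (p i).1 < (p j).1 ∧ ((p i).2 < (p j).2 ↔ π i < π j)} := by
      ext x; simp
    rw [this]
    refine MeasurableSet.iInter fun i => MeasurableSet.iInter fun j => ?_
    by_cases h : i < j
    · simp only [h, forall_const]
      refine MeasurableSet.inter (s₁ := {p : Fin n → ℝ × ℝ | (p i).1 < (p j).1})
        (s₂ := {p : Fin n → ℝ × ℝ | ((p i).2 < (p j).2 ↔ π i < π j)})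
        (measurableSet_lt (by fun_prop) (by fun_prop)) ?_
      have h2 : MeasurableSet {p : Fin n → ℝ × ℝ | (p i).2 < (p j).2} :=
        measurableSet_lt (by fun_prop) (by fun_prop)
      by_cases h' : π i < π j
      · simpa [h'] using h2
      · have := h2.compl
        simp only [h', iff_false]
        exact this
    · simp [h]

lemma patternProb_nonneg (f : MPContinuousMap) (π : Equiv.Perm (Fin n)) :
    0 ≤ patternProb (graphPermutonCM f) π := by
  rw [patternProb_eq]; positivity

lemma Pat_disjoint {π τ : Equiv.Perm (Fin n)} {f : I → I} {x : Fin n → I}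
    (hi : Function.Injective (fun i => f (x i))) (h1 : x ∈ PS f π) (h2 : x ∈ PS f τ) : π = τ := by
  have := perm_strictMono_unique ((Pat_iff hi π).1 h1.2) ((Pat_iff hi τ).1 h2.2)
  exact Equiv.symm_bijective.injective this

lemma sum_lamN_PS (f : MPContinuousMap) (G : Finset (Equiv.Perm (Fin n))) :
    ∑ π ∈ G, lamN n (PS f.1 π) = lamN n (⋃ π ∈ G, PS f.1 π) := by
  rw [measure_biUnion_finset₀]
  · intro π _ τ _ h
    refine measure_mono_null ?_ (ae_injective_comp (n := n) f.2)
    rintro x ⟨hx1, hx2⟩ hi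
    exact h (Pat_disjoint hi hx1 hx2)
  · intro π _
    exact (measurableSet_PS f.1.continuous.measurable π).nullMeasurableSet

lemma sum_patternProb_finset (f : MPContinuousMap) (G : Finset (Equiv.Perm (Fin n))) :
    ∑ π ∈ G, patternProb (graphPermutonCM f) π =
      n.factorial * (lamN n (⋃ π ∈ G, PS f.1 π)).toReal := by
  rw [← sum_lamN_PS, ENNReal.toReal_sum (fun _ _ => measure_ne_top _ _), Finset.mul_sum]
  exact Finset.sum_congr rfl fun π _ => patternProb_eq f π

lemma sum_patternProb (f : MPContinuousMap) :
    ∑ π : Equiv.Perm (Fin n), patternProb (graphPermutonCM f) π = 1 := by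
  rw [sum_patternProb_finset]
  have : (⋃ π ∈ (Finset.univ : Finset (Equiv.Perm (Fin n))), PS f.1 π) =ᵐ[lamN n]
      {x | StrictMono x} := by
    filter_upwards [ae_injective_comp (n := n) f.2] with x hx
    apply propext
    change x ∈ (⋃ π ∈ (Finset.univ : Finset (Equiv.Perm (Fin n))), PS f.1 π) ↔ StrictMono x
    simp only [Finset.mem_univ, Set.iUnion_true, Set.mem_iUnion]
    constructor
    · rintro ⟨π, h, _⟩; exact h
    · intro h
      obtain ⟨s, hs⟩ := exists_perm_strictMono _ hx
      exact ⟨s.symm, h, (Pat_iff hx s.symm).2 (by simpa using hs)⟩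
  rw [measure_congr this, volume_strictMono]
  have : (n.factorial : ℝ) ≠ 0 := by positivity
  simp [this]

lemma continuous_coe_MP : Continuous (fun f : MPContinuousMap => f.1) :=
  continuous_subtype_val (p := fun f : C(I, I) => MeasurePreserving f volume volume)

lemma continuous_patternProb (π : Equiv.Perm (Fin n)) :
    Continuous (fun f : MPContinuousMap => patternProb (graphPermutonCM f) π) := by
  simp only [patternProb_eq]
  apply continuous_const.mul
  rw [continuous_iff_seqContinuous]
  intro u f hu
  have hpt : ∀ x : I, Tendsto (fun k => (u k).1 x) atTop (nhds (f.1 x)) := fun x =>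
    ((continuous_eval_const (F := C(I, I)) x).comp continuous_coe_MP).continuousAt.tendsto.comp hu
  refine (ENNReal.tendsto_toReal (measure_ne_top _ _)).comp ?_
  apply tendsto_measure_of_ae_tendsto_indicator_of_isFiniteMeasure atTop
  · exact measurableSet_PS f.1.continuous.measurable π
  · intro k; exact measurableSet_PS (u k).1.continuous.measurable π
  · filter_upwards [ae_injective_comp (n := n) f.2] with x hx
    have : ∀ i j : Fin n, i < j → ∀ᶠ k in atTop,
        ((u k).1 (x i) < (u k).1 (x j) ↔ f.1 (x i) < f.1 (x j)) := by
      intro i j hij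
      rcases lt_or_gt_of_ne (hx.ne hij.ne) with h | h
      · filter_upwards [(hpt (x i)).eventually_lt (hpt (x j)) h] with k hk
        exact iff_of_true hk h
      · filter_upwards [(hpt (x j)).eventually_lt (hpt (x i)) h] with k hk
        exact iff_of_false hk.le.not_gt h.le.not_gt
    have h2 : ∀ᶠ k in atTop, ∀ i j : Fin n, i < j →
        ((u k).1 (x i) < (u k).1 (x j) ↔ f.1 (x i) < f.1 (x j)) := by
      rw [eventually_all]; intro i
      rw [eventually_all]; intro j
      by_cases hij : i < j
      · simpa [hij] using this i j hij
      · simp [hij]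
    filter_upwards [h2] with k hk
    rw [mem_PS_iff, mem_PS_iff]
    constructor
    · intro h i j hij; have := h i j hij; rw [hk i j hij] at this; exact this
    · intro h i j hij; have := h i j hij; rw [← hk i j hij] at this; exact this

lemma continuous_samplingEntropy (n : ℕ) :
    Continuous (fun f : MPContinuousMap => samplingEntropy (graphPermutonCM f) n) := by
  unfold samplingEntropy
  exact continuous_finsetSum _ fun π _ => Real.continuous_negMulLog.comp (continuous_patternProb π)

lemma patternProb_le_one (f : MPContinuousMap) (π : Equiv.Perm (Fin n)) :
    patternProb (graphPermutonCM f) π ≤ 1 := by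
  rw [← sum_patternProb (n := n) f]
  exact Finset.single_le_sum (f := fun π => patternProb (graphPermutonCM f) π)
    (fun π _ => patternProb_nonneg f π) (Finset.mem_univ π)

lemma samplingEntropy_nonneg (f : MPContinuousMap) : 0 ≤ samplingEntropy (graphPermutonCM f) n :=
  Finset.sum_nonneg fun π _ =>
    Real.negMulLog_nonneg (patternProb_nonneg f π) (patternProb_le_one f π)

lemma negMulLog_le {t K : ℝ} (ht : 0 ≤ t) (hK : 0 < K) :
    Real.negMulLog t ≤ t * Real.log K + 1 / K - t := by
  rcases ht.eq_or_lt with rfl | ht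
  · simp [hK.le]
  · have h := Real.log_le_sub_one_of_pos (x := 1 / (t * K)) (by positivity)
    rw [one_div, Real.log_inv, Real.log_mul ht.ne' hK.ne'] at h
    have h2 := mul_le_mul_of_nonneg_left h ht.le
    have h3 : t * ((t * K)⁻¹ - 1) = 1 / K - t := by field_simp
    rw [h3] at h2
    unfold Real.negMulLog
    linarith

lemma samplingEntropy_le (f : MPContinuousMap) :
    samplingEntropy (graphPermutonCM f) n ≤ Real.log n.factorial := by
  have hK : (0:ℝ) < n.factorial := by positivity
  calc _ ≤ ∑ π : Equiv.Perm (Fin n), (patternProb (graphPermutonCM f) π * Real.log n.factorial +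
          1 / (n.factorial : ℝ) - patternProb (graphPermutonCM f) π) :=
        Finset.sum_le_sum fun π _ => negMulLog_le (patternProb_nonneg f π) hK
    _ = _ := by
      rw [Finset.sum_sub_distrib, Finset.sum_add_distrib, ← Finset.sum_mul, sum_patternProb]
      simp [Fintype.card_perm, hK.ne']

lemma low_bound (f : MPContinuousMap) (G : Finset (Equiv.Perm (Fin n))) {Q β : ℝ} (hQ : 1 ≤ Q)
    (hG : (G.card : ℝ) ≤ Q) (hβ : ∑ π ∈ Gᶜ, patternProb (graphPermutonCM f) π ≤ β) :
    samplingEntropy (graphPermutonCM f) n ≤ Real.log Q + β * Real.log n.factorial + 2 := by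
  have hK : (1:ℝ) ≤ n.factorial := by exact_mod_cast n.factorial_pos
  have hQ0 : 0 < Q := by linarith
  have hlQ := Real.log_nonneg hQ
  have hlK := Real.log_nonneg hK
  have hsum := sum_patternProb (n := n) f
  rw [← Finset.sum_add_sum_compl G] at hsum
  have hp : 0 ≤ ∑ π ∈ Gᶜ, patternProb (graphPermutonCM f) π :=
    Finset.sum_nonneg fun π _ => patternProb_nonneg f π
  unfold samplingEntropy
  rw [← Finset.sum_add_sum_compl G]
  have h1 : ∑ π ∈ G, Real.negMulLog (patternProb (graphPermutonCM f) π) ≤ Real.log Q + 1 := by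
    calc _ ≤ ∑ π ∈ G, (patternProb (graphPermutonCM f) π * Real.log Q + 1 / Q) :=
          Finset.sum_le_sum fun π _ => (negMulLog_le (patternProb_nonneg f π) hQ0).trans
            (by linarith [patternProb_nonneg f π])
      _ = (∑ π ∈ G, patternProb (graphPermutonCM f) π) * Real.log Q + G.card * (1 / Q) := by
          rw [Finset.sum_add_distrib, ← Finset.sum_mul]; simp
      _ ≤ 1 * Real.log Q + Q * (1 / Q) := by gcongr; linarith
      _ = _ := by field_simp
  have h2 : ∑ π ∈ Gᶜ, Real.negMulLog (patternProb (graphPermutonCM f) π) ≤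
      β * Real.log n.factorial + 1 := by
    calc _ ≤ ∑ π ∈ Gᶜ, (patternProb (graphPermutonCM f) π * Real.log n.factorial +
            1 / (n.factorial : ℝ)) :=
          Finset.sum_le_sum fun π _ => (negMulLog_le (patternProb_nonneg f π)
            (by linarith : (0:ℝ) < n.factorial)).trans (by linarith [patternProb_nonneg f π])
      _ = (∑ π ∈ Gᶜ, patternProb (graphPermutonCM f) π) * Real.log n.factorial +
            (Gᶜ).card * (1 / (n.factorial : ℝ)) := by
          rw [Finset.sum_add_distrib, ← Finset.sum_mul]; simp
      _ ≤ β * Real.log n.factorial + n.factorial * (1 / (n.factorial : ℝ)) := by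
          gcongr
          calc (Gᶜ).card ≤ Fintype.card (Equiv.Perm (Fin n)) := Finset.card_le_univ _
            _ = _ := by simp [Fintype.card_perm]
      _ = _ := by field_simp
  linarith

lemma high_bound (f : MPContinuousMap) {D : ℝ}
    (h : ∀ π : Equiv.Perm (Fin n), patternProb (graphPermutonCM f) π ≤ D) :
    -Real.log D ≤ samplingEntropy (graphPermutonCM f) n := by
  calc -Real.log D = ∑ π : Equiv.Perm (Fin n), patternProb (graphPermutonCM f) π * (-Real.log D) := by
        rw [← Finset.sum_mul, sum_patternProb, one_mul]
    _ ≤ _ := by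
      apply Finset.sum_le_sum
      intro π _
      rcases (patternProb_nonneg f π).eq_or_lt with h0 | h0
      · simp [← h0]
      · unfold Real.negMulLog
        have := Real.log_le_log h0 (h π)
        nlinarith

end entropy
end GSE
end

section
open scoped unitInterval ENNReal

namespace GSE

/-- polygonal interpolation -/
noncomputable def poly (K : ℕ) (w : ℕ → ℝ) (x : ℝ) : ℝ :=
  w 0 + ∑ k ∈ Finset.range K, (w (k+1) - w k) * max 0 (min (K * x - k) 1)

lemma continuous_poly (K : ℕ) (w : ℕ → ℝ) : Continuous (poly K w) := by
  unfold poly; fun_prop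

lemma poly_eq {K : ℕ} (w : ℕ → ℝ) {k : ℕ} (hk : k < K) {x : ℝ} (h1 : k ≤ K * x) (h2 : K * x ≤ k + 1) :
    poly K w x = w k + (K * x - k) * (w (k+1) - w k) := by
  unfold poly
  rw [← Finset.sum_range_add_sum_Ico _ hk.le, Finset.sum_eq_sum_Ico_succ_bot hk]
  have e1 : ∑ j ∈ Finset.range k, (w (j+1) - w j) * max 0 (min (K * x - j) 1) = w k - w 0 := by
    rw [← Finset.sum_range_sub]
    apply Finset.sum_congr rfl
    intro j hj
    have : (j:ℝ) + 1 ≤ k := by exact_mod_cast Finset.mem_range.1 hj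
    rw [min_eq_right (by linarith), max_eq_right (by norm_num), mul_one]
  have e2 : ∑ j ∈ Finset.Ico (k+1) K, (w (j+1) - w j) * max 0 (min (K * x - j) 1) = 0 := by
    apply Finset.sum_eq_zero
    intro j hj
    have : (k:ℝ) + 1 ≤ j := by exact_mod_cast (Finset.mem_Ico.1 hj).1
    rw [max_eq_left, mul_zero]
    exact (min_le_left _ _).trans (by linarith)
  rw [e1, e2, min_eq_left (by linarith), max_eq_right (by linarith)]
  ring

lemma poly_lab {K : ℕ} (hK : 0 < K) (w : ℕ → ℝ) (x : I) :
    poly K w x = w (lab K x) + (K * x - lab K x) * (w (lab K x + 1) - w (lab K x)) :=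
  poly_eq w (lab_lt hK x) (lab_le x) (le_lab hK x)

lemma poly_mem_uIcc {K : ℕ} (hK : 0 < K) (w : ℕ → ℝ) (x : I) :
    poly K w x ∈ Set.uIcc (w (lab K x)) (w (lab K x + 1)) := by
  rw [poly_lab hK, ← segment_eq_uIcc, segment_eq_image']
  exact ⟨K * x - lab K x, ⟨by linarith [lab_le (M := K) x], by linarith [le_lab hK x]⟩, by simp⟩

lemma poly_mem {K : ℕ} (hK : 0 < K) (w : ℕ → ℝ) (hw : ∀ j ≤ K, w j ∈ I) (x : I) :
    poly K w x ∈ I :=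
  (Set.uIcc_subset_Icc (hw _ (lab_lt hK x).le) (hw _ (lab_lt hK x))) (poly_mem_uIcc hK w x)

/-- polygonal interpolation on the unit interval -/
noncomputable def polyI (K : ℕ) (hK : 0 < K) (w : ℕ → ℝ) (hw : ∀ j ≤ K, w j ∈ I) : C(I, I) where
  toFun x := ⟨poly K w x, poly_mem hK w hw x⟩
  continuous_toFun := by
    apply Continuous.subtype_mk
    exact (continuous_poly K w).comp continuous_subtype_val

lemma volume_cell_poly {K : ℕ} (hK : 0 < K) (w : ℕ → ℝ) (hw : ∀ j ≤ K, w j ∈ I) (k : ℕ)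
    (hne : w k ≠ w (k+1)) (B : Set I) :
    volume (lab K ⁻¹' {k} ∩ polyI K hK w hw ⁻¹' B) ≤
      ENNReal.ofReal (1 / (K * |w (k+1) - w k|)) *
        volume (B ∩ {y : I | (y:ℝ) ∈ Set.uIcc (w k) (w (k+1))}) := by
  rw [unitInterval.volume_apply, unitInterval.volume_apply]
  set C := Subtype.val '' (B ∩ {y : I | (y:ℝ) ∈ Set.uIcc (w k) (w (k+1))}) with hC
  have hΔ : w (k+1) - w k ≠ 0 := sub_ne_zero.2 hne.symm
  have hK' : (K:ℝ) ≠ 0 := by positivity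
  have hsub : Subtype.val '' (lab K ⁻¹' {k} ∩ polyI K hK w hw ⁻¹' B) ⊆
      ((K * (w (k+1) - w k)) * ·) ⁻¹' ((· + (w k - k * (w (k+1) - w k))) ⁻¹' C) := by
    rintro _ ⟨x, ⟨hx, hB⟩, rfl⟩
    have hx : lab K x = k := hx
    refine ⟨polyI K hK w hw x, ⟨hB, ?_⟩, ?_⟩
    · have := poly_mem_uIcc hK w x
      rw [hx] at this; exact this
    · change poly K w x = _
      rw [poly_lab hK, hx]; ring
  refine (measure_mono hsub).trans_eq ?_
  rw [Real.volume_preimage_mul_left (mul_ne_zero hK' hΔ), measure_preimage_add_right]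
  congr 2
  rw [abs_inv, abs_mul, Nat.abs_cast, one_div]

lemma volume_le_sum_cells {K : ℕ} (hK : 0 < K) (B : Set I) :
    volume B ≤ ∑ k ∈ Finset.range K, volume (lab K ⁻¹' {k} ∩ B) := by
  have : B ⊆ ⋃ k ∈ Finset.range K, (lab K ⁻¹' {k} ∩ B) := by
    intro x hx
    simp only [Set.mem_iUnion]
    exact ⟨lab K x, by simpa using lab_lt hK x, rfl, hx⟩
  exact (measure_mono this).trans (measure_biUnion_finset_le _ _)

lemma sum_cells_le {K : ℕ} {B : Set I} (hB : MeasurableSet B) :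
    ∑ k ∈ Finset.range K, volume (lab K ⁻¹' {k} ∩ B) ≤ volume B := by
  rw [← measure_biUnion_finset]
  · apply measure_mono
    simp
  · intro a _ b _ hab
    exact (Disjoint.preimage _ (by simpa using hab)).mono Set.inter_subset_left Set.inter_subset_left
  · intro a _; exact (measurableSet_cell K a).inter hB

lemma volume_closed_cell_le {m : ℕ} (hm : 0 < m) {i : ℕ} (hi : i < m) (B : Set I) :
    volume (B ∩ {y : I | (y:ℝ) ∈ Set.Icc ((i:ℝ)/m) ((i+1)/m)}) ≤ volume (lab m ⁻¹' {i} ∩ B) := by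
  have hm' : (0:ℝ) < m := by positivity
  have hi' : (i:ℝ) + 1 ≤ m := by exact_mod_cast hi
  have hsub : (B ∩ {y : I | (y:ℝ) ∈ Set.Icc ((i:ℝ)/m) ((i+1)/m)}) ⊆
      (lab m ⁻¹' {i} ∩ B) ∪ {⟨(i+1)/m, by positivity, by rw [div_le_one hm']; exact hi'⟩} := by
    rintro y ⟨hy, h1, h2⟩
    by_cases h : (y:ℝ) = (i+1)/m
    · right; exact Subtype.ext h
    · left
      refine ⟨lab_eq hi ?_ ?_, hy⟩
      · rw [div_le_iff₀ hm'] at h1; linarith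
      · have := lt_of_le_of_ne h2 h
        rw [lt_div_iff₀ hm'] at this; linarith
  refine (measure_mono hsub).trans ((measure_union_le _ _).trans ?_)
  simp

lemma sum_range_mul_div {M : Type*} [AddCommMonoid M] (m k : ℕ) (hk : 0 < k) (F : ℕ → M) :
    ∑ c ∈ Finset.range (m * k), F (c / k) = ∑ i ∈ Finset.range m, k • F i := by
  induction m with
  | zero => simp
  | succ m ih =>
    rw [Nat.succ_mul, Finset.sum_range_add, ih, Finset.sum_range_succ]
    congr 1
    rw [Finset.sum_congr rfl (g := fun _ => F m), Finset.sum_const, Finset.card_range]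
    intro j hj
    have := Finset.mem_range.1 hj
    congr 1
    rw [mul_comm, Nat.mul_add_div hk, Nat.div_eq_of_lt this, add_zero]

/-- zigzag heights -/
noncomputable def zz (m k : ℕ) (c : ℕ) : ℝ := ((c / k : ℕ) + ((c % k) % 2 : ℕ) : ℝ) / m

lemma zz_cases (m k c : ℕ) (hk : k % 2 = 1) :
    (zz m k c = (c / k : ℕ) / m ∧ zz m k (c+1) = ((c / k : ℕ) + 1) / m) ∨
    (zz m k c = ((c / k : ℕ) + 1) / m ∧ zz m k (c+1) = (c / k : ℕ) / m) := by
  have hk0 : 0 < k := by omega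
  have hlt := Nat.mod_lt c hk0
  have hdm := Nat.div_add_mod c k
  have hparity : (c % k) % 2 = 0 ∨ (c % k) % 2 = 1 := by omega
  by_cases hl : c % k + 1 = k
  · have h1 : (c + 1) / k = c / k + 1 := by
      rw [show c + 1 = k * (c / k + 1) by rw [mul_add]; omega, Nat.mul_div_cancel_left _ hk0]
    have h2 : (c + 1) % k = 0 := by
      rw [show c + 1 = k * (c / k + 1) by rw [mul_add]; omega, Nat.mul_mod_right]
    left
    have h3 : (c % k) % 2 = 0 := by omega
    simp [zz, h1, h2, h3]
  · have h1 : (c + 1) / k = c / k := by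
      conv_lhs => rw [show c + 1 = k * (c / k) + (c % k + 1) by omega, Nat.mul_add_div hk0]
      rw [Nat.div_eq_of_lt (a := c % k + 1) (by omega), add_zero]
    have h2 : (c + 1) % k = c % k + 1 := by
      conv_lhs => rw [show c + 1 = k * (c / k) + (c % k + 1) by omega, Nat.mul_add_mod]
      exact Nat.mod_eq_of_lt (by omega)
    rcases hparity with h | h
    · left
      have h3 : (c % k + 1) % 2 = 1 := by omega
      simp [zz, h1, h2, h3, h]
    · right
      have h3 : (c % k + 1) % 2 = 0 := by omega
      simp [zz, h1, h2, h3, h]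

lemma zz_mem {m k : ℕ} (hm : 0 < m) (hk : k % 2 = 1) : ∀ j ≤ m * k, zz m k j ∈ I := by
  intro j hj
  have hk0 : 0 < k := by omega
  have hm' : (0:ℝ) < m := by positivity
  have : j / k + (j % k) % 2 ≤ m := by
    rcases hj.eq_or_lt with rfl | hj
    · simp [hk0]
    · have : j / k < m := by rw [Nat.div_lt_iff_lt_mul hk0]; exact hj
      omega
  refine ⟨by unfold zz; positivity, ?_⟩
  unfold zz
  rw [div_le_one hm']; exact_mod_cast this

lemma zz_uIcc (m k c : ℕ) (hk : k % 2 = 1) :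
    Set.uIcc (zz m k c) (zz m k (c+1)) = Set.Icc (((c / k : ℕ) : ℝ) / m) (((c / k : ℕ) + 1) / m) := by
  have hle : (((c / k : ℕ) : ℝ) / m) ≤ (((c / k : ℕ) + 1) / m) := by gcongr; linarith
  rcases zz_cases m k c hk with ⟨h1, h2⟩ | ⟨h1, h2⟩
  · rw [h1, h2, Set.uIcc_of_le hle]
  · rw [h1, h2, Set.uIcc_of_ge hle]

lemma zz_abs {m : ℕ} (k c : ℕ) (hk : k % 2 = 1) :
    |zz m k (c+1) - zz m k c| = 1 / m := by
  rcases zz_cases m k c hk with ⟨h1, h2⟩ | ⟨h1, h2⟩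
  · rw [h1, h2, ← sub_div, add_sub_cancel_left, abs_of_nonneg (by positivity)]
  · rw [h1, h2, ← sub_div, sub_add_cancel_left, neg_div, abs_neg, abs_of_nonneg (by positivity)]

/-- the zigzag map -/
noncomputable def zig (m k : ℕ) (hm : 0 < m) (hk : k % 2 = 1) : C(I, I) :=
  polyI (m * k) (Nat.mul_pos hm (by omega)) (zz m k) (zz_mem hm hk)

lemma zig_cell {m k : ℕ} (hm : 0 < m) (hk : k % 2 = 1) (c : ℕ) (B : Set I) :
    volume (lab (m * k) ⁻¹' {c} ∩ zig m k hm hk ⁻¹' B) ≤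
      ENNReal.ofReal (1 / k) *
        volume (B ∩ {y : I | (y:ℝ) ∈ Set.Icc (((c / k : ℕ) : ℝ) / m) (((c / k : ℕ) + 1) / m)}) := by
  have hk0 : (0:ℝ) < k := by have : 0 < k := by omega
                             positivity
  have hm' : (0:ℝ) < m := by positivity
  have hab := zz_abs (m := m) k c hk
  have hne : zz m k c ≠ zz m k (c+1) := by
    intro h
    rw [h, sub_self, abs_zero] at hab
    have : (0:ℝ) < 1 / m := by positivity
    linarith
  have := volume_cell_poly (Nat.mul_pos hm (by omega)) (zz m k) (zz_mem hm hk) c hne B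
  rw [hab, zz_uIcc m k c hk] at this
  refine this.trans_eq ?_
  congr 2
  push_cast; field_simp

lemma zig_mp {m k : ℕ} (hm : 0 < m) (hk : k % 2 = 1) :
    MeasurePreserving (zig m k hm hk) volume volume := by
  have hmeas : Measurable (zig m k hm hk) := (zig m k hm hk).continuous.measurable
  have hk0 : 0 < k := by omega
  refine ⟨hmeas, ?_⟩
  have : IsProbabilityMeasure (Measure.map (zig m k hm hk) volume) :=
    Measure.isProbabilityMeasure_map hmeas.aemeasurable
  apply Measure.eq_of_le_of_isProbabilityMeasure
  rw [Measure.le_iff]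
  intro B hB
  rw [Measure.map_apply hmeas hB]
  calc _ ≤ ∑ c ∈ Finset.range (m * k), volume (lab (m * k) ⁻¹' {c} ∩ zig m k hm hk ⁻¹' B) :=
        volume_le_sum_cells (Nat.mul_pos hm hk0) _
    _ ≤ ∑ c ∈ Finset.range (m * k), ENNReal.ofReal (1 / k) * volume (lab m ⁻¹' {c / k} ∩ B) := by
        apply Finset.sum_le_sum
        intro c hc
        refine (zig_cell hm hk c B).trans ?_
        refine mul_le_mul_right ?_ _
        apply volume_closed_cell_le hm
        rw [Nat.div_lt_iff_lt_mul hk0]; exact Finset.mem_range.1 hc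
    _ = ∑ i ∈ Finset.range m, volume (lab m ⁻¹' {i} ∩ B) := by
        rw [sum_range_mul_div m k hk0 (fun i => ENNReal.ofReal (1 / k) * volume (lab m ⁻¹' {i} ∩ B))]
        apply Finset.sum_congr rfl
        intro i _
        rw [nsmul_eq_mul, ← mul_assoc, ← ENNReal.ofReal_natCast, ← ENNReal.ofReal_mul (by positivity)]
        have : (k:ℝ) * (1 / k) = 1 := by field_simp
        rw [this]; simp
    _ ≤ volume B := sum_cells_le hB

lemma zig_near {m k : ℕ} (hm : 0 < m) (hk : k % 2 = 1) (x : I) :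
    dist (zig m k hm hk x) x ≤ 1 / m := by
  have hk0 : 0 < k := by omega
  have hm' : (0:ℝ) < m := by positivity
  have hk' : (0:ℝ) < k := by positivity
  have hK : 0 < m * k := Nat.mul_pos hm hk0
  have h := poly_mem_uIcc hK (zz m k) x
  rw [zz_uIcc _ _ _ hk] at h
  set c := lab (m * k) x with hc
  have h1 := lab_le (M := m * k) x
  have h2 := le_lab hK x
  rw [← hc] at h1 h2
  push_cast at h1 h2
  have e1 : ((c / k : ℕ) : ℝ) * k ≤ c := by exact_mod_cast Nat.div_mul_le_self c k
  have e2 : (c : ℝ) + 1 ≤ ((c / k : ℕ) + 1) * k := by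
    have : c < (c / k + 1) * k := by rw [← Nat.div_lt_iff_lt_mul hk0]; omega
    exact_mod_cast this
  have a1 : ((c / k : ℕ) : ℝ) ≤ m * x := by
    by_contra hh; push Not at hh; nlinarith
  have a2 : (m : ℝ) * x ≤ (c / k : ℕ) + 1 := by
    by_contra hh; push Not at hh; nlinarith
  have hx : (x:ℝ) ∈ Set.Icc (((c / k : ℕ) : ℝ) / m) (((c / k : ℕ) + 1) / m) := by
    constructor
    · rw [div_le_iff₀ hm']; linarith
    · rw [le_div_iff₀ hm']; linarith
  have := Real.dist_le_of_mem_Icc h hx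
  rw [← sub_div, add_sub_cancel_left] at this
  exact this

lemma unif_cont (f : C(I, I)) {δ : ℝ} (hδ : 0 < δ) :
    ∃ ε > 0, ∀ x y : I, dist x y < ε → dist (f x) (f y) < δ := by
  have := CompactSpace.uniformContinuous_of_continuous f.continuous
  obtain ⟨ε, hε, h⟩ := Metric.uniformContinuous_iff.1 this δ hδ
  exact ⟨ε, hε, fun x y hxy => h hxy⟩

lemma exists_high (f : MPContinuousMap) {δ : ℝ} (hδ : 0 < δ) :
    ∃ m : ℕ, 0 < m ∧ ∀ k : ℕ, k % 2 = 1 → ∃ g : MPContinuousMap, dist g f < δ ∧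
      ∀ (c : ℕ) (B : Set I), MeasurableSet B →
        volume (lab (m * k) ⁻¹' {c} ∩ g.1 ⁻¹' B) ≤ ENNReal.ofReal (1 / k) * volume B := by
  obtain ⟨ε, hε, hf⟩ := unif_cont f.1 (half_pos hδ)
  obtain ⟨m, hm⟩ := exists_nat_one_div_lt hε
  refine ⟨m + 1, Nat.succ_pos m, fun k hk => ?_⟩
  refine ⟨⟨f.1.comp (zig (m+1) k (Nat.succ_pos m) hk), f.2.comp (zig_mp (Nat.succ_pos m) hk)⟩, ?_, ?_⟩
  · refine lt_of_le_of_lt ?_ (half_lt_self hδ)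
    change dist (f.1.comp (zig (m+1) k (Nat.succ_pos m) hk)) f.1 ≤ δ / 2
    rw [ContinuousMap.dist_le (half_pos hδ).le]
    intro x
    apply le_of_lt
    apply hf
    refine (zig_near (Nat.succ_pos m) hk x).trans_lt ?_
    push_cast; exact hm
  · intro c B hB
    refine (zig_cell (Nat.succ_pos m) hk c (f.1 ⁻¹' B)).trans ?_
    refine mul_le_mul_right ?_ _
    refine (measure_mono Set.inter_subset_left).trans_eq ?_
    exact f.2.measure_preimage hB.nullMeasurableSet

end GSE
end

section
open scoped unitInterval ENNReal

namespace GSE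

lemma card_strictMono_le (n L : ℕ) :
    (Finset.univ.filter (fun c : Fin n → Fin L => StrictMono c)).card ≤ L.choose n := by
  classical
  calc _ ≤ (Finset.powersetCard n (Finset.univ : Finset (Fin L))).card := by
        apply Finset.card_le_card_of_injOn (fun c => Finset.univ.image c)
        · intro c hc
          have hc : StrictMono c := by simpa using hc
          simp [Finset.card_image_of_injective _ hc.injective]
        · intro c hc d hd h
          have hc : StrictMono c := by simpa using hc
          have hd : StrictMono d := by simpa using hd
          refine (hc.range_inj hd).1 ?_
          have := congrArg (fun s : Finset (Fin L) => (s : Set (Fin L))) h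
          simpa using this
    _ = _ := by simp

lemma cell_prod_le {n L k : ℕ} {g : I → I} (hg : Measurable g)
    (h : ∀ (c : ℕ) (B : Set I), MeasurableSet B →
        volume (lab L ⁻¹' {c} ∩ g ⁻¹' B) ≤ ENNReal.ofReal (1 / k) * volume B)
    (c : Fin n → ℕ) (π : Equiv.Perm (Fin n)) :
    lamN n {x | (∀ i, lab L (x i) = c i) ∧ (fun i => g (x i)) ∈ Pat π} ≤
      ENNReal.ofReal (1 / k) ^ n * (n.factorial : ℝ≥0∞)⁻¹ := by
  have hset : {x : Fin n → I | (∀ i, lab L (x i) = c i) ∧ (fun i => g (x i)) ∈ Pat π} =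
      ((fun (x : Fin n → I) i => g (x i)) ⁻¹' (Pat π)) ∩ (Set.univ.pi fun i => lab L ⁻¹' {c i}) := by
    ext x; simp [and_comm]
  have hgm : Measurable (fun (x : Fin n → I) i => g (x i)) :=
    measurable_pi_lambda _ fun i => hg.comp (measurable_pi_apply i)
  rw [hset, ← Measure.restrict_apply (hgm (measurableSet_Pat π)), Measure.restrict_pi_pi,
    ← Measure.map_apply hgm (measurableSet_Pat π)]
  have : ∀ i : Fin n, IsFiniteMeasure (Measure.map g (volume.restrict (lab L ⁻¹' {c i}))) :=
    fun i => inferInstance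
  rw [Measure.pi_map_pi (f := fun _ : Fin n => g)
    (μ := fun i => volume.restrict (lab L ⁻¹' {c i})) (fun _ => hg.aemeasurable)]
  have : IsFiniteMeasure (ENNReal.ofReal (1 / k) • (volume : Measure I)) :=
    ⟨by simp⟩
  have hle := pi_le_pi (fun i : Fin n => Measure.map g (volume.restrict (lab L ⁻¹' {c i})))
    (fun _ => ENNReal.ofReal (1 / k) • (volume : Measure I)) (by
      intro i
      rw [Measure.le_iff]
      intro B hB
      rw [Measure.map_apply hg hB, Measure.restrict_apply (hg hB), Set.inter_comm]
      exact h (c i) B hB)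
  refine (hle _).trans_eq ?_
  rw [pi_smul_const _ ENNReal.ofReal_ne_top, Measure.smul_apply, volume_Pat, smul_eq_mul]

lemma PS_le {n L k : ℕ} (hL : 0 < L) {g : I → I} (hg : Measurable g)
    (h : ∀ (c : ℕ) (B : Set I), MeasurableSet B →
        volume (lab L ⁻¹' {c} ∩ g ⁻¹' B) ≤ ENNReal.ofReal (1 / k) * volume B)
    (π : Equiv.Perm (Fin n)) :
    lamN n (PS g π) ≤ n * n * ENNReal.ofReal (1 / L) +
      L.choose n * (ENNReal.ofReal (1 / k) ^ n * (n.factorial : ℝ≥0∞)⁻¹) := by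
  classical
  set SM := Finset.univ.filter (fun c : Fin n → Fin L => StrictMono c)
  set off := Finset.univ.filter (fun p : Fin n × Fin n => p.1 ≠ p.2)
  have hsub : PS g π ⊆ (⋃ p ∈ off, {x : Fin n → I | lab L (x p.1) = lab L (x p.2)}) ∪
      ⋃ c ∈ SM, {x | (∀ i, lab L (x i) = (c i : ℕ)) ∧ (fun i => g (x i)) ∈ Pat π} := by
    rintro x ⟨hx, hp⟩
    by_cases hcol : ∃ i j : Fin n, i ≠ j ∧ lab L (x i) = lab L (x j)
    · obtain ⟨i, j, hij, he⟩ := hcol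
      left
      simp only [Set.mem_iUnion]
      exact ⟨(i, j), by simpa [off] using hij, he⟩
    · push Not at hcol
      right
      simp only [Set.mem_iUnion]
      refine ⟨fun i => ⟨lab L (x i), lab_lt hL _⟩, ?_, fun i => rfl, hp⟩
      simp only [SM, Finset.mem_filter, Finset.mem_univ, true_and]
      intro i j hij
      have h0 : lab L (x i) < lab L (x j) :=
        lt_of_le_of_ne (lab_mono L (hx hij).le) (hcol i j hij.ne)
      exact h0
  refine (measure_mono hsub).trans ((measure_union_le _ _).trans (add_le_add ?_ ?_))
  · calc _ ≤ ∑ p ∈ off, lamN n {x : Fin n → I | lab L (x p.1) = lab L (x p.2)} :=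
          measure_biUnion_finset_le _ _
      _ ≤ ∑ p ∈ off, ENNReal.ofReal (1 / L) :=
          Finset.sum_le_sum fun p hp => collision_le (by simpa [off] using hp) hL
      _ = off.card * ENNReal.ofReal (1 / L) := by rw [Finset.sum_const, nsmul_eq_mul]
      _ ≤ _ := by
          refine mul_le_mul_left ?_ _
          have : off.card ≤ n * n := (Finset.card_le_univ _).trans_eq (by simp)
          exact_mod_cast this
  · calc _ ≤ ∑ c ∈ SM, lamN n {x | (∀ i, lab L (x i) = (c i : ℕ)) ∧ (fun i => g (x i)) ∈ Pat π} :=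
          measure_biUnion_finset_le _ _
      _ ≤ ∑ c ∈ SM, (ENNReal.ofReal (1 / k) ^ n * (n.factorial : ℝ≥0∞)⁻¹) :=
          Finset.sum_le_sum fun c hc => cell_prod_le hg h (fun i => c i) π
      _ = SM.card * (ENNReal.ofReal (1 / k) ^ n * (n.factorial : ℝ≥0∞)⁻¹) := by
          rw [Finset.sum_const, nsmul_eq_mul]
      _ ≤ _ := by
          refine mul_le_mul_left ?_ _
          exact_mod_cast card_strictMono_le n L

lemma patternProb_le {n m k : ℕ} (hm : 0 < m) (hk : 0 < k) {g : MPContinuousMap}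
    (h : ∀ (c : ℕ) (B : Set I), MeasurableSet B →
        volume (lab (m * k) ⁻¹' {c} ∩ g.1 ⁻¹' B) ≤ ENNReal.ofReal (1 / k) * volume B)
    (π : Equiv.Perm (Fin n)) :
    patternProb (graphPermutonCM g) π ≤
      n.factorial * (n * n) / (m * k) + m ^ n / n.factorial := by
  rw [patternProb_eq]
  have hm' : (0:ℝ) < m := by positivity
  have hk' : (0:ℝ) < k := by positivity
  have hf : (0:ℝ) < n.factorial := by positivity
  have h1 := PS_le (Nat.mul_pos hm hk) g.1.continuous.measurable h π
  have h2 := ENNReal.toReal_mono (by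
    finiteness) h1
  rw [ENNReal.toReal_add (by finiteness) (by finiteness)] at h2
  simp only [ENNReal.toReal_mul, ENNReal.toReal_natCast, ENNReal.toReal_pow, ENNReal.toReal_inv,
    ENNReal.toReal_ofReal (show (0:ℝ) ≤ 1 / k by positivity),
    ENNReal.toReal_ofReal (show (0:ℝ) ≤ 1 / ((m * k : ℕ) : ℝ) by positivity)] at h2
  have h3 : ((m * k).choose n : ℝ) ≤ (m * k : ℝ) ^ n / n.factorial := by
    have := Nat.choose_le_pow_div (α := ℝ) n (m * k)
    push_cast at this; exact this
  calc _ ≤ (n.factorial : ℝ) * (n * n * (1 / ((m * k : ℕ) : ℝ)) +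
        (m * k : ℝ) ^ n / n.factorial * ((1 / (k:ℝ)) ^ n * (n.factorial : ℝ)⁻¹)) := by
        refine mul_le_mul_of_nonneg_left (h2.trans ?_) hf.le
        gcongr
    _ = _ := by
        push_cast
        rw [mul_pow, div_pow, one_pow]
        field_simp

lemma dense_high (f : MPContinuousMap) {δ ε : ℝ} (hδ : 0 < δ) (hε : 0 < ε) (N : ℕ) :
    ∃ g : MPContinuousMap, dist g f < δ ∧ ∃ n ≥ N,
      1 - ε < samplingEntropy (graphPermutonCM g) n / (n * Real.log n) := by
  obtain ⟨m, hm, H⟩ := exists_high f hδ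
  have hm' : (0:ℝ) < m := by positivity
  have hlog : Tendsto (fun n : ℕ => ε * Real.log n) atTop atTop :=
    (Real.tendsto_log_atTop.comp tendsto_natCast_atTop_atTop).const_mul_atTop hε
  obtain ⟨n, hn1, hn2, hn3⟩ := ((hlog.eventually_gt_atTop (2 + Real.log m)).and
    ((eventually_ge_atTop N).and (eventually_ge_atTop 2))).exists
  have hf : (0:ℝ) < n.factorial := by positivity
  have hn0 : (2:ℝ) ≤ n := by exact_mod_cast hn3
  -- choose k
  obtain ⟨q, hq⟩ := exists_nat_gt ((n.factorial : ℝ) * (n * n) / m / (m ^ n / n.factorial))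
  have hkq : (2 * q + 1) % 2 = 1 := by omega
  obtain ⟨g, hg, hc⟩ := H (2 * q + 1) hkq
  refine ⟨g, hg, n, hn2, ?_⟩
  have hD : ∀ π : Equiv.Perm (Fin n), patternProb (graphPermutonCM g) π ≤ 2 * (m ^ n / n.factorial) := by
    intro π
    refine (patternProb_le hm (by omega) hc π).trans ?_
    have h4 : (n.factorial : ℝ) * (n * n) / (m * (2 * q + 1 : ℕ)) ≤ m ^ n / n.factorial := by
      rw [div_lt_iff₀ (by positivity)] at hq
      rw [← div_div, div_le_iff₀ (by positivity)]
      push_cast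
      have : (0:ℝ) < m ^ n / n.factorial := by positivity
      nlinarith
    linarith
  have hlow := high_bound g hD
  rw [Real.log_mul (by norm_num) (by positivity), Real.log_div (by positivity) hf.ne', Real.log_pow] at hlow
  have hst : n * Real.log n - n ≤ Real.log n.factorial := by
    have h5 := Real.pow_div_factorial_le_exp (n:ℝ) (by positivity) n
    have h6 := Real.log_le_log (by positivity) h5
    rw [Real.log_exp, Real.log_div (by positivity) hf.ne', Real.log_pow] at h6
    linarith
  have hl2 : Real.log 2 ≤ 1 := by linarith [Real.log_two_lt_d9]
  have hlogn : 0 < Real.log n := Real.log_pos (by linarith)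
  rw [lt_div_iff₀ (by positivity)]
  have h7 : (n:ℝ) * (2 + Real.log m) < n * (ε * Real.log n) := by gcongr
  nlinarith

end GSE
end

section
open scoped unitInterval ENNReal

namespace GSE

lemma exists_quantile (ν : Measure I) [IsProbabilityMeasure ν] (hat : ∀ x, ν {x} = 0)
    (hpos : ∀ x y : I, x < y → 0 < ν (Set.Ioc x y)) :
    ∃ G : I ≃o I, Measure.map G volume = ν ∧
      ∀ u : I, (u : ℝ) = (ν (Set.Iic (G u))).toReal := by
  have hle1 : ∀ x, (ν (Set.Iic x)).toReal ≤ 1 := fun x =>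
    ENNReal.toReal_le_of_le_ofReal zero_le_one (by simpa using prob_le_one)
  set F : I → I := fun x => ⟨(ν (Set.Iic x)).toReal, ENNReal.toReal_nonneg, hle1 x⟩ with hF
  have hcont : Continuous F := by
    apply Continuous.subtype_mk
    rw [continuous_iff_continuousAt]
    intro x
    refine (ENNReal.tendsto_toReal (measure_ne_top _ _)).comp ?_
    apply tendsto_measure_of_ae_tendsto_indicator_of_isFiniteMeasure (nhds x)
    · exact measurableSet_Iic
    · intro y; exact measurableSet_Iic
    · filter_upwards [measure_eq_zero_iff_ae_notMem.1 (hat x)] with t ht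
      have ht : t ≠ x := ht
      rcases lt_or_gt_of_ne ht with h | h
      · filter_upwards [eventually_gt_nhds h] with y hy
        exact iff_of_true hy.le h.le
      · filter_upwards [eventually_lt_nhds h] with y hy
        exact iff_of_false hy.not_ge h.not_ge
  have hmono : StrictMono F := by
    intro x y hxy
    change (ν (Set.Iic x)).toReal < (ν (Set.Iic y)).toReal
    rw [ENNReal.toReal_lt_toReal (measure_ne_top _ _) (measure_ne_top _ _),
      ← Set.Iic_union_Ioc_eq_Iic hxy.le, measure_union (Set.Iic_disjoint_Ioc le_rfl) measurableSet_Ioc]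
    exact ENNReal.lt_add_right (measure_ne_top _ _) (hpos x y hxy).ne'
  have h0 : F 0 = 0 := by
    apply Subtype.ext
    change (ν (Set.Iic 0)).toReal = 0
    have : (Set.Iic (0:I)) = {0} := by
      ext x; simp
    rw [this, hat]; rfl
  have h1 : F 1 = 1 := by
    apply Subtype.ext
    change (ν (Set.Iic 1)).toReal = 1
    have : (Set.Iic (1:I)) = Set.univ := by
      ext x; simp [unitInterval.le_one']
    rw [this, measure_univ]; rfl
  have hsurj : Function.Surjective F := fun u =>
    mem_range_of_exists_le_of_exists_ge hcont ⟨0, by rw [h0]; exact unitInterval.nonneg'⟩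
      ⟨1, by rw [h1]; exact unitInterval.le_one'⟩
  set e := hmono.orderIsoOfSurjective F hsurj with he
  have heF : ∀ x, e x = F x := fun x => rfl
  refine ⟨e.symm, ?_, ?_⟩
  · have hm : Measurable e.symm := e.symm.continuous.measurable
    have : IsProbabilityMeasure (Measure.map e.symm volume) :=
      Measure.isProbabilityMeasure_map hm.aemeasurable
    apply Measure.ext_of_Iic
    intro x
    rw [Measure.map_apply hm measurableSet_Iic]
    have : e.symm ⁻¹' Set.Iic x = Set.Iic (F x) := by
      ext u
      simp only [Set.mem_preimage, Set.mem_Iic]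
      rw [OrderIso.symm_apply_le, heF]
    rw [this, unitInterval.volume_Iic]
    exact ENNReal.ofReal_toReal (measure_ne_top _ _)
  · intro u
    have : F (e.symm u) = u := by rw [← heF, OrderIso.apply_symm_apply]
    conv_lhs => rw [← this]

lemma reparam (h : C(I, I)) (s : I → I) (hs : Measurable s) (hsi : Function.Injective s)
    (hhs : ∀ y, h (s y) = y) (η r : ℝ) (hη : 0 < η)
    (hC : ∀ B, MeasurableSet B → ENNReal.ofReal η * volume (h ⁻¹' B) ≤ volume B)
    (hd : ∀ x : I, |(volume (s ⁻¹' (Set.Iic x))).toReal - x| ≤ r) :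
    ∃ G : I ≃o I, MeasurePreserving (fun u => h (G u)) volume volume ∧
      (∀ u, dist (G u) u ≤ r + η) ∧
      ∀ A, MeasurableSet A → (∀ᵐ y, s y ∈ A) → volume (G ⁻¹' Aᶜ) ≤ ENNReal.ofReal η := by
  have hh : Measurable h := h.continuous.measurable
  set e := ENNReal.ofReal η with he
  have he0 : 0 < e := ENNReal.ofReal_pos.2 hη
  have heT : e ≠ ∞ := ENNReal.ofReal_ne_top
  set κ : Measure I := e • volume with hκ
  have : IsFiniteMeasure κ := ⟨by simp [hκ, he]⟩
  set θ : Measure I := Measure.map h κ with hθ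
  have hθle : θ ≤ volume := by
    rw [Measure.le_iff]; intro B hB
    rw [hθ, Measure.map_apply hh hB, hκ, Measure.smul_apply, smul_eq_mul]
    exact hC B hB
  set ρ : Measure I := volume - θ with hρ
  have hρθ : ρ + θ = volume := Measure.sub_add_cancel_of_le hθle
  have hρle : ρ ≤ volume := Measure.sub_le
  have : IsFiniteMeasure ρ := isFiniteMeasure_of_le _ hρle
  have hκu : κ Set.univ = e := by simp [hκ]
  have hθu : θ Set.univ = e := by rw [hθ, Measure.map_apply hh MeasurableSet.univ]; simpa using hκu
  set ν : Measure I := κ + Measure.map s ρ with hν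
  have hνapp : ∀ B, MeasurableSet B → ν B = e * volume B + ρ (s ⁻¹' B) := by
    intro B hB
    rw [hν, Measure.add_apply, Measure.map_apply hs hB, hκ, Measure.smul_apply, smul_eq_mul]
  have : IsProbabilityMeasure ν := by
    constructor
    rw [hνapp _ MeasurableSet.univ, measure_univ, mul_one, Set.preimage_univ, ← hθu, add_comm,
      ← Measure.add_apply, hρθ, measure_univ]
  obtain ⟨G, hG, hGu⟩ := exists_quantile ν (by
      intro x
      rw [hνapp _ (measurableSet_singleton x), measure_singleton, mul_zero, zero_add]
      have h2 : (s ⁻¹' {x}).Subsingleton := by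
        intro a ha b hb
        exact hsi (ha.trans hb.symm)
      exact le_antisymm ((hρle _).trans_eq (h2.measure_zero _)) bot_le) (by
      intro x y hxy
      rw [hνapp _ measurableSet_Ioc]
      refine lt_of_lt_of_le ?_ le_self_add
      rw [unitInterval.volume_Ioc]
      have : (x:ℝ) < y := hxy
      exact ENNReal.mul_pos he0.ne' (ENNReal.ofReal_pos.2 (by linarith)).ne')
  have hGm : Measurable G := G.continuous.measurable
  refine ⟨G, ⟨hh.comp hGm, ?_⟩, ?_, ?_⟩
  · have : (fun u => h (G u)) = h ∘ G := rfl
    rw [this, ← Measure.map_map hh hGm, hG, hν, Measure.map_add _ _ hh, Measure.map_map hh hs]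
    have : h ∘ s = id := funext hhs
    rw [this, Measure.map_id, ← hθ, add_comm, hρθ]
  · intro u
    have hu := hGu u
    set x := G u
    rw [hνapp _ measurableSet_Iic, unitInterval.volume_Iic, ENNReal.toReal_add (by finiteness) (by finiteness),
      ENNReal.toReal_mul, ENNReal.toReal_ofReal hη.le, ENNReal.toReal_ofReal x.2.1] at hu
    have hp := abs_le.1 (hd x)
    have hq1 : (ρ (s ⁻¹' Set.Iic x)).toReal ≤ (volume (s ⁻¹' Set.Iic x)).toReal :=
      ENNReal.toReal_mono (by finiteness) (hρle _)
    have hq2 : (volume (s ⁻¹' Set.Iic x)).toReal ≤ (ρ (s ⁻¹' Set.Iic x)).toReal + η := by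
      rw [← ENNReal.toReal_ofReal hη.le, ← ENNReal.toReal_add (by finiteness) (by finiteness)]
      refine ENNReal.toReal_mono (by finiteness) ?_
      conv_lhs => rw [← hρθ, Measure.add_apply]
      gcongr
      exact (measure_mono (Set.subset_univ _)).trans_eq hθu
    change |(x:ℝ) - u| ≤ r + η
    have x0 := x.2.1
    have x1 := x.2.2
    rw [abs_le]
    constructor <;> nlinarith
  · intro A hA hsA
    rw [← Measure.map_apply hGm hA.compl, hG, hνapp _ hA.compl]
    have : ρ (s ⁻¹' Aᶜ) = 0 := by
      refine le_antisymm ((hρle _).trans_eq ?_) bot_le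
      exact hsA
    rw [this, add_zero]
    calc e * volume Aᶜ ≤ e * 1 := by gcongr; exact prob_le_one
      _ = e := mul_one e

end GSE
end

section
open scoped unitInterval ENNReal

namespace GSE

lemma hall_perm (f : MPContinuousMap) {M : ℕ} (hM : 0 < M) :
    ∃ p q : ℕ → ℕ, (∀ a < M, p a < M ∧ q (p a) = a) ∧ (∀ b < M, q b < M ∧ p (q b) = b) ∧
      p M = p (M - 1) + 1 ∧ ∀ a < M, ∃ x : I, lab M x = a ∧ lab M (f.1 x) = p a := by
  classical
  let t : Fin M → Finset (Fin M) := fun a =>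
    Finset.univ.filter fun b => ∃ x : I, lab M x = a ∧ lab M (f.1 x) = b
  have hall : ∀ s : Finset (Fin M), s.card ≤ (s.biUnion t).card := by
    intro s
    have hM' : (0:ℝ) < M := by positivity
    have h1 := volume_cells hM (s.map Fin.valEmbedding) (by
      intro a ha
      obtain ⟨b, _, rfl⟩ := Finset.mem_map.1 ha
      exact b.2)
    have h2 := volume_cells hM ((s.biUnion t).map Fin.valEmbedding)
      (by intro a ha
          obtain ⟨b, _, rfl⟩ := Finset.mem_map.1 ha
          exact b.2)
    have hms : MeasurableSet {x : I | lab M x ∈ (s.biUnion t).map Fin.valEmbedding} :=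
      measurable_lab M (Set.to_countable _).measurableSet
    have h3 : volume {x : I | lab M x ∈ s.map Fin.valEmbedding} ≤
        volume {x : I | lab M x ∈ (s.biUnion t).map Fin.valEmbedding} := by
      rw [← f.2.measure_preimage hms.nullMeasurableSet]
      apply measure_mono
      intro x hx
      obtain ⟨a, ha, hax⟩ := Finset.mem_map.1 (show lab M x ∈ s.map Fin.valEmbedding from hx)
      change lab M (f.1 x) ∈ (s.biUnion t).map Fin.valEmbedding
      refine Finset.mem_map.2 ⟨⟨lab M (f.1 x), lab_lt hM _⟩, ?_, rfl⟩
      refine Finset.mem_biUnion.2 ⟨a, ha, ?_⟩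
      simp only [t, Finset.mem_filter, Finset.mem_univ, true_and]
      exact ⟨x, hax.symm, rfl⟩
    rw [h1, h2, ENNReal.ofReal_le_ofReal_iff (by positivity), Finset.card_map, Finset.card_map,
      div_le_div_iff_of_pos_right hM'] at h3
    exact_mod_cast h3
  obtain ⟨g, hg, hgt⟩ := (Finset.all_card_le_biUnion_card_iff_exists_injective t).1 hall
  let e : Fin M ≃ Fin M := Equiv.ofBijective g (Finite.injective_iff_bijective.1 hg)
  refine ⟨fun a => if h : a < M then (e ⟨a, h⟩ : ℕ) else (e ⟨M - 1, by omega⟩ : ℕ) + 1,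
    fun b => if h : b < M then (e.symm ⟨b, h⟩ : ℕ) else 0, ?_, ?_, ?_, ?_⟩
  · intro a ha
    simp [ha]
  · intro a ha
    simp [ha]
  · have : M - 1 < M := by omega
    simp [this]
  · intro a ha
    have := hgt ⟨a, ha⟩
    simp only [t, Finset.mem_filter, Finset.mem_univ, true_and] at this
    simpa [ha, e] using this

lemma abs_le_one_div {x c : ℝ} (hc : 0 < c) (h : |x * c| ≤ 1) : |x| ≤ 1 / c := by
  rw [abs_mul, abs_of_pos hc] at h
  rwa [le_div_iff₀ hc]

/-- vertices of the comb -/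
noncomputable def cw (M : ℕ) (p : ℕ → ℕ) (j : ℕ) : ℝ :=
  ((p (j / 3) : ℝ) + (if j % 3 = 1 then 1 else 0)) / M

lemma cw_mem {M : ℕ} (hM : 0 < M) {p : ℕ → ℕ} (hp : ∀ a < M, p a < M)
    (hpM : p M = p (M - 1) + 1) : ∀ j ≤ 3 * M, cw M p j ∈ I := by
  intro j hj
  have hM' : (0:ℝ) < M := by positivity
  have hz : (0:ℝ) ≤ (if j % 3 = 1 then 1 else 0) := by split_ifs <;> norm_num
  refine ⟨by unfold cw; positivity, ?_⟩
  unfold cw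
  rw [div_le_one hM']
  rcases hj.eq_or_lt with rfl | hj
  · have h1 : 3 * M / 3 = M := by omega
    have h2 : ¬ (3 * M % 3 = 1) := by omega
    rw [h1, if_neg h2, hpM, add_zero]
    exact_mod_cast hp (M-1) (by omega)
  · have h : p (j/3) + 1 ≤ M := hp _ (by omega)
    have h' : (p (j/3) : ℝ) + 1 ≤ M := by exact_mod_cast h
    split_ifs <;> linarith

lemma cw_abs {M : ℕ} (hM : 0 < M) {p q : ℕ → ℕ} (hp : ∀ a < M, p a < M ∧ q (p a) = a)
    (hpM : p M = p (M - 1) + 1) {j : ℕ} (hj : j < 3 * M) :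
    1 / (M:ℝ) ≤ |cw M p (j+1) - cw M p j| := by
  have hM' : (0:ℝ) < M := by positivity
  unfold cw
  rw [← sub_div, abs_div, Nat.abs_cast, div_le_div_iff_of_pos_right hM']
  have hc : j % 3 = 0 ∨ j % 3 = 1 ∨ j % 3 = 2 := by omega
  rcases hc with h | h | h
  · have h1 : (j+1) % 3 = 1 := by omega
    have h2 : (j+1) / 3 = j / 3 := by omega
    rw [h1, h2, h]; norm_num
  · have h1 : (j+1) % 3 = 2 := by omega
    have h2 : (j+1) / 3 = j / 3 := by omega
    rw [h1, h2, h]; norm_num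
  · have h1 : (j+1) % 3 = 0 := by omega
    have h2 : (j+1) / 3 = j / 3 + 1 := by omega
    rw [h1, h2, h]
    have hne : p (j/3+1) ≠ p (j/3) := by
      by_cases hl : j / 3 + 1 < M
      · intro he
        have e1 := (hp _ hl).2
        have e2 := (hp (j/3) (by omega)).2
        rw [he, e2] at e1; omega
      · have e : j / 3 + 1 = M := by omega
        have e' : j / 3 = M - 1 := by omega
        rw [e, e', hpM]; omega
    have : (1:ℤ) ≤ |(p (j/3+1) : ℤ) - p (j/3)| := Int.one_le_abs (by omega)
    have h3 : (1:ℝ) ≤ |(p (j/3+1) : ℝ) - p (j/3)| := by exact_mod_cast this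
    simpa using h3

lemma cw_node {f : MPContinuousMap} {M : ℕ} (hM : 0 < M) {p : ℕ → ℕ}
    (hpM : p M = p (M - 1) + 1)
    (hx : ∀ a < M, ∃ x : I, lab M x = a ∧ lab M (f.1 x) = p a) {j : ℕ} (hj : j ≤ 3 * M) :
    ∃ x : I, |cw M p j - f.1 x| ≤ 1 / M ∧ |(j:ℝ) / (3 * M) - x| ≤ 1 / M := by
  have hM' : (0:ℝ) < M := by positivity
  have key : ∀ a < M, (a:ℝ) ≤ j / 3 → (j:ℝ) / 3 ≤ a + 1 → (p a : ℝ) ≤ M * cw M p j →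
      M * cw M p j ≤ p a + 1 → 
      ∃ x : I, |cw M p j - f.1 x| ≤ 1 / M ∧ |(j:ℝ) / (3 * M) - x| ≤ 1 / M := by
    intro a ha h1 h2 h3 h4
    obtain ⟨x, hx1, hx2⟩ := hx a ha
    have l1 := lab_le (M := M) x
    have l2 := le_lab hM x
    have l3 := lab_le (M := M) (f.1 x)
    have l4 := le_lab hM (f.1 x)
    rw [hx1] at l1 l2
    rw [hx2] at l3 l4
    refine ⟨x, ?_, ?_⟩
    · apply abs_le_one_div hM'
      rw [abs_le]
      constructor <;> nlinarith
    · apply abs_le_one_div hM'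
      rw [sub_mul]
      have : (j:ℝ) / (3 * M) * M = j / 3 := by field_simp
      rw [this, abs_le]
      constructor <;> nlinarith
  have hcw : M * cw M p j = (p (j / 3) : ℝ) + (if j % 3 = 1 then 1 else 0) := by
    unfold cw; field_simp
  rcases hj.eq_or_lt with rfl | hj
  · have h1 : 3 * M / 3 = M := by omega
    have h2 : ¬ (3 * M % 3 = 1) := by omega
    rw [h1, if_neg h2, hpM] at hcw
    push_cast at hcw
    have e : ((M - 1 : ℕ) : ℝ) = M - 1 := by rw [Nat.cast_sub hM]; simp
    refine key (M-1) (by omega) ?_ ?_ ?_ ?_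
    · rw [e]; push_cast; linarith
    · rw [e]; push_cast; linarith
    · push_cast; linarith
    · push_cast; linarith
  · have hd : 3 * (j / 3) ≤ j := Nat.mul_div_le j 3
    have hd2 : j ≤ 3 * (j / 3) + 3 := by omega
    have hd' : (3:ℝ) * (j / 3 : ℕ) ≤ j := by exact_mod_cast hd
    have hd2' : (j:ℝ) ≤ 3 * (j / 3 : ℕ) + 3 := by exact_mod_cast hd2
    refine key (j/3) (by omega) (by linarith) (by linarith) ?_ ?_
    · rw [hcw]; split_ifs <;> linarith
    · rw [hcw]; split_ifs <;> linarith

lemma exists_low (f : MPContinuousMap) {δ : ℝ} (hδ : 0 < δ) :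
    ∃ M : ℕ, 0 < M ∧ ∀ η > 0, ∃ g : MPContinuousMap, dist g f < δ ∧
      ∃ E : Set I, MeasurableSet E ∧ volume Eᶜ ≤ ENNReal.ofReal η ∧ ∃ l : I → Fin M, Monotone l ∧
        ∃ p : ℕ → ℕ, ∀ u ∈ E, ∀ v ∈ E, u < v → (g.1 u < g.1 v ↔ p (l u) ≤ p (l v)) := by
  have hδ4 : 0 < δ / 4 := by positivity
  obtain ⟨ε, hε, hf⟩ := unif_cont f.1 hδ4
  obtain ⟨m, hm⟩ := exists_nat_one_div_lt (show 0 < min (ε/4) (δ/4) by positivity)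
  obtain ⟨M, hMdef⟩ : ∃ M, M = m + 1 := ⟨_, rfl⟩
  have hM : 0 < M := by omega
  have hM' : (0:ℝ) < M := by positivity
  have hMm : 1 / (M:ℝ) < min (ε/4) (δ/4) := by rw [hMdef]; push_cast; exact hm
  have hMε : 1 / (M:ℝ) < ε / 4 := hMm.trans_le (min_le_left _ _)
  have hMδ : 1 / (M:ℝ) < δ / 4 := hMm.trans_le (min_le_right _ _)
  refine ⟨M, hM, fun η0 hη0 => ?_⟩
  obtain ⟨p, q, hp, hq, hpM, hx⟩ := hall_perm f hM
  obtain ⟨η, hη, hη1, hη2⟩ : ∃ η : ℝ, 0 < η ∧ η ≤ 1 / M ∧ η ≤ η0 :=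
    ⟨min (1/M) η0, by positivity, min_le_left _ _, min_le_right _ _⟩
  have hK : 0 < 3 * M := by omega
  have hcm := cw_mem hM (fun a ha => (hp a ha).1) hpM
  set h := polyI (3 * M) hK (cw M p) hcm with hh
  have hval : ∀ x : I, ((h x : I) : ℝ) = poly (3 * M) (cw M p) x := fun x => rfl
  -- value on the rising third
  have hrise : ∀ (x : I) (a : ℕ), a < M → (a:ℝ) ≤ M * x → M * (x:ℝ) - a ≤ 1/3 →
      ((h x : I) : ℝ) = (p a + 3 * (M * x - a)) / M := by
    intro x a ha h1 h2
    rw [hval, poly_eq (k := 3 * a) (cw M p) (by omega) (by push_cast; linarith)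
      (by push_cast; linarith)]
    have e1 : 3 * a / 3 = a := by omega
    have e2 : (3 * a + 1) / 3 = a := by omega
    have e3 : ¬ (3 * a % 3 = 1) := by omega
    have e4 : (3 * a + 1) % 3 = 1 := by omega
    unfold cw
    rw [e1, e2, if_neg e3, if_pos e4]
    push_cast
    field_simp
    ring
  -- the section
  have hsI : ∀ y : I, ((q (lab M y) : ℝ) + (M * y - lab M y) / 3) / M ∈ I := by
    intro y
    have l1 := lab_le (M := M) y
    have l2 := le_lab hM y
    have l3 : q (lab M y) + 1 ≤ M := (hq _ (lab_lt hM y)).1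
    have l3' : (q (lab M y) : ℝ) + 1 ≤ M := by exact_mod_cast l3
    refine ⟨div_nonneg (by have : (0:ℝ) ≤ q (lab M y) := Nat.cast_nonneg _
                           linarith) hM'.le, ?_⟩
    rw [div_le_one hM']; linarith
  let s : I → I := fun y => ⟨_, hsI y⟩
  have hsM : ∀ y : I, M * ((s y : I) : ℝ) = q (lab M y) + (M * y - lab M y) / 3 := by
    intro y
    change (M:ℝ) * (((q (lab M y) : ℝ) + (M * y - lab M y) / 3) / M) = _
    field_simp
  have hs : Measurable s := by
    apply Measurable.subtype_mk
    have h1 : Measurable (fun y : I => (q (lab M y) : ℝ)) :=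
      (measurable_of_countable (fun k : ℕ => (q k : ℝ))).comp (measurable_lab M)
    have h2 : Measurable (fun y : I => (lab M y : ℝ)) :=
      (measurable_of_countable (fun k : ℕ => (k : ℝ))).comp (measurable_lab M)
    exact (h1.add (((measurable_subtype_coe.const_mul _).sub h2).div_const _)).div_const _
  have hslab : ∀ y, lab M (s y) = q (lab M y) := by
    intro y
    have l1 := lab_le (M := M) y
    have l2 := le_lab hM y
    apply lab_eq (hq _ (lab_lt hM y)).1
    · rw [hsM]; linarith
    · rw [hsM]; linarith
  have hhs : ∀ y, h (s y) = y := by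
    intro y
    have l1 := lab_le (M := M) y
    have l2 := le_lab hM y
    apply Subtype.ext
    rw [hrise (s y) (q (lab M y)) (hq _ (lab_lt hM y)).1 (by rw [hsM]; linarith)
      (by rw [hsM]; linarith), hsM, (hq _ (lab_lt hM y)).2]
    field_simp
    ring
  have hsi : Function.Injective s := Function.LeftInverse.injective hhs
  have hC : ∀ B, MeasurableSet B → ENNReal.ofReal η * volume (h ⁻¹' B) ≤ volume B := by
    intro B hB
    have hcell : ∀ k ∈ Finset.range (3 * M), volume (lab (3*M) ⁻¹' {k} ∩ h ⁻¹' B) ≤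
        ENNReal.ofReal (1/3) * volume B := by
      intro k hk
      have hab := cw_abs hM hp hpM (Finset.mem_range.1 hk)
      have hpos : 0 < |cw M p (k+1) - cw M p k| := lt_of_lt_of_le (by positivity) hab
      refine (volume_cell_poly hK (cw M p) hcm k ?_ B).trans ?_
      · intro he; rw [he, sub_self, abs_zero] at hpos; exact lt_irrefl _ hpos
      · gcongr
        · push_cast
          rw [div_le_iff₀ hM'] at hab
          linarith
        · exact Set.inter_subset_left
    have h1 := (volume_le_sum_cells hK (h ⁻¹' B)).trans (Finset.sum_le_sum hcell)
    rw [Finset.sum_const, Finset.card_range, nsmul_eq_mul, ← mul_assoc] at h1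
    calc ENNReal.ofReal η * volume (h ⁻¹' B)
        ≤ ENNReal.ofReal η * (((3 * M : ℕ) : ℝ≥0∞) * ENNReal.ofReal (1/3) * volume B) := by gcongr
      _ = ENNReal.ofReal (η * M) * volume B := by
          rw [← mul_assoc, ← ENNReal.ofReal_natCast (3 * M), ← ENNReal.ofReal_mul (by positivity),
            ← ENNReal.ofReal_mul hη.le]
          congr 2
          push_cast; ring
      _ ≤ 1 * volume B := by
          gcongr
          rw [ENNReal.ofReal_le_one, ← le_div_iff₀ hM']
          exact hη1
      _ = _ := one_mul _
  have hd : ∀ x : I, |(volume (s ⁻¹' Set.Iic x)).toReal - x| ≤ 1 / M := by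
    intro x
    have hcard : ∀ c : ℕ, c ≤ M → volume {y : I | lab M y ∈ (Finset.range c).image p} =
        ENNReal.ofReal (c / M) := by
      intro c hc
      rw [volume_cells hM]
      · rw [Finset.card_image_of_injOn, Finset.card_range]
        intro a ha b hb hab
        have ha : a < c := by simpa using ha
        have hb : b < c := by simpa using hb
        rw [← (hp a (by omega)).2, ← (hp b (by omega)).2, hab]
      · intro a ha
        obtain ⟨b, hb, rfl⟩ := Finset.mem_image.1 ha
        have hb : b < c := by simpa using hb
        exact (hp b (by omega)).1
    have hmem : ∀ (c : ℕ) (y : I), q (lab M y) < c → lab M y ∈ (Finset.range c).image p :=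
      fun c y hy => Finset.mem_image.2 ⟨_, Finset.mem_range.2 hy, (hq _ (lab_lt hM y)).2⟩
    have hup : s ⁻¹' Set.Iic x ⊆ {y : I | lab M y ∈ (Finset.range (lab M x + 1)).image p} := by
      intro y hy
      apply hmem
      rw [← hslab]
      exact Nat.lt_succ_of_le (lab_mono M hy)
    have hlo : {y : I | lab M y ∈ (Finset.range (lab M x)).image p} ⊆ s ⁻¹' Set.Iic x := by
      intro y hy
      obtain ⟨b, hb, hby⟩ := Finset.mem_image.1
        (show lab M y ∈ (Finset.range (lab M x)).image p from hy)
      have hb : b < lab M x := by simpa using hb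
      have e : lab M (s y) = b := by
        rw [hslab, ← hby, (hp b (hb.trans (lab_lt hM x))).2]
      change s y ≤ x
      by_contra hlt
      have := lab_mono M (not_le.1 hlt).le
      omega
    have v1 := measure_mono (μ := volume) hup
    have v2 := measure_mono (μ := volume) hlo
    rw [hcard _ (lab_lt hM x)] at v1
    rw [hcard _ (lab_lt hM x).le] at v2
    have v1' := ENNReal.toReal_le_of_le_ofReal (by positivity) v1
    have v2' := (ENNReal.ofReal_le_iff_le_toReal (measure_ne_top _ _)).1 v2
    have l1 := lab_le (M := M) x
    have l2 := le_lab hM x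
    rw [div_le_iff₀ hM'] at v2'
    rw [le_div_iff₀ hM'] at v1'
    push_cast at v1'
    apply abs_le_one_div hM'
    rw [abs_le]
    constructor <;> nlinarith
  obtain ⟨G, hmp, hG, hbad⟩ := reparam h s hs hsi hhs η (1/M) hη hC hd
  let g : MPContinuousMap := ⟨⟨fun u => h (G u), h.continuous.comp G.continuous⟩, hmp⟩
  have hgv : ∀ u, g.1 u = h (G u) := fun u => rfl
  refine ⟨g, ?_, ?_⟩
  · have hnode : ∀ (x : I) (j : ℕ), j ≤ 3 * M → |(j:ℝ) - 3 * M * x| ≤ 1 →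
        |cw M p j - f.1 x| ≤ 1/M + δ/4 := by
      intro x j hj hjx
      obtain ⟨z, hz1, hz2⟩ := cw_node hM hpM hx hj
      have e1 : |(j:ℝ)/(3*M) - x| ≤ 1 / M := by
        have : (j:ℝ)/(3*M) - x = (j - 3 * M * x) / (3 * M) := by field_simp
        rw [this, abs_div, abs_of_pos (show (0:ℝ) < 3 * M by positivity),
          div_le_div_iff₀ (by positivity) hM']
        nlinarith
      have e2 : dist z x < ε := by
        rw [Subtype.dist_eq, Real.dist_eq]
        rw [abs_le] at e1 hz2
        rw [abs_lt]
        constructor <;> linarith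
      have e3 := hf _ _ e2
      rw [Subtype.dist_eq, Real.dist_eq] at e3
      calc _ = |(cw M p j - f.1 z) + (f.1 z - f.1 x)| := by ring_nf
        _ ≤ _ := abs_add_le _ _
        _ ≤ _ := add_le_add hz1 e3.le
    have hclose : ∀ x : I, |(h x : ℝ) - f.1 x| ≤ 1/M + δ/4 := by
      intro x
      have hm := poly_mem_uIcc hK (cw M p) x
      rw [← hval] at hm
      have l1 := lab_le (M := 3*M) x
      have l2 := le_lab hK x
      have l3 := lab_lt hK x
      push_cast at l1 l2
      have n1 := abs_le.1 (hnode x (lab (3*M) x) l3.le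
        (by rw [abs_le]; constructor <;> linarith))
      have n2 := abs_le.1 (hnode x (lab (3*M) x + 1) l3
        (by push_cast; rw [abs_le]; constructor <;> linarith))
      rw [abs_le]
      rcases Set.mem_uIcc.1 hm with ⟨a1, a2⟩ | ⟨a1, a2⟩ <;> constructor <;> linarith
    have : dist g f ≤ 1/M + δ/4 + δ/4 := by
      change dist g.1 f.1 ≤ _
      rw [ContinuousMap.dist_le (by positivity)]
      intro u
      rw [hgv]
      have d1 := hclose (G u)
      have d2 := hf (G u) u (by
        refine (hG u).trans_lt ?_
        linarith)
      refine (dist_triangle _ (f.1 (G u)) _).trans ?_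
      have : dist (h (G u)) (f.1 (G u)) ≤ 1/M + δ/4 := by
        rw [Subtype.dist_eq, Real.dist_eq]; exact d1
      linarith
    linarith
  · let A : Set I := {x | M * (x:ℝ) - lab M x < 1/3}
    have hA : MeasurableSet A := by
      have h2 : Measurable (fun y : I => (lab M y : ℝ)) :=
        (measurable_of_countable (fun k : ℕ => (k : ℝ))).comp (measurable_lab M)
      exact measurableSet_lt ((measurable_subtype_coe.const_mul _).sub h2) measurable_const
    have hae : ∀ᵐ y, s y ∈ A := by
      have h1 : ∀ᵐ y : I, y ≠ 1 := by
        simp [ae_iff]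
      filter_upwards [h1] with y hy
      have hy1 : (y:ℝ) < 1 := lt_of_le_of_ne y.2.2 (fun h => hy (Subtype.ext h))
      change M * ((s y : I):ℝ) - lab M (s y) < 1/3
      rw [hsM, hslab]
      have : M * (y:ℝ) - lab M y < 1 := by
        unfold lab
        rcases le_total ⌊(M:ℝ) * y⌋₊ (M - 1) with hle | hle
        · rw [min_eq_left hle]
          have := Nat.lt_floor_add_one ((M:ℝ) * y)
          linarith
        · rw [min_eq_right hle, Nat.cast_sub hM]
          push_cast
          nlinarith
      linarith
    refine ⟨G ⁻¹' A, G.continuous.measurable hA, (hbad A hA hae).trans (ENNReal.ofReal_le_ofReal hη2),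
      fun u => ⟨lab M (G u), lab_lt hM _⟩, ?_, p, ?_⟩
    · intro u v huv
      exact lab_mono M (G.monotone huv)
    · intro u hu v hv huv
      have hlt : ((G u : I):ℝ) < G v := G.strictMono huv
      have hu : M * ((G u : I):ℝ) - lab M (G u) < 1/3 := hu
      have hv : M * ((G v : I):ℝ) - lab M (G v) < 1/3 := hv
      have lu := lab_le (M := M) (G u)
      have lv := lab_le (M := M) (G v)
      have eu := hrise (G u) _ (lab_lt hM _) lu hu.le
      have ev := hrise (G v) _ (lab_lt hM _) lv hv.le
      rw [hgv, hgv, ← Subtype.coe_lt_coe, eu, ev, div_lt_div_iff_of_pos_right hM']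
      change _ ↔ p (lab M (G u)) ≤ p (lab M (G v))
      rcases lt_trichotomy (p (lab M (G u))) (p (lab M (G v))) with hc | hc | hc
      · have hc' : (p (lab M (G u)) : ℝ) + 1 ≤ p (lab M (G v)) := by exact_mod_cast hc
        exact iff_of_true (by linarith) hc.le
      · have he : lab M (G u) = lab M (G v) := by
          rw [← (hp _ (lab_lt hM (G u))).2, ← (hp _ (lab_lt hM (G v))).2, hc]
        rw [he]
        exact iff_of_true (by nlinarith) le_rfl
      · have hc' : (p (lab M (G v)) : ℝ) + 1 ≤ p (lab M (G u)) := by exact_mod_cast hc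
        exact iff_of_false (by linarith) (by omega)

end GSE
end

section
open scoped unitInterval ENNReal

namespace GSE

lemma card_monotone_le (n M : ℕ) :
    (Finset.univ.filter (fun c : Fin n → Fin M => Monotone c)).card ≤ (n + 1) ^ M := by
  classical
  calc _ ≤ (Finset.univ : Finset (Fin M → Fin (n+1))).card := by
        apply Finset.card_le_card_of_injOn
          (fun c b => ⟨(Finset.univ.filter fun i => c i ≤ b).card,
            Nat.lt_succ_of_le ((Finset.card_le_univ _).trans_eq (by simp))⟩)
        · intro c hc; simp
        · intro c hc d hd h
          have hc : Monotone c := by simpa using hc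
          have hd : Monotone d := by simpa using hd
          have key : ∀ (c d : Fin n → Fin M), Monotone c → Monotone d →
              (∀ b, (Finset.univ.filter fun i => c i ≤ b).card =
                (Finset.univ.filter fun i => d i ≤ b).card) → ∀ i, d i ≤ c i := by
            intro c d hc hd h i
            by_contra hlt
            have hlt := not_le.1 hlt
            have h1 : Finset.univ.filter (fun j => d j ≤ c i) ⊆ Finset.Iio i := by
              intro j hj
              have hj : d j ≤ c i := by simpa using hj
              rw [Finset.mem_Iio]
              by_contra hji
              exact absurd (hd (not_lt.1 hji)) (not_le.2 (hj.trans_lt hlt))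
            have h2 : Finset.Iic i ⊆ Finset.univ.filter (fun j => c j ≤ c i) := by
              intro j hj
              have hj : j ≤ i := by simpa using hj
              simpa using hc hj
            have h3 := Finset.card_le_card h1
            have h4 := Finset.card_le_card h2
            rw [← h (c i)] at h3
            rw [Fin.card_Iio] at h3
            rw [Fin.card_Iic] at h4
            omega
          have hb : ∀ b, (Finset.univ.filter fun i => c i ≤ b).card =
                (Finset.univ.filter fun i => d i ≤ b).card := by
            intro b
            have := congrFun h b
            exact Fin.mk.inj_iff.1 this
          funext i
          exact le_antisymm (key d c hd hc (fun b => (hb b).symm) i) (key c d hc hd hb i)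
    _ = _ := by simp

lemma perm_eq_of_lt_iff {n : ℕ} {π τ : Equiv.Perm (Fin n)}
    (h : ∀ i j, i < j → (π i < π j ↔ τ i < τ j)) : π = τ := by
  have hall : ∀ i j, π i < π j → τ i < τ j := by
    intro i j hij
    rcases lt_trichotomy i j with h1 | h1 | h1
    · exact (h i j h1).1 hij
    · rw [h1] at hij; exact absurd hij (lt_irrefl _)
    · have h2 : ¬ τ j < τ i := fun h3 => absurd ((h j i h1).2 h3) (not_lt.2 hij.le)
      exact lt_of_le_of_ne (not_lt.1 h2) (fun he => h1.ne' (τ.injective he))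
  have h1 : StrictMono (π ∘ π.symm) := by intro i j hij; simpa using hij
  have h2 : StrictMono (τ ∘ π.symm) := by
    intro i j hij
    exact hall _ _ (by simpa using hij)
  have h3 : StrictMono (τ ∘ τ.symm) := by intro i j hij; simpa using hij
  have h4 := perm_strictMono_unique h2 h3
  have := congrArg Equiv.symm h4
  simpa using this

lemma entropy_low {n M : ℕ} {η : ℝ} (hη : 0 ≤ η) (g : MPContinuousMap) {E : Set I}
    (hEm : MeasurableSet E)
    (hE : volume Eᶜ ≤ ENNReal.ofReal η) {l : I → Fin M} (hl : Monotone l) {p : ℕ → ℕ}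
    (hp : ∀ u ∈ E, ∀ v ∈ E, u < v → (g.1 u < g.1 v ↔ p (l u) ≤ p (l v))) :
    samplingEntropy (graphPermutonCM g) n ≤
      M * Real.log (n + 1) + (n.factorial * (n * η)) * Real.log n.factorial + 2 := by
  classical
  set Gd : Finset (Equiv.Perm (Fin n)) :=
    Finset.univ.filter fun π => ∃ x ∈ PS g.1 π, ∀ i, x i ∈ E with hGd
  have hcard : Gd.card ≤ (n + 1) ^ M := by
    refine le_trans ?_ (card_monotone_le n M)
    have hch : ∀ π : Equiv.Perm (Fin n), ∃ x : Fin n → I, π ∈ Gd → x ∈ PS g.1 π ∧ ∀ i, x i ∈ E := by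
      intro π
      by_cases hπ : π ∈ Gd
      · obtain ⟨x, h1, h2⟩ := (Finset.mem_filter.1 hπ).2
        exact ⟨x, fun _ => ⟨h1, h2⟩⟩
      · exact ⟨fun _ => 0, fun h => absurd h hπ⟩
    choose X hX using hch
    apply Finset.card_le_card_of_injOn (fun π i => l (X π i))
    · intro π hπ
      have h1 := hX π hπ
      simp only [Finset.coe_filter, Finset.mem_univ, true_and, Set.mem_setOf_eq]
      intro i j hij
      rcases hij.eq_or_lt with rfl | hij
      · exact le_rfl
      · exact hl (((mem_PS_iff).1 h1.1 i j hij).1.le)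
    · intro π hπ τ hτ he
      apply perm_eq_of_lt_iff
      intro i j hij
      have a1 := (mem_PS_iff).1 (hX π hπ).1 i j hij
      have a2 := (mem_PS_iff).1 (hX τ hτ).1 i j hij
      have b1 := hp _ ((hX π hπ).2 i) _ ((hX π hπ).2 j) a1.1
      have b2 := hp _ ((hX τ hτ).2 i) _ ((hX τ hτ).2 j) a2.1
      have e1 : l (X π i) = l (X τ i) := congrFun he i
      have e2 : l (X π j) = l (X τ j) := congrFun he j
      rw [← a1.2, ← a2.2, b1, b2, e1, e2]
  have hβ : ∑ π ∈ Gdᶜ, patternProb (graphPermutonCM g) π ≤ n.factorial * (n * η) := by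
    rw [sum_patternProb_finset]
    refine mul_le_mul_of_nonneg_left ?_ (by positivity)
    apply ENNReal.toReal_le_of_le_ofReal (by positivity)
    have hsub : (⋃ π ∈ Gdᶜ, PS g.1 π) ⊆ ⋃ i : Fin n, (Function.eval i) ⁻¹' Eᶜ := by
      intro x hx
      simp only [Set.mem_iUnion] at hx
      obtain ⟨π, hπ, hx⟩ := hx
      by_contra hcon
      simp only [Set.mem_iUnion, Set.mem_preimage, Set.mem_compl_iff, not_exists, not_not] at hcon
      rw [Finset.mem_compl] at hπ
      exact hπ (Finset.mem_filter.2 ⟨Finset.mem_univ _, x, hx, hcon⟩)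
    refine (measure_mono hsub).trans ((measure_iUnion_fintype_le _ _).trans ?_)
    calc _ ≤ ∑ i : Fin n, ENNReal.ofReal η := by
          refine Finset.sum_le_sum fun i _ => ?_
          rw [(measurePreserving_eval (fun _ : Fin n => (volume : Measure I)) i).measure_preimage
            hEm.compl.nullMeasurableSet]
          exact hE
      _ = _ := by
          rw [Finset.sum_const, Finset.card_univ, Fintype.card_fin, nsmul_eq_mul,
            ENNReal.ofReal_mul (by positivity), ENNReal.ofReal_natCast]
  have hQ : (1:ℝ) ≤ (n + 1 : ℝ) ^ M := one_le_pow₀ (by linarith [(Nat.cast_nonneg n : (0:ℝ) ≤ n)])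
  have := low_bound g Gd hQ (by exact_mod_cast hcard) hβ
  rwa [Real.log_pow] at this

lemma dense_low (f : MPContinuousMap) {δ ε : ℝ} (hδ : 0 < δ) (hε : 0 < ε) (N : ℕ) :
    ∃ g : MPContinuousMap, dist g f < δ ∧ ∃ n ≥ N,
      samplingEntropy (graphPermutonCM g) n / n < ε := by
  obtain ⟨M, hM, H⟩ := exists_low f hδ
  have hlim : Tendsto (fun n : ℕ => (M * Real.log (n + 1) + 3) / (n:ℝ)) atTop (nhds 0) := by
    have h1 : Tendsto (fun x : ℝ => Real.log x / x) atTop (nhds 0) := by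
      simpa using Real.isLittleO_log_id_atTop.tendsto_div_nhds_zero
    have h2 : Tendsto (fun n : ℕ => Real.log (n+1) / ((n:ℝ)+1)) atTop (nhds 0) :=
      h1.comp (tendsto_atTop_add_const_right _ _ tendsto_natCast_atTop_atTop)
    have h3 : Tendsto (fun n : ℕ => 1 / (n:ℝ)) atTop (nhds 0) := tendsto_one_div_atTop_nhds_zero_nat
    have h4 : Tendsto (fun n : ℕ => M * (Real.log (n+1) / ((n:ℝ)+1)) * (1 + 1 / (n:ℝ)) + 3 * (1 / (n:ℝ)))
        atTop (nhds (M * 0 * (1 + 0) + 3 * 0)) :=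
      ((h2.const_mul _).mul (h3.const_add 1)).add (h3.const_mul 3)
    simp only [mul_zero, zero_mul, add_zero] at h4
    refine h4.congr' ?_
    filter_upwards [eventually_gt_atTop 0] with n hn
    have hn' : (0:ℝ) < n := by positivity
    field_simp
  obtain ⟨n, h1, h2, h3⟩ := ((hlim.eventually_lt_const hε).and
    ((eventually_ge_atTop N).and (eventually_gt_atTop 0))).exists
  have hn' : (0:ℝ) < n := by positivity
  have hf1 : (1:ℝ) ≤ n.factorial := by exact_mod_cast n.factorial_pos
  have hlog := Real.log_nonneg hf1
  set D : ℝ := n.factorial * n * (Real.log n.factorial + 1) with hD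
  have hDpos : 0 < D := by positivity
  obtain ⟨g, hg, E, hEm, hE, l, hl, p, hp⟩ := H (1 / D) (by positivity)
  refine ⟨g, hg, n, h2, ?_⟩
  have h4 := entropy_low (n := n) (by positivity) g hEm hE hl hp
  have h5 : (n.factorial * (n * (1 / D))) * Real.log n.factorial ≤ 1 := by
    have : (n.factorial * (n * (1 / D))) * Real.log n.factorial =
        (n.factorial * n * Real.log n.factorial) / D := by field_simp
    rw [this, div_le_one hDpos, hD]
    have : (0:ℝ) < n.factorial * n := by positivity
    nlinarith
  refine lt_of_le_of_lt ?_ h1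
  gcongr
  linarith

lemma high_le (f : MPContinuousMap) (n : ℕ) :
    samplingEntropy (graphPermutonCM f) n / (n * Real.log n) ≤ 1 := by
  apply div_le_one_of_le₀
  · refine (samplingEntropy_le f).trans ?_
    rcases Nat.eq_zero_or_pos n with rfl | hn
    · simp
    · rw [← Real.log_pow]
      apply Real.log_le_log (by positivity)
      exact_mod_cast Nat.factorial_le_pow n
  · exact mul_nonneg (Nat.cast_nonneg _) (Real.log_natCast_nonneg _)

theorem main :
    {f : MPContinuousMap |
        Filter.liminf (fun n : ℕ => samplingEntropy (graphPermutonCM f) n / n) atTop = 0 ∧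
        Filter.limsup
          (fun n : ℕ => samplingEntropy (graphPermutonCM f) n / (n * Real.log n)) atTop = 1}
      ∈ residual MPContinuousMap := by
  have hlow : ∀ k N : ℕ, {f : MPContinuousMap | ∃ n ≥ N,
      samplingEntropy (graphPermutonCM f) n / n < 1 / ((k:ℝ) + 1)} ∈ residual MPContinuousMap := by
    intro k N
    apply residual_of_dense_open
    · have : {f : MPContinuousMap | ∃ n ≥ N,
          samplingEntropy (graphPermutonCM f) n / n < 1 / ((k:ℝ) + 1)} = ⋃ n : ℕ, ⋃ _ : n ≥ N,
          {f | samplingEntropy (graphPermutonCM f) n / n < 1 / ((k:ℝ) + 1)} := by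
        ext f; simp
      rw [this]
      exact isOpen_iUnion fun n => isOpen_iUnion fun _ =>
        isOpen_lt ((continuous_samplingEntropy n).div_const _) continuous_const
    · rw [Metric.dense_iff]
      intro f r hr
      obtain ⟨g, hg, h⟩ := dense_low f hr (show (0:ℝ) < 1 / ((k:ℝ)+1) by positivity) N
      exact ⟨g, hg, h⟩
  have hhigh : ∀ k N : ℕ, {f : MPContinuousMap | ∃ n ≥ N,
      1 - 1 / ((k:ℝ) + 1) < samplingEntropy (graphPermutonCM f) n / (n * Real.log n)} ∈
      residual MPContinuousMap := by
    intro k N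
    apply residual_of_dense_open
    · have : {f : MPContinuousMap | ∃ n ≥ N,
          1 - 1 / ((k:ℝ) + 1) < samplingEntropy (graphPermutonCM f) n / (n * Real.log n)} =
          ⋃ n : ℕ, ⋃ _ : n ≥ N,
          {f | 1 - 1 / ((k:ℝ) + 1) < samplingEntropy (graphPermutonCM f) n / (n * Real.log n)} := by
        ext f; simp
      rw [this]
      exact isOpen_iUnion fun n => isOpen_iUnion fun _ =>
        isOpen_lt continuous_const ((continuous_samplingEntropy n).div_const _)
    · rw [Metric.dense_iff]
      intro f r hr
      obtain ⟨g, hg, h⟩ := dense_high f hr (show (0:ℝ) < 1 / ((k:ℝ)+1) by positivity) N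
      exact ⟨g, hg, h⟩
  have h1 := countable_iInter_mem.2 fun k => countable_iInter_mem.2 fun N => hlow k N
  have h2 := countable_iInter_mem.2 fun k => countable_iInter_mem.2 fun N => hhigh k N
  filter_upwards [h1, h2] with f hf1 hf2
  simp only [Set.mem_iInter, Set.mem_setOf_eq] at hf1 hf2
  have nn1 : ∀ n : ℕ, 0 ≤ samplingEntropy (graphPermutonCM f) n / n := fun n =>
    div_nonneg (samplingEntropy_nonneg f) (Nat.cast_nonneg _)
  have nn2 : ∀ n : ℕ, 0 ≤ samplingEntropy (graphPermutonCM f) n / (n * Real.log n) := fun n =>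
    div_nonneg (samplingEntropy_nonneg f)
      (mul_nonneg (Nat.cast_nonneg _) (Real.log_natCast_nonneg _))
  have bd1 : IsBoundedUnder (· ≥ ·) atTop
      (fun n : ℕ => samplingEntropy (graphPermutonCM f) n / n) :=
    isBoundedUnder_of ⟨0, nn1⟩
  have bd2 : IsBoundedUnder (· ≤ ·) atTop
      (fun n : ℕ => samplingEntropy (graphPermutonCM f) n / (n * Real.log n)) :=
    isBoundedUnder_of ⟨1, fun n => high_le f n⟩
  constructor
  · have fr : ∀ k : ℕ, ∃ᶠ n : ℕ in atTop,
        samplingEntropy (graphPermutonCM f) n / n ≤ 1 / ((k:ℝ) + 1) := by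
      intro k
      rw [frequently_atTop]
      intro N
      obtain ⟨n, hn, h⟩ := hf1 k N
      exact ⟨n, hn, h.le⟩
    apply le_antisymm
    · refine ge_of_tendsto' (tendsto_one_div_add_atTop_nhds_zero_nat (𝕜 := ℝ)) fun k => ?_
      exact liminf_le_of_frequently_le (fr k) bd1
    · exact le_liminf_of_le (IsCoboundedUnder.of_frequently_le (fr 0)) (Eventually.of_forall nn1)
  · have fr : ∀ k : ℕ, ∃ᶠ n : ℕ in atTop,
        1 - 1 / ((k:ℝ) + 1) ≤ samplingEntropy (graphPermutonCM f) n / (n * Real.log n) := by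
      intro k
      rw [frequently_atTop]
      intro N
      obtain ⟨n, hn, h⟩ := hf2 k N
      exact ⟨n, hn, h.le⟩
    apply le_antisymm
    · exact limsup_le_of_le (IsCoboundedUnder.of_frequently_ge (fr 0))
        (Eventually.of_forall fun n => high_le f n)
    · have ht : Tendsto (fun k : ℕ => 1 - 1 / ((k:ℝ) + 1)) atTop (nhds (1 - 0)) :=
        (tendsto_one_div_add_atTop_nhds_zero_nat (𝕜 := ℝ)).const_sub 1
      rw [sub_zero] at ht
      refine le_of_tendsto' ht fun k => ?_
      exact le_limsup_of_frequently_le (fr k) bd2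

end GSE
end

/-- For the generic f ∈ C(λ), H_n(μ_f)/n has liminf 0 and H_n(μ_f)/(n log n) has
limsup 1. -/
theorem generic_samplingEntropy_oscillation :
    {f : MPContinuousMap |
        Filter.liminf (fun n : ℕ => samplingEntropy (graphPermutonCM f) n / n) atTop = 0 ∧
        Filter.limsup
          (fun n : ℕ => samplingEntropy (graphPermutonCM f) n / (n * Real.log n)) atTop = 1}
      ∈ residual MPContinuousMap := by
  exact GSE.main
end

section
/- Let A ⊆ ℝ² be a Borel set with 0 < λ(A) < ∞, where λ is two-dimensional Lebesgue measure, and let λ^A = λ(A)^{−1}·λ|_A be the normalized uniform distribution on A (a pre-permuton, since its marginals are absolutely continuous and hence atomless). Then lim_{n→∞} H_n(λ^A)/(n·log n) = 1. -/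
open MeasureTheory Filter

lemma aux_pi_perm {ι X : Type*} [Fintype ι] [MeasurableSpace X] (μ : Measure X) [SigmaFinite μ]
    (σ : Equiv.Perm ι) :
    MeasurePreserving (fun p : ι → X => p ∘ σ) (Measure.pi fun _ => μ) (Measure.pi fun _ => μ) := by
  refine ⟨by unfold Function.comp; fun_prop, ?_⟩
  symm
  refine Measure.pi_eq fun s hs => ?_
  rw [Measure.map_apply (by unfold Function.comp; fun_prop) (MeasurableSet.univ_pi hs)]
  have : (fun p : ι → X => p ∘ σ) ⁻¹' (Set.univ.pi s) = Set.univ.pi (fun i => s (σ.symm i)) := by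
    ext p
    simp only [Set.mem_preimage, Set.mem_pi, Set.mem_univ, true_implies, Function.comp]
    constructor
    · intro h i
      simpa using h (σ.symm i)
    · intro h i
      simpa using h (σ i)
  rw [this, Measure.pi_pi]
  exact Equiv.prod_comp σ.symm (fun i => μ (s i))

lemma aux_sym_le {ι X κ : Type*} [Fintype ι] [DecidableEq ι] [Fintype κ] [MeasurableSpace X]
    (μ : Measure X) [SigmaFinite μ]
    (S : κ → Set (ι → X)) (hS : ∀ a, MeasurableSet (S a)) (D : Set (ι → X)) (hD : MeasurableSet D)
    (hinv : ∀ (σ : Equiv.Perm ι) (p : ι → X), p ∘ σ ∈ D → p ∈ D)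
    (huniq : ∀ (σ τ : Equiv.Perm ι) (a b : κ) (p : ι → X), p ∘ σ ∈ S a → p ∘ τ ∈ S b →
      σ = τ ∧ a = b) :
    ((Fintype.card ι).factorial : ENNReal) * ∑ a, (Measure.pi fun _ : ι => μ) (S a ∩ D) ≤
      (Measure.pi fun _ : ι => μ) D := by
  have h1 : ∀ (σ : Equiv.Perm ι) (a : κ), (Measure.pi fun _ : ι => μ) (S a ∩ D) =
      (Measure.pi fun _ : ι => μ) ((fun p : ι → X => p ∘ σ) ⁻¹' (S a ∩ D)) := fun σ a =>
    ((aux_pi_perm μ σ).measure_preimage ((hS a).inter hD).nullMeasurableSet).symm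
  have h2 : ((Fintype.card ι).factorial : ENNReal) *
      ∑ a, (Measure.pi fun _ : ι => μ) (S a ∩ D) =
      ∑ x : Equiv.Perm ι × κ,
        (Measure.pi fun _ : ι => μ) ((fun p : ι → X => p ∘ x.1) ⁻¹' (S x.2 ∩ D)) := by
    rw [Fintype.sum_prod_type]
    simp_rw [← h1]
    simp [Fintype.card_perm]
  rw [h2, ← tsum_fintype (L := .unconditional _), ← measure_iUnion]
  · apply measure_mono
    refine Set.iUnion_subset fun x p hp => hinv x.1 p hp.2
  · rintro ⟨σ, a⟩ ⟨τ, b⟩ hne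
    rw [Function.onFun, Set.disjoint_left]
    intro p hp hq
    obtain ⟨rfl, rfl⟩ := huniq σ τ a b p hp.1 hq.1
    exact hne rfl
  · intro x
    exact (aux_pi_perm μ x.1).measurable ((hS x.2).inter hD)

lemma aux_key_uniq {ι : Type*} [Fintype ι] (e : ι → ℕ) (he : Function.Injective e) (x : ι → ℝ)
    (σ τ : Equiv.Perm ι) (h1 : ∀ i j, e i < e j → x (σ i) < x (σ j))
    (h2 : ∀ i j, e i < e j → x (τ i) < x (τ j)) : σ = τ := by
  let _ : LinearOrder ι := LinearOrder.lift' e he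
  have s1 : StrictMono (x ∘ σ) := fun i j hij => h1 i j hij
  have s2 : StrictMono (x ∘ τ) := fun i j hij => h2 i j hij
  have h3 : x ∘ σ = x ∘ τ := by
    rw [← s1.range_inj s2]
    simp
  have hx : Function.Injective x := by
    have := s1.injective
    rwa [← σ.injective_comp]
  ext i
  exact hx (congrFun h3 i)

lemma aux_perm_uniq {n : ℕ} (a b : Equiv.Perm (Fin n))
    (h : ∀ i j, i < j → (a i < a j ↔ b i < b j)) : a = b := by
  have h' : ∀ i j, a i < a j → b i < b j := by
    intro i j hij
    rcases lt_trichotomy i j with h1 | h1 | h1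
    · exact (h i j h1).1 hij
    · subst h1; exact absurd hij (lt_irrefl _)
    · by_contra hc
      have : b j < b i := lt_of_le_of_ne (not_lt.1 hc) (fun e => h1.ne (b.injective e))
      exact absurd ((h j i h1).2 this) (not_lt.2 hij.le)
  have s : StrictMono (b ∘ a.symm) := by
    intro i j hij
    apply h'
    simpa using hij
  have := (s.range_inj strictMono_id).1 (by simp)
  ext i
  have := congrFun this (a i)
  simp at this
  rw [this]

/-- volume of sorted vectors in a box -/
lemma aux_sorted_vol {ι : Type*} [Fintype ι] (e : ι → ℕ) (he : Function.Injective e) (M : ℝ) :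
    ((Fintype.card ι).factorial : ENNReal) * (Measure.pi fun _ : ι => (volume : Measure ℝ))
      ({x | ∀ i j, e i < e j → x i < x j} ∩ Set.univ.pi fun _ => Set.Icc (-M) M) ≤
      ENNReal.ofReal (2 * M) ^ Fintype.card ι := by
  classical
  have := aux_sym_le (κ := Unit) (volume : Measure ℝ)
    (fun _ => {x : ι → ℝ | ∀ i j, e i < e j → x i < x j}) (by
      intro _
      simp only [Set.ofPred_forall]
      refine MeasurableSet.iInter fun i => MeasurableSet.iInter fun j => MeasurableSet.iInter fun _ =>
        measurableSet_lt (measurable_pi_apply i) (measurable_pi_apply j))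
    (Set.univ.pi fun _ => Set.Icc (-M) M) (MeasurableSet.univ_pi fun _ => measurableSet_Icc)
    (by
      intro σ p hp i _
      simpa using hp (σ.symm i) trivial)
    (by
      intro σ τ a b p h1 h2
      exact ⟨aux_key_uniq e he p σ τ h1 h2, rfl⟩)
  simp only [Finset.univ_unique, Finset.sum_singleton] at this
  refine this.trans (le_of_eq ?_)
  rw [Measure.pi_pi]
  simp only [Real.volume_Icc, Finset.prod_const, Finset.card_univ]
  congr 2
  ring

lemma aux_pi_smul {ι X : Type*} [Fintype ι] [MeasurableSpace X] (ν : Measure X) [SigmaFinite ν]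
    (c : ENNReal) [SigmaFinite (c • ν)] :
    (Measure.pi fun _ : ι => c • ν) = c ^ Fintype.card ι • Measure.pi fun _ : ι => ν := by
  refine Measure.pi_eq fun s hs => ?_
  simp [Measure.pi_pi, Finset.prod_mul_distrib]

lemma aux_pi_le {ι X : Type*} [Fintype ι] [MeasurableSpace X] (ν : Measure X) [SigmaFinite ν]
    (c : ENNReal) (A : Set X) [SigmaFinite (c • ν.restrict A)] (F : Set (ι → X)) :
    (Measure.pi fun _ : ι => c • ν.restrict A) F ≤
      c ^ Fintype.card ι * (Measure.pi fun _ : ι => ν) F := by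
  rw [aux_pi_smul, ← Measure.restrict_pi_pi, Measure.smul_apply, smul_eq_mul]
  gcongr
  exact Measure.restrict_le_self

lemma aux_FT {ι : Type*} [Fintype ι] (e f : ι → ℕ) (he : Function.Injective e)
    (hf : Function.Injective f) (M : ℝ) (c : ENNReal) (A : Set (ℝ × ℝ))
    [SigmaFinite (c • (volume : Measure (ℝ × ℝ)).restrict A)] :
    ((Fintype.card ι).factorial : ENNReal) ^ 2 *
      (Measure.pi fun _ : ι => c • (volume : Measure (ℝ × ℝ)).restrict A)
      {z | (∀ i j, e i < e j → (z i).1 < (z j).1) ∧ (∀ i j, f i < f j → (z i).2 < (z j).2) ∧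
        ∀ i, z i ∈ Set.Icc (-M) M ×ˢ Set.Icc (-M) M} ≤
      (c * ENNReal.ofReal (2 * M) ^ 2) ^ Fintype.card ι := by
  set SX : (ι → ℕ) → Set (ι → ℝ) := fun e =>
    {x | ∀ i j, e i < e j → x i < x j} ∩ Set.univ.pi fun _ => Set.Icc (-M) M with hSX
  have hm : ∀ e, MeasurableSet (SX e) := by
    intro e
    refine MeasurableSet.inter ?_ (MeasurableSet.univ_pi fun _ => measurableSet_Icc)
    simp only [Set.ofPred_forall]
    refine MeasurableSet.iInter fun i => MeasurableSet.iInter fun j => MeasurableSet.iInter fun _ =>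
        measurableSet_lt (measurable_pi_apply i) (measurable_pi_apply j)
  have key : (Measure.pi fun _ : ι => (volume : Measure (ℝ × ℝ)))
      {z | (∀ i j, e i < e j → (z i).1 < (z j).1) ∧ (∀ i j, f i < f j → (z i).2 < (z j).2) ∧
        ∀ i, z i ∈ Set.Icc (-M) M ×ˢ Set.Icc (-M) M} =
      (Measure.pi fun _ : ι => (volume : Measure ℝ)) (SX e) *
      (Measure.pi fun _ : ι => (volume : Measure ℝ)) (SX f) := by
    rw [← Measure.prod_prod]
    rw [← (measurePreserving_arrowProdEquivProdArrow ℝ ℝ ι (fun _ => volume)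
      (fun _ => volume)).measure_preimage ((hm e).prod (hm f)).nullMeasurableSet]
    congr 1
    ext z
    simp only [hSX, MeasurableEquiv.arrowProdEquivProdArrow, Equiv.arrowProdEquivProdArrow,
      Set.mem_preimage, Set.mem_prod, Set.mem_inter_iff, Set.mem_ofPred_eq, Set.mem_pi,
      Set.mem_univ, true_implies, MeasurableEquiv.coe_mk, Equiv.coe_fn_mk]
    constructor
    · rintro ⟨h1, h2, h3⟩
      exact ⟨⟨h1, fun i => (h3 i).1⟩, ⟨h2, fun i => (h3 i).2⟩⟩
    · rintro ⟨⟨h1, h3⟩, ⟨h2, h4⟩⟩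
      exact ⟨h1, h2, fun i => ⟨h3 i, h4 i⟩⟩
  have h1 := aux_sorted_vol e he M
  have h2 := aux_sorted_vol f hf M
  calc _ ≤ ((Fintype.card ι).factorial : ENNReal) ^ 2 * (c ^ Fintype.card ι * _) := by
        gcongr
        exact aux_pi_le _ _ _ _
    _ = c ^ Fintype.card ι *
        ((((Fintype.card ι).factorial : ENNReal) *
          (Measure.pi fun _ : ι => (volume : Measure ℝ)) (SX e)) *
        (((Fintype.card ι).factorial : ENNReal) *
          (Measure.pi fun _ : ι => (volume : Measure ℝ)) (SX f))) := by rw [key]; ring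
    _ ≤ c ^ Fintype.card ι * (ENNReal.ofReal (2 * M) ^ Fintype.card ι *
         ENNReal.ofReal (2 * M) ^ Fintype.card ι) := by gcongr
    _ = _ := by rw [mul_pow, ← pow_mul, mul_comm 2, pow_mul]; ring

lemma aux_null {n : ℕ} (c : ENNReal) (A : Set (ℝ × ℝ))
    [SigmaFinite (c • (volume : Measure (ℝ × ℝ)).restrict A)] (L : (ℝ × ℝ) →ₗ[ℝ] ℝ)
    (hL : L ≠ 0) (i j : Fin n) (hij : i ≠ j) :
    (Measure.pi fun _ : Fin n => c • (volume : Measure (ℝ × ℝ)).restrict A)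
      {p | L (p i) = L (p j)} = 0 := by
  refine le_antisymm ((aux_pi_le _ _ _ _).trans ?_) (zero_le)
  have : (Measure.pi fun _ : Fin n => (volume : Measure (ℝ × ℝ))) {p | L (p i) = L (p j)} = 0 := by
    have h := Measure.addHaar_submodule (Measure.pi fun _ : Fin n => (volume : Measure (ℝ × ℝ)))
      (LinearMap.ker (L ∘ₗ LinearMap.proj i - L ∘ₗ LinearMap.proj j :
        (Fin n → ℝ × ℝ) →ₗ[ℝ] ℝ)) (by
        intro htop
        rw [LinearMap.ker_eq_top] at htop
        apply hL
        ext v <;> 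
        · have := congrArg (fun g => g (Pi.single i (by first | exact (1, 0) | skip))) htop
          have h2 := congrArg (fun g => g (Pi.single i ((0, 1) : ℝ × ℝ))) htop
          simp [hij, hij.symm] at this h2
          simp [this, h2])
    convert h using 2
    ext p
    simp [sub_eq_zero]
  rw [this, mul_zero]

lemma aux_markov {n : ℕ} (μ : Measure (ℝ × ℝ)) [IsProbabilityMeasure μ] (B : Set (ℝ × ℝ))
    (hB : MeasurableSet B) (m : ℝ) (hm : 0 < m) [DecidablePred (· ∈ B)] :
    ENNReal.ofReal m * (Measure.pi fun _ : Fin n => μ)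
      {p | m ≤ ((Finset.univ.filter fun i => p i ∈ B).card : ℝ)} ≤ n * μ B := by
  have h := mul_meas_ge_le_lintegral (μ := Measure.pi fun _ : Fin n => μ)
    (f := fun p => ∑ i, B.indicator (fun _ => (1 : ENNReal)) (p i))
    (Finset.measurable_sum _ fun i _ =>
      (measurable_const.indicator hB).comp (measurable_pi_apply i)) (ENNReal.ofReal m)
  have hf : ∀ p : Fin n → ℝ × ℝ, ∑ i, B.indicator (fun _ => (1 : ENNReal)) (p i) =
      ((Finset.univ.filter fun i => p i ∈ B).card : ENNReal) := by
    intro p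
    simp [Set.indicator_apply]
  have hint : ∫⁻ p, ∑ i, B.indicator (fun _ => (1 : ENNReal)) (p i)
      ∂(Measure.pi fun _ : Fin n => μ) = n * μ B := by
    rw [lintegral_finsetSum]
    · have : ∀ i : Fin n, ∫⁻ p, B.indicator (fun _ => (1 : ENNReal)) (p i)
          ∂(Measure.pi fun _ : Fin n => μ) = μ B := by
        intro i
        rw [(measurePreserving_eval (fun _ : Fin n => μ) i).lintegral_comp
          (f := B.indicator (fun _ => (1 : ENNReal))) (measurable_const.indicator hB)]
        simp [lintegral_indicator hB]
      simp [this]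
    · exact fun i _ => (measurable_const.indicator hB).comp (measurable_pi_apply i)
  rw [hint] at h
  refine le_trans ?_ h
  gcongr
  intro hp
  rw [hf]
  rw [← ENNReal.ofReal_natCast]
  exact ENNReal.ofReal_le_ofReal hp

/-- the pattern event -/
def auxE {n : ℕ} (π : Equiv.Perm (Fin n)) : Set (Fin n → ℝ × ℝ) :=
  {p : Fin n → ℝ × ℝ | ∀ i j : Fin n, i < j →
        (p i).1 < (p j).1 ∧ ((p i).2 < (p j).2 ↔ π i < π j)}

lemma auxE_meas {n : ℕ} (π : Equiv.Perm (Fin n)) : MeasurableSet (auxE π) := by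
  unfold auxE
  simp only [Set.ofPred_forall]
  refine MeasurableSet.iInter fun i => MeasurableSet.iInter fun j => MeasurableSet.iInter fun _ => ?_
  have h0 := measurableSet_lt (measurable_pi_apply (X := fun _ : Fin n => ℝ × ℝ) i).fst
    (measurable_pi_apply (X := fun _ : Fin n => ℝ × ℝ) j).fst
  refine MeasurableSet.inter h0 ?_
  have h := measurableSet_lt (measurable_pi_apply (X := fun _ : Fin n => ℝ × ℝ) i).snd
    (measurable_pi_apply (X := fun _ : Fin n => ℝ × ℝ) j).snd
  by_cases hp : π i < π j
  · have he : {x : Fin n → ℝ × ℝ | (x i).2 < (x j).2 ↔ π i < π j} =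
        {x | (x i).2 < (x j).2} := by ext x; simp [hp]
    exact (congrArg MeasurableSet he).mpr h
  · have he : {x : Fin n → ℝ × ℝ | (x i).2 < (x j).2 ↔ π i < π j} =
        {x | (x i).2 < (x j).2}ᶜ := by ext x; simp [hp]
    exact (congrArg MeasurableSet he).mpr h.compl

lemma aux_sum_le {n : ℕ} (μ : Measure (ℝ × ℝ)) [SigmaFinite μ]
    (D : Set (Fin n → ℝ × ℝ)) (hD : MeasurableSet D)
    (hinv : ∀ (σ : Equiv.Perm (Fin n)) (p : Fin n → ℝ × ℝ), p ∘ σ ∈ D → p ∈ D) :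
    (n.factorial : ENNReal) * ∑ π, (Measure.pi fun _ : Fin n => μ) (auxE π ∩ D) ≤
      (Measure.pi fun _ : Fin n => μ) D := by
  have := aux_sym_le μ (fun π : Equiv.Perm (Fin n) => auxE π) auxE_meas D hD hinv (by
    intro σ τ a b p h1 h2
    have hst : σ = τ := aux_key_uniq (fun i : Fin n => (i : ℕ)) Fin.val_injective
      (fun i => (p i).1) σ τ (fun i j hij => (h1 i j hij).1) (fun i j hij => (h2 i j hij).1)
    subst hst
    refine ⟨rfl, aux_perm_uniq a b fun i j hij => ?_⟩
    rw [← (h1 i j hij).2, ← (h2 i j hij).2])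
  simpa using this

lemma aux_exists_sort {n : ℕ} (x : Fin n → ℝ) (hx : Function.Injective x) :
    ∃ σ : Equiv.Perm (Fin n), StrictMono (x ∘ σ) :=
  ⟨Tuple.sort x, (Tuple.monotone_sort x).strictMono_of_injective
    (hx.comp (Tuple.sort x).injective)⟩

lemma aux_sum_ge {n : ℕ} (μ : Measure (ℝ × ℝ)) [IsProbabilityMeasure μ]
    (h : ∀ᵐ p ∂(Measure.pi fun _ : Fin n => μ), Function.Injective (fun i => (p i).1) ∧
      Function.Injective (fun i => (p i).2)) :
    1 ≤ (n.factorial : ENNReal) * ∑ π, (Measure.pi fun _ : Fin n => μ) (auxE π) := by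
  have h1 : ∀ (σ a : Equiv.Perm (Fin n)), (Measure.pi fun _ : Fin n => μ) (auxE a) =
      (Measure.pi fun _ : Fin n => μ) ((fun p : Fin n → ℝ × ℝ => p ∘ σ) ⁻¹' (auxE a)) := fun σ a =>
    ((aux_pi_perm μ σ).measure_preimage (auxE_meas a).nullMeasurableSet).symm
  have h2 : (n.factorial : ENNReal) *
      ∑ a, (Measure.pi fun _ : Fin n => μ) (auxE a) =
      ∑ x : Equiv.Perm (Fin n) × Equiv.Perm (Fin n),
        (Measure.pi fun _ : Fin n => μ) ((fun p : Fin n → ℝ × ℝ => p ∘ x.1) ⁻¹' (auxE x.2)) := by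
    rw [Fintype.sum_prod_type]
    simp_rw [← h1]
    simp [Fintype.card_perm]
  rw [h2]
  have h3 : (Measure.pi fun _ : Fin n => μ) (⋃ x : Equiv.Perm (Fin n) × Equiv.Perm (Fin n),
      (fun p : Fin n → ℝ × ℝ => p ∘ x.1) ⁻¹' (auxE x.2)) = 1 := by
    refine (prob_compl_eq_zero_iff₀ ?_).1 ?_
    rotate_left
    · rw [← mem_ae_iff]
      filter_upwards [h] with p hp
      obtain ⟨σ, hσ⟩ := aux_exists_sort _ hp.1
      obtain ⟨τ, hτ⟩ := aux_exists_sort ((fun i => (p i).2) ∘ σ) (hp.2.comp σ.injective)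
      refine Set.mem_iUnion.2 ⟨(σ, τ.symm), fun i j hij => ⟨hσ hij, ?_⟩⟩
      have := hτ.lt_iff_lt (a := τ.symm i) (b := τ.symm j)
      simpa using this
    · refine MeasurableSet.nullMeasurableSet (MeasurableSet.iUnion fun x => ?_)
      exact measurableSet_preimage (aux_pi_perm μ x.1).measurable (auxE_meas x.2)
  refine h3.ge.trans ((measure_iUnion_le _).trans ?_)
  rw [tsum_fintype]

lemma aux_restrict {n : ℕ} (μ : Measure (ℝ × ℝ)) [IsProbabilityMeasure μ] (T : Finset (Fin n)) :
    (Measure.pi fun _ : Fin n => μ).map (T.restrict (π := fun _ => ℝ × ℝ)) =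
      Measure.pi fun _ : T => μ := by
  rw [← Measure.infinitePi_eq_pi, Measure.infinitePi_map_restrict]

lemma aux_inj {n : ℕ} (c : ENNReal) (A : Set (ℝ × ℝ))
    [SigmaFinite (c • (volume : Measure (ℝ × ℝ)).restrict A)] :
    ∀ᵐ p ∂(Measure.pi fun _ : Fin n => c • (volume : Measure (ℝ × ℝ)).restrict A),
      Function.Injective (fun i => (p i).1) ∧ Function.Injective (fun i => (p i).2) := by
  have h : ∀ L : (ℝ × ℝ) →ₗ[ℝ] ℝ, L ≠ 0 → 
      ∀ᵐ p ∂(Measure.pi fun _ : Fin n => c • (volume : Measure (ℝ × ℝ)).restrict A),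
      Function.Injective (fun i => L (p i)) := by
    intro L hL
    have : ∀ᵐ p ∂(Measure.pi fun _ : Fin n => c • (volume : Measure (ℝ × ℝ)).restrict A),
        ∀ i j : Fin n, i ≠ j → L (p i) ≠ L (p j) := by
      rw [ae_all_iff]; intro i
      rw [ae_all_iff]; intro j
      rw [eventually_imp_distrib_left]; intro hij
      rw [ae_iff]
      simpa using aux_null c A L hL i j hij
    filter_upwards [this] with p hp i j hij
    by_contra hne
    exact hp i j hne hij
  have h1 := h (LinearMap.fst ℝ ℝ ℝ) (by
    intro h0
    simpa using congrArg (fun g => g (1, 0)) h0)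
  have h2 := h (LinearMap.snd ℝ ℝ ℝ) (by
    intro h0
    simpa using congrArg (fun g => g (0, 1)) h0)
  filter_upwards [h1, h2] with p hp1 hp2
  exact ⟨hp1, hp2⟩

lemma aux_q {n : ℕ} (c : ENNReal) (A : Set (ℝ × ℝ))
    [IsProbabilityMeasure (c • (volume : Measure (ℝ × ℝ)).restrict A)] (π : Equiv.Perm (Fin n))
    (M : ℝ) (K : ENNReal) (hK1 : 1 ≤ K) (hK : c * ENNReal.ofReal (2 * M) ^ 2 ≤ K) (k : ℕ)
    (B : Set (ℝ × ℝ)) (hB : B = Set.Icc (-M) M ×ˢ Set.Icc (-M) M) [DecidablePred (· ∈ B)] :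
    (k.factorial : ENNReal) ^ 2 *
    (Measure.pi fun _ : Fin n => c • (volume : Measure (ℝ × ℝ)).restrict A)
      (auxE π ∩ {p | k ≤ (Finset.univ.filter fun i => p i ∈ B).card}) ≤ 2 ^ n * K ^ n := by
  set μ := c • (volume : Measure (ℝ × ℝ)).restrict A with hμ
  let FT : (T : Finset (Fin n)) → Set (T → ℝ × ℝ) := fun T =>
    {z | (∀ i j : T, ((i : Fin n) : ℕ) < ((j : Fin n) : ℕ) → (z i).1 < (z j).1) ∧
      (∀ i j : T, ((π i : Fin n) : ℕ) < ((π j : Fin n) : ℕ) → (z i).2 < (z j).2) ∧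
        ∀ i, z i ∈ Set.Icc (-M) M ×ˢ Set.Icc (-M) M}
  have hFm : ∀ T, MeasurableSet (FT T) := by
    intro T
    refine MeasurableSet.inter ?_ (MeasurableSet.inter ?_ ?_)
    · change MeasurableSet {z : T → ℝ × ℝ | ∀ i j : T, _ → _}
      simp only [Set.ofPred_forall]
      exact MeasurableSet.iInter fun i => MeasurableSet.iInter fun j => MeasurableSet.iInter fun _ =>
        measurableSet_lt (measurable_pi_apply i).fst (measurable_pi_apply j).fst
    · change MeasurableSet {z : T → ℝ × ℝ | ∀ i j : T, _ → _}
      simp only [Set.ofPred_forall]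
      exact MeasurableSet.iInter fun i => MeasurableSet.iInter fun j => MeasurableSet.iInter fun _ =>
        measurableSet_lt (measurable_pi_apply i).snd (measurable_pi_apply j).snd
    · change MeasurableSet {z : T → ℝ × ℝ | ∀ i : T, _}
      simp only [Set.ofPred_forall]
      exact MeasurableSet.iInter fun i => measurable_pi_apply i
        (measurableSet_Icc.prod measurableSet_Icc)
  have hT : ∀ T : Finset (Fin n), k ≤ T.card → (k.factorial : ENNReal) ^ 2 *
      (Measure.pi fun _ : Fin n => μ) (T.restrict (π := fun _ => ℝ × ℝ) ⁻¹' FT T) ≤ K ^ n := by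
    intro T hk
    rw [← Measure.map_apply (Finset.measurable_restrict T) (hFm T), aux_restrict]
    have h := aux_FT (ι := T) (fun i => ((i : Fin n) : ℕ)) (fun i => ((π i : Fin n) : ℕ))
      (fun a b hab => Subtype.ext (Fin.ext hab))
      (fun a b hab => Subtype.ext (π.injective (Fin.ext hab))) M c A
    rw [Fintype.card_coe] at h
    have hcard : T.card ≤ n := by simpa using T.card_le_univ
    calc _ ≤ (T.card.factorial : ENNReal) ^ 2 * (Measure.pi fun _ : T => μ) (FT T) := by
          gcongr
      _ ≤ _ := h
      _ ≤ K ^ T.card := by gcongr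
      _ ≤ K ^ n := pow_le_pow_right₀ hK1 hcard
  have hsub : (Measure.pi fun _ : Fin n => μ)
      (auxE π ∩ {p | k ≤ (Finset.univ.filter fun i => p i ∈ B).card}) ≤
      (Measure.pi fun _ : Fin n => μ) (⋃ T ∈ (Finset.univ.filter fun T : Finset (Fin n) =>
        k ≤ T.card), (T.restrict (π := fun _ => ℝ × ℝ) ⁻¹' FT T)) := by
    apply measure_mono_ae
    filter_upwards [aux_inj (n := n) c A] with p hp hmem
    obtain ⟨hE, hk⟩ := hmem
    refine Set.mem_iUnion₂.2 ⟨Finset.univ.filter fun i => p i ∈ B, by simpa using hk, ?_⟩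
    refine ⟨fun i j hij => (hE i j hij).1, fun i j hij => ?_, fun i => ?_⟩
    · have hij' : π i < π j := hij
      rcases lt_trichotomy (i : Fin n) (j : Fin n) with h | h | h
      · exact (hE i j h).2.2 hij'
      · rw [h] at hij'; exact absurd hij' (lt_irrefl _)
      · have h1 := mt (hE j i h).2.1 (not_lt.2 hij'.le)
        exact lt_of_le_of_ne (not_lt.1 h1) (fun e => h.ne' (hp.2 e))
    · have := (Finset.mem_filter.1 i.2).2
      exact hB.subset this
  calc _ ≤ (k.factorial : ENNReal) ^ 2 * ∑ T ∈ (Finset.univ.filter fun T : Finset (Fin n) =>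
        k ≤ T.card), (Measure.pi fun _ : Fin n => μ) (T.restrict (π := fun _ => ℝ × ℝ) ⁻¹' FT T) := by
        gcongr
        exact hsub.trans (measure_biUnion_finset_le _ _)
    _ ≤ ∑ T ∈ (Finset.univ.filter fun T : Finset (Fin n) => k ≤ T.card), K ^ n := by
        rw [Finset.mul_sum]
        exact Finset.sum_le_sum fun T hh => hT T (Finset.mem_filter.1 hh).2
    _ ≤ ∑ T : Finset (Fin n), K ^ n :=
        Finset.sum_le_sum_of_subset (Finset.filter_subset _ _)
    _ = _ := by simp

lemma aux_upper {P : Type*} [Fintype P] [Nonempty P] (t : P → ℝ) (ht : ∀ a, 0 ≤ t a)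
    (hs : ∑ a, t a = 1) : ∑ a, Real.negMulLog (t a) ≤ Real.log (Fintype.card P) := by
  have hN : (0 : ℝ) < Fintype.card P := by exact_mod_cast Fintype.card_pos
  have h : ∀ a, Real.negMulLog (t a) ≤
      t a * Real.log (Fintype.card P) + (1 / (Fintype.card P : ℝ) - t a) := by
    intro a
    rcases (ht a).eq_or_lt with h0 | h0
    · rw [← h0]; simp
    · have h1 := Real.log_le_sub_one_of_pos (x := 1 / (Fintype.card P * t a)) (by positivity)
      rw [Real.log_div one_ne_zero (by positivity), Real.log_one, Real.log_mul hN.ne' h0.ne'] at h1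
      have h2 := mul_le_mul_of_nonneg_left h1 h0.le
      have h3 : t a * (1 / (Fintype.card P * t a) - 1) = 1 / (Fintype.card P : ℝ) - t a := by
        field_simp
      rw [h3] at h2
      unfold Real.negMulLog
      linarith
  refine (Finset.sum_le_sum fun a _ => h a).trans ?_
  rw [Finset.sum_add_distrib, ← Finset.sum_mul, Finset.sum_sub_distrib, hs]
  simp [hN.ne']

lemma aux_lower {P : Type*} [Fintype P] (q r : P → ℝ) (hq : ∀ a, 0 ≤ q a)
    (hr : ∀ a, 0 ≤ r a) (hs : ∑ a, (q a + r a) = 1) (η Q L : ℝ) (hη : ∑ a, r a ≤ η)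
    (hQ : ∀ a, q a ≤ Q) (hQ0 : 0 < Q) (hL : L ≤ -Real.log (2 * Q)) (hL0 : 0 ≤ L) :
    (1 - 2 * η) * L ≤ ∑ a, Real.negMulLog (q a + r a) := by
  have h : ∀ a, (q a + r a - 2 * r a) * L ≤ Real.negMulLog (q a + r a) := by
    intro a
    have h1 : q a + r a ≤ 1 := by
      rw [← hs]
      exact Finset.single_le_sum (f := fun a => q a + r a)
        (fun b _ => add_nonneg (hq b) (hr b)) (Finset.mem_univ a)
    have h0 : 0 ≤ q a + r a := add_nonneg (hq a) (hr a)
    by_cases hc : q a + r a ≤ 2 * Q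
    · have h2 : (q a + r a) * L ≤ Real.negMulLog (q a + r a) := by
        rcases h0.eq_or_lt with h3 | h3
        · rw [← h3]; simp
        · have h4 := Real.log_le_log h3 hc
          unfold Real.negMulLog
          nlinarith
      nlinarith [mul_nonneg (hr a) hL0]
    · have h2 := Real.negMulLog_nonneg h0 h1
      have h3 := hQ a
      nlinarith
  refine le_trans ?_ (Finset.sum_le_sum fun a _ => h a)
  rw [← Finset.sum_mul, Finset.sum_sub_distrib, hs, ← Finset.mul_sum]
  gcongr

lemma aux_box (μ : Measure (ℝ × ℝ)) [IsProbabilityMeasure μ] (ε : ENNReal) (hε : 0 < ε) :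
    ∃ M : ℝ, μ (Set.Icc (-M) M ×ˢ Set.Icc (-M) M)ᶜ ≤ ε := by
  have h := tendsto_measure_iInter_atTop (μ := μ)
    (s := fun m : ℕ => (Set.Icc (-(m : ℝ)) m ×ˢ Set.Icc (-(m : ℝ)) m)ᶜ)
    (fun m => (measurableSet_Icc.prod measurableSet_Icc).compl.nullMeasurableSet)
    (by
      intro a b hab
      have hab' : (a : ℝ) ≤ b := by exact_mod_cast hab
      apply Set.compl_subset_compl.2
      apply Set.prod_mono <;> exact Set.Icc_subset_Icc (by linarith) hab')
    ⟨0, measure_ne_top _ _⟩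
  have h0 : (⋂ m : ℕ, (Set.Icc (-(m : ℝ)) m ×ˢ Set.Icc (-(m : ℝ)) m)ᶜ) = ∅ := by
    rw [← Set.compl_iUnion, Set.compl_empty_iff, Set.eq_univ_iff_forall]
    rintro ⟨x, y⟩
    obtain ⟨m, hm⟩ := exists_nat_ge (max |x| |y|)
    refine Set.mem_iUnion.2 ⟨m, ?_⟩
    have h1 := abs_le.1 ((le_max_left _ _).trans hm)
    have h2 := abs_le.1 ((le_max_right _ _).trans hm)
    exact ⟨h1, h2⟩
  rw [h0, measure_empty] at h
  obtain ⟨m, hm⟩ := (h.eventually_le_const hε).exists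
  exact ⟨m, hm⟩

lemma aux_sum_one {n : ℕ} (c : ENNReal) (A : Set (ℝ × ℝ))
    [IsProbabilityMeasure (c • (volume : Measure (ℝ × ℝ)).restrict A)] :
    ∑ π : Equiv.Perm (Fin n), patternProb (c • (volume : Measure (ℝ × ℝ)).restrict A) π = 1 := by
  have h1 := aux_sum_le (n := n) (c • (volume : Measure (ℝ × ℝ)).restrict A) Set.univ
    MeasurableSet.univ (fun _ _ _ => trivial)
  have h2 := aux_sum_ge (n := n) (c • (volume : Measure (ℝ × ℝ)).restrict A) (aux_inj c A)
  simp only [Set.inter_univ, measure_univ] at h1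
  have h3 := congrArg ENNReal.toReal (le_antisymm h1 h2)
  rw [ENNReal.toReal_mul, ENNReal.toReal_sum (fun _ _ => measure_ne_top _ _), Finset.mul_sum] at h3
  simp only [ENNReal.toReal_natCast, ENNReal.toReal_one] at h3
  exact h3

lemma aux_entropy_lower (c : ENNReal) (A : Set (ℝ × ℝ))
    [IsProbabilityMeasure (c • (volume : Measure (ℝ × ℝ)).restrict A)] (hc : c ≠ ⊤)
    (δ : ℝ) (hδ : 0 < δ) :
    ∃ K : ℝ, 1 ≤ K ∧ ∀ (n k : ℕ) (L : ℝ), 0 < n → (k : ℝ) < (1 - δ) * n + 1 → 0 ≤ L →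
      L ≤ -Real.log (2 * (n.factorial * (2 ^ n * K ^ n) / (k.factorial : ℝ) ^ 2)) →
      (1 - 2 * δ) * L ≤ samplingEntropy (c • (volume : Measure (ℝ × ℝ)).restrict A) n := by
  classical
  obtain ⟨M, hM⟩ := aux_box (c • (volume : Measure (ℝ × ℝ)).restrict A)
    (ENNReal.ofReal (δ ^ 2)) (by simpa using by positivity)
  set μ := c • (volume : Measure (ℝ × ℝ)).restrict A with hμ
  set B : Set (ℝ × ℝ) := Set.Icc (-M) M ×ˢ Set.Icc (-M) M with hB
  have hBm : MeasurableSet B := measurableSet_Icc.prod measurableSet_Icc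
  have hKtop : c * ENNReal.ofReal (2 * M) ^ 2 ≠ ⊤ :=
    ENNReal.mul_ne_top hc (ENNReal.pow_ne_top ENNReal.ofReal_ne_top)
  refine ⟨max 1 (c * ENNReal.ofReal (2 * M) ^ 2).toReal, le_max_left _ _, ?_⟩
  set K := max 1 (c * ENNReal.ofReal (2 * M) ^ 2).toReal with hKdef
  have hK1 : 1 ≤ K := le_max_left _ _
  intro n k L hn hk hL0 hL
  have hn' : (0 : ℝ) < n := by exact_mod_cast hn
  set D : Set (Fin n → ℝ × ℝ) :=
    {p | δ * n ≤ ((Finset.univ.filter fun i => p i ∈ Bᶜ).card : ℝ)} with hD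
  have hDm : MeasurableSet D := by
    have : Measurable (fun p : Fin n → ℝ × ℝ =>
        ∑ i, Bᶜ.indicator (fun _ => (1 : ℝ)) (p i)) :=
      Finset.measurable_sum _ fun i _ =>
        (measurable_const.indicator hBm.compl).comp (measurable_pi_apply i)
    have h2 := measurableSet_le (measurable_const (a := δ * n)) this
    convert h2 using 3 with p
    rw [Finset.card_filter]
    push_cast
    simp only [Set.indicator_apply]
  have hinv : ∀ (σ : Equiv.Perm (Fin n)) (p : Fin n → ℝ × ℝ), p ∘ σ ∈ D → p ∈ D := by
    intro σ p hp
    have : (Finset.univ.filter fun i => (p ∘ σ) i ∈ Bᶜ).card =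
        (Finset.univ.filter fun i => p i ∈ Bᶜ).card := by
      refine Finset.card_bij (fun i _ => σ i) ?_ ?_ ?_
      · intro i hi; simpa using hi
      · intro i _ j _ h; exact σ.injective h
      · intro i hi; exact ⟨σ.symm i, by simpa using hi, by simp⟩
    change δ * n ≤ (_ : ℝ) at hp
    rw [this] at hp
    exact hp
  have hPD : (Measure.pi fun _ : Fin n => μ) D ≤ ENNReal.ofReal δ := by
    have h := aux_markov (n := n) μ Bᶜ hBm.compl (δ * n) (by positivity)
    have h2 : ENNReal.ofReal (δ * n) * (Measure.pi fun _ : Fin n => μ) D ≤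
        ENNReal.ofReal (δ * n) * ENNReal.ofReal δ := by
      refine h.trans ?_
      calc (n : ENNReal) * μ Bᶜ ≤ n * ENNReal.ofReal (δ ^ 2) := by gcongr
        _ = _ := by
          rw [← ENNReal.ofReal_natCast, ← ENNReal.ofReal_mul (by positivity),
            ← ENNReal.ofReal_mul (by positivity)]
          congr 1; ring
    exact (ENNReal.mul_le_mul_iff_right (by simpa using by positivity) ENNReal.ofReal_ne_top).1 h2
  let P := Measure.pi fun _ : Fin n => μ
  let q : Equiv.Perm (Fin n) → ℝ := fun π => n.factorial * (P (auxE π \ D)).toReal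
  let r : Equiv.Perm (Fin n) → ℝ := fun π => n.factorial * (P (auxE π ∩ D)).toReal
  have hqr : ∀ π, patternProb μ π = q π + r π := by
    intro π
    change n.factorial * (P (auxE π)).toReal = _
    rw [← measure_inter_add_sdiff (auxE π) hDm,
      ENNReal.toReal_add (measure_ne_top _ _) (measure_ne_top _ _)]
    simp only [q, r]; ring
  have hone := aux_sum_one (n := n) c A
  unfold samplingEntropy
  simp_rw [← hμ, hqr] at hone ⊢
  refine aux_lower q r (fun _ => by positivity) (fun _ => by positivity) hone δ _ L ?_ ?_ ?_ hL hL0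
  · have h := (aux_sum_le μ D hDm hinv).trans hPD
    have h2 := ENNReal.toReal_mono ENNReal.ofReal_ne_top h
    rw [ENNReal.toReal_mul, ENNReal.toReal_sum (fun _ _ => measure_ne_top _ _), Finset.mul_sum,
      ENNReal.toReal_ofReal hδ.le] at h2
    simpa using h2
  · intro π
    have h := aux_q (n := n) c A π M (ENNReal.ofReal K) (by simpa using hK1)
      (ENNReal.le_ofReal_iff_toReal_le hKtop (by positivity) |>.2 (le_max_right _ _)) k B hB
    have hsub : auxE π \ D ⊆ auxE π ∩ {p | k ≤ (Finset.univ.filter fun i => p i ∈ B).card} := by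
      rintro p ⟨h1, h2⟩
      refine ⟨h1, ?_⟩
      have h3 : ((Finset.univ.filter fun i => p i ∈ Bᶜ).card : ℝ) < δ * n := not_le.1 h2
      have h4 := Finset.card_filter_add_card_filter_not (s := (Finset.univ : Finset (Fin n)))
        (fun i => p i ∈ B)
      simp only [Set.mem_compl_iff] at h3
      simp only [Finset.card_univ, Fintype.card_fin] at h4
      have h5 : ((Finset.univ.filter fun i => p i ∈ B).card : ℝ) +
        ((Finset.univ.filter fun i => p i ∉ B).card : ℝ) = n := by exact_mod_cast h4
      have h6 : (k : ℝ) < ((Finset.univ.filter fun i => p i ∈ B).card : ℝ) + 1 := by linarith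
      have h7 : k < (Finset.univ.filter fun i => p i ∈ B).card + 1 := by exact_mod_cast h6
      exact Nat.lt_succ_iff.1 h7
    have h8 : (k.factorial : ENNReal) ^ 2 * P (auxE π \ D) ≤ 2 ^ n * (ENNReal.ofReal K) ^ n :=
      le_trans (by gcongr) h
    have h9 := ENNReal.toReal_mono (by
      exact ENNReal.mul_ne_top (by simp) (ENNReal.pow_ne_top ENNReal.ofReal_ne_top)) h8
    simp only [ENNReal.toReal_mul, ENNReal.toReal_pow, ENNReal.toReal_natCast,
      ENNReal.toReal_ofNat, ENNReal.toReal_ofReal (zero_le_one.trans hK1)] at h9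
    rw [le_div_iff₀ (by positivity)]
    simp only [q]
    calc _ = (n.factorial : ℝ) * ((k.factorial : ℝ) ^ 2 * (P (auxE π \ D)).toReal) := by ring
      _ ≤ _ := by gcongr
  · positivity

lemma aux_logfact (k : ℕ) (hk : 0 < k) : k * Real.log k - k ≤ Real.log k.factorial := by
  have hk' : (0 : ℝ) < k := by exact_mod_cast hk
  have h := Real.pow_div_factorial_le_exp (x := k) hk'.le k
  have h2 := Real.log_le_log (by positivity) h
  rw [Real.log_exp, Real.log_div (by positivity) (by positivity), Real.log_pow] at h2
  linarith

lemma aux_logfact_le (n : ℕ) : Real.log n.factorial ≤ n * Real.log n := by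
  have h : (n.factorial : ℝ) ≤ (n : ℝ) ^ n := by exact_mod_cast Nat.factorial_le_pow n
  have h2 := Real.log_le_log (by positivity) h
  rwa [Real.log_pow] at h2

theorem samplingEntropy_uniform_on_set
    (A : Set (ℝ × ℝ)) (hA : MeasurableSet A)
    (hpos : 0 < volume A) (hfin : volume A < ⊤) :
    Tendsto
      (fun n : ℕ =>
        samplingEntropy ((volume A)⁻¹ • volume.restrict A) n / (n * Real.log n))
      atTop (nhds 1) := by
  have hprob : IsProbabilityMeasure ((volume A)⁻¹ • (volume : Measure (ℝ × ℝ)).restrict A) := by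
    constructor
    simp [ENNReal.inv_mul_cancel hpos.ne' hfin.ne]
  have hc : (volume A)⁻¹ ≠ ⊤ := by simpa using hpos.ne'
  have hlog : Tendsto (fun n : ℕ => Real.log n) atTop atTop :=
    Real.tendsto_log_atTop.comp tendsto_natCast_atTop_atTop
  -- upper bound
  have hup : ∀ᶠ n : ℕ in atTop,
      samplingEntropy ((volume A)⁻¹ • volume.restrict A) n / (n * Real.log n) ≤ 1 := by
    filter_upwards [hlog.eventually_gt_atTop 0, eventually_gt_atTop 0] with n h1 h2
    have h2' : (0 : ℝ) < n := by exact_mod_cast h2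
    rw [div_le_one (by positivity)]
    have h := aux_upper (fun π : Equiv.Perm (Fin n) =>
      patternProb ((volume A)⁻¹ • volume.restrict A) π)
      (fun π => by unfold patternProb; positivity) (aux_sum_one _ A)
    rw [Fintype.card_perm, Fintype.card_fin] at h
    exact h.trans (aux_logfact_le n)
  have hlow : ∀ δ : ℝ, 0 < δ → δ < 1 / 10 → ∀ᶠ n : ℕ in atTop,
      1 - 5 * δ ≤ samplingEntropy ((volume A)⁻¹ • volume.restrict A) n / (n * Real.log n) := by
    intro δ hδ hδ1
    obtain ⟨K, hK1, hK⟩ := aux_entropy_lower _ A hc δ hδ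
    set C : ℝ := 2 * (1 - Real.log (1 - δ)) + Real.log (2 * K) + Real.log 2 with hC
    filter_upwards [hlog.eventually_ge_atTop (C / δ), hlog.eventually_ge_atTop 10,
      hlog.eventually_ge_atTop (1 - Real.log (1 - δ)), eventually_gt_atTop 0] with n hn1 hn2 hn3 hn0
    have hn' : (0 : ℝ) < n := by exact_mod_cast hn0
    have hn1' : (1 : ℝ) ≤ n := by exact_mod_cast hn0
    set l := Real.log n with hl
    set k := ⌈(1 - δ) * n⌉₊ with hk
    have hk1 : (1 - δ) * n ≤ k := Nat.le_ceil _
    have hk2 : (k : ℝ) < (1 - δ) * n + 1 := Nat.ceil_lt_add_one (by nlinarith)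
    have hkpos : (0 : ℝ) < (1 - δ) * n := by nlinarith
    have hk0' : (0 : ℝ) < k := hkpos.trans_le hk1
    have hk0 : 0 < k := by exact_mod_cast hk0'
    have hd1 : 0 < 1 - δ := by linarith
    have hf1 : (1 - δ) * n * (l + Real.log (1 - δ) - 1) ≤ Real.log k.factorial := by
      refine le_trans ?_ (aux_logfact k hk0)
      have h3 : Real.log (1 - δ) + l ≤ Real.log k := by
        rw [hl, ← Real.log_mul hd1.ne' hn'.ne']
        exact Real.log_le_log hkpos hk1
      have h4 : 0 ≤ l + Real.log (1 - δ) - 1 := by linarith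
      calc _ ≤ (k : ℝ) * (l + Real.log (1 - δ) - 1) := by gcongr
        _ ≤ k * (Real.log k - 1) := by gcongr; linarith
        _ = _ := by ring
    have hf2 := aux_logfact_le n
    have hKn : Real.log (2 ^ n * K ^ n) = n * Real.log (2 * K) := by
      rw [← mul_pow, Real.log_pow]
    have hcl : C ≤ δ * l := by rwa [div_le_iff₀' hδ] at hn1
    have hlogd : Real.log (1 - δ) ≤ 0 := Real.log_nonpos hd1.le (by linarith)
    have hlog2 : 0 ≤ Real.log 2 := Real.log_nonneg (by norm_num)
    have hl0 : 0 < l := by linarith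
    have hfin := hK n k ((1 - 3 * δ) * (n * l)) hn0 hk2
      (mul_nonneg (by linarith) (by positivity)) (by
        rw [Real.log_mul (by norm_num) (by positivity), Real.log_div (by positivity) (by positivity),
          Real.log_mul (by positivity) (by positivity), hKn, Real.log_pow]
        push_cast
        have e1 : n * C ≤ n * (δ * l) := by gcongr
        rw [hC] at e1
        have e2 : Real.log 2 ≤ n * Real.log 2 := by nlinarith
        have e3 : 0 ≤ δ * n * (1 - Real.log (1 - δ)) :=
          mul_nonneg (by positivity) (by linarith)
        rw [← hl] at hf2
        nlinarith)
    rw [le_div_iff₀ (by positivity)]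
    refine le_trans ?_ hfin
    rw [← mul_assoc (1 - 2 * δ)]
    have hnl : 0 ≤ (n : ℝ) * l := by positivity
    refine mul_le_mul_of_nonneg_right ?_ hnl
    nlinarith
  rw [Metric.tendsto_nhds]
  intro ε hε
  have hδ : 0 < min (ε / 10) (1 / 20) := by positivity
  filter_upwards [hup, hlow (min (ε / 10) (1 / 20)) hδ
    ((min_le_right _ _).trans_lt (by norm_num))] with n h1 h2
  have h3 := min_le_left (ε / 10) (1 / 20)
  rw [Real.dist_eq, abs_lt]
  constructor <;> linarith
end

section
/- Let f : [0,1] → [0,1] preserve Lebesgue measure and suppose there exist finitely many points 0 = x_0 < x_1 < … < x_k = 1 such that f is affine with nonzero slope s_i on each interval [x_{i−1}, x_i]. Then lim_{n→∞} H_n(μ_f)/n = ∑_{i=1}^k (x_i − x_{i−1})·log|s_i| = ∫₀¹ log|f'(x)| dx. -/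
open MeasureTheory Filter




/-- The permuton associated with a Lebesgue-measure-preserving map f : [0,1] → [0,1]:
the pushforward of Lebesgue measure on [0,1] under x ↦ (x, f x). -/
noncomputable def graphPermuton (f : ℝ → ℝ) : Measure (ℝ × ℝ) :=
  Measure.map (fun t => (t, f t)) (volume.restrict (Set.Icc (0:ℝ) 1))


lemma entropy_bounds {Q W : Type*} [Fintype Q] [Fintype W] [DecidableEq W] [DecidableEq Q]
    (t : Q → ℝ) (T P : W → ℝ) (D : Q → Finset W) (C Z : ℝ) (hC : 1 ≤ C) (hZ : 1 ≤ Z)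
    (hT0 : ∀ w, 0 ≤ T w) (hP0 : ∀ w, 0 < P w) (hTP : ∀ w, T w ≤ P w)
    (ht : ∀ p, t p = ∑ w ∈ D p, T w)
    (hD : ∀ w, T w ≠ 0 → ∃! p, w ∈ D p)
    (hcard : ∀ p, ((D p).card : ℝ) ≤ C)
    (hsum : ∑ w, T w = 1)
    (hZs : ∑ w with T w ≠ 0, P w ≤ Z) :
    ∑ p, Real.negMulLog (t p) ≤ ∑ w, T w * (- Real.log (P w)) + Real.log Z ∧
    ∑ w, T w * (- Real.log (P w)) - Real.log C ≤ ∑ p, Real.negMulLog (t p) := by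
  have hswap : ∀ φ : W → ℝ, ∑ p, ∑ w ∈ D p, T w * φ w = ∑ w, T w * φ w := by
    intro φ
    have : ∀ p, ∑ w ∈ D p, T w * φ w = ∑ w, if w ∈ D p then T w * φ w else 0 := by
      intro p; simp [Finset.sum_ite_mem]
    simp_rw [this]
    rw [Finset.sum_comm]
    refine Finset.sum_congr rfl fun w _ => ?_
    by_cases h : T w = 0
    · simp [h]
    · obtain ⟨p, hp, hu⟩ := hD w h
      rw [Finset.sum_eq_single p]
      · simp [hp]
      · intro q _ hq; rw [if_neg]; intro hw; exact hq (hu q hw)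
      · simp
  have ht0 : ∀ p, 0 ≤ t p := fun p => by rw [ht]; exact Finset.sum_nonneg fun w _ => hT0 w
  have htsum : ∑ p, t p = 1 := by
    have := hswap (fun _ => 1)
    simp only [mul_one] at this
    rw [← hsum, ← this]; exact Finset.sum_congr rfl fun p _ => ht p
  have hneg : ∀ p, Real.negMulLog (t p) = ∑ w ∈ D p, T w * (- Real.log (t p)) := by
    intro p
    rw [← Finset.sum_mul, ← ht]; simp [Real.negMulLog]
  have hCpos : 0 < C := by linarith
  have hZpos : 0 < Z := by linarith
  constructor
  · have h1 : ∑ p, Real.negMulLog (t p) ≤ ∑ w, T w * (- Real.log (T w)) := by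
      rw [← hswap]
      refine Finset.sum_le_sum fun p _ => ?_
      rw [hneg]
      refine Finset.sum_le_sum fun w hw => ?_
      rcases (hT0 w).eq_or_lt with h | h
      · simp [← h]
      · have : T w ≤ t p := by
          rw [ht]; exact Finset.single_le_sum (fun w _ => hT0 w) hw
        have := Real.log_le_log h this
        gcongr
    have h2 : ∀ w, T w * (- Real.log (T w)) ≤
        T w * (- Real.log (P w)) + T w * Real.log Z + ((if T w ≠ 0 then P w else 0) / Z - T w) := by
      intro w
      rcases (hT0 w).eq_or_lt with h | h
      · simp [← h]
      · have hne : T w ≠ 0 := h.ne'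
        have := Real.log_le_sub_one_of_pos (x := P w / (Z * T w)) (by have := hP0 w; positivity)
        rw [Real.log_div (hP0 w).ne' (by positivity), Real.log_mul hZpos.ne' hne] at this
        have h3 := mul_le_mul_of_nonneg_left this h.le
        have h4 : T w * (P w / (Z * T w) - 1) = P w / Z - T w := by field_simp
        rw [h4] at h3
        simp only [hne, ne_eq, not_false_eq_true, if_true]
        linarith
    have h3 := Finset.sum_le_sum fun w (_ : w ∈ Finset.univ) => h2 w
    simp only [Finset.sum_add_distrib, Finset.sum_sub_distrib, ← Finset.sum_mul, ← Finset.sum_div,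
      ← Finset.sum_filter, hsum] at h3
    have h4 : (∑ w with T w ≠ 0, P w) / Z ≤ 1 := by rw [div_le_one hZpos]; exact hZs
    linarith
  · have h1 : ∀ p, ∑ w ∈ D p, T w * (- Real.log (P w)) ≤
        Real.negMulLog (t p) + t p * Real.log C := by
      intro p
      have key : ∀ w ∈ D p, T w * (- Real.log (P w)) ≤
          T w * (- Real.log (t p)) + T w * Real.log C + (t p / C - T w) := by
        intro w hw
        rcases (hT0 w).eq_or_lt with h | h
        · simp [← h]; have := ht0 p; positivity
        · have htp : 0 < t p := h.trans_le (by
            rw [ht]; exact Finset.single_le_sum (fun w _ => hT0 w) hw)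
          have := Real.log_le_sub_one_of_pos (x := t p / (C * P w)) (by have := hP0 w; positivity)
          rw [Real.log_div htp.ne' (by have := hP0 w; positivity),
            Real.log_mul hCpos.ne' (hP0 w).ne'] at this
          have h3 := mul_le_mul_of_nonneg_left this h.le
          have h4 : T w * (t p / (C * P w) - 1) ≤ t p / C - T w := by
            have : T w * (t p / (C * P w)) = (t p / C) * (T w / P w) := by
              have := hP0 w; field_simp
            rw [mul_sub, this]
            have : (t p / C) * (T w / P w) ≤ (t p / C) * 1 := by
              gcongr
              rw [div_le_one (hP0 w)]; exact hTP w
            linarith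
          linarith
      have h3 := Finset.sum_le_sum key
      simp only [Finset.sum_add_distrib, Finset.sum_sub_distrib, ← Finset.sum_mul, ← ht,
        Finset.sum_const, nsmul_eq_mul] at h3
      have h4 : ((D p).card : ℝ) * (t p / C) ≤ C * (t p / C) := by
        have := ht0 p
        gcongr; exact hcard p
      rw [mul_div_cancel₀ _ hCpos.ne'] at h4
      rw [Real.negMulLog]
      linarith
    have h2 := Finset.sum_le_sum fun p (_ : p ∈ Finset.univ) => h1 p
    rw [hswap, Finset.sum_add_distrib, ← Finset.sum_mul, htsum] at h2
    linarith

lemma lower_eq_of_card {n : ℕ} (S S' : Finset (Fin n))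
    (h : ∀ i j, i ≤ j → j ∈ S → i ∈ S) (h' : ∀ i j, i ≤ j → j ∈ S' → i ∈ S')
    (hc : S.card = S'.card) : S = S' := by
  by_cases hs : S ⊆ S'
  · exact Finset.eq_of_subset_of_card_le hs hc.ge
  · obtain ⟨a, ha, ha'⟩ := Finset.not_subset.1 hs
    refine (Finset.eq_of_subset_of_card_le (fun b hb => ?_) hc.le).symm
    rcases le_total a b with hab | hab
    · exact absurd (h' _ _ hab hb) ha'
    · exact h _ _ hab ha

/-- counting -/
def cnt {n : ℕ} (S : Finset (Fin n)) : Fin (n + 1) :=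
  ⟨S.card, by have := S.card_le_univ; simp at this; omega⟩

lemma card_monotone_le {n k : ℕ} (D : Finset (Fin n → Fin k)) (π : Equiv.Perm (Fin n))
    (hD : ∀ w ∈ D, Monotone (w ∘ π)) : D.card ≤ (n + 1) ^ k := by
  have : D.card ≤ (Finset.univ : Finset (Fin k → Fin (n+1))).card := by
    refine Finset.card_le_card_of_injOn
      (fun w j => cnt (Finset.univ.filter fun i => w (π i) ≤ j)) (by simp) ?_
    intro w hw w' hw' he
    have key : ∀ j i, w (π i) ≤ j ↔ w' (π i) ≤ j := by
      intro j i
      have h1 := congrArg Fin.val (congrFun he j)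
      simp only [cnt] at h1
      have := lower_eq_of_card _ _ ?_ ?_ h1
      · have := Finset.ext_iff.1 this i; simpa using this
      · intro a b hab hb
        simp only [Finset.mem_filter, Finset.mem_univ, true_and] at hb ⊢
        exact (hD w hw hab).trans hb
      · intro a b hab hb
        simp only [Finset.mem_filter, Finset.mem_univ, true_and] at hb ⊢
        exact (hD w' hw' hab).trans hb
    have : w ∘ π = w' ∘ π := by
      funext i
      exact le_antisymm ((key _ i).2 le_rfl) ((key _ i).1 le_rfl)
    exact π.surjective.injective_comp_right this
  simpa using this

/-- expectation of additive functional -/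
lemma sum_prod_additive {k n : ℕ} (ℓ g : Fin k → ℝ) (h1 : ∑ j, ℓ j = 1) :
    ∑ v : Fin n → Fin k, (∏ i, ℓ (v i)) * ∑ i, g (v i) = n * ∑ j, ℓ j * g j := by
  simp_rw [Finset.mul_sum (s := (Finset.univ : Finset (Fin n)))]
  rw [Finset.sum_comm]
  have : ∀ i0 : Fin n, ∑ v : Fin n → Fin k, (∏ i, ℓ (v i)) * g (v i0) = ∑ j, ℓ j * g j := by
    intro i0
    have e : ∀ v : Fin n → Fin k, (∏ i, ℓ (v i)) * g (v i0) =
        ∏ i, (ℓ (v i) * if i = i0 then g (v i) else 1) := by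
      intro v
      rw [Finset.prod_mul_distrib]; simp
    simp_rw [e]
    have := Finset.prod_univ_sum (fun _ : Fin n => (Finset.univ : Finset (Fin k)))
      (fun i j => ℓ j * if i = i0 then g j else 1)
    rw [Fintype.piFinset_univ] at this
    rw [← this, Finset.prod_eq_single i0]
    · simp
    · intro b _ hb; simp [hb, h1]
    · simp
  simp [this]

lemma sum_prod_one {k n : ℕ} (ℓ : Fin k → ℝ) (h1 : ∑ j, ℓ j = 1) :
    ∑ v : Fin n → Fin k, (∏ i, ℓ (v i)) = 1 := by
  have := Finset.prod_univ_sum (fun _ : Fin n => (Finset.univ : Finset (Fin k)))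
      (fun _ j => ℓ j)
  rw [Fintype.piFinset_univ] at this
  rw [← this]; simp [h1]

/-- The uniform measure on the cube. -/
noncomputable abbrev unifP (n : ℕ) : Measure (Fin n → ℝ) :=
  Measure.pi fun _ : Fin n => volume.restrict (Set.Icc (0:ℝ) 1)

instance unif_prob : IsProbabilityMeasure (volume.restrict (Set.Icc (0:ℝ) 1)) :=
  ⟨by simp⟩

lemma unifP_eq (n : ℕ) : unifP n =
    (volume : Measure (Fin n → ℝ)).restrict (Set.univ.pi fun _ => Set.Icc (0:ℝ) 1) := by
  rw [unifP, volume_pi, Measure.restrict_pi_pi]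

lemma unifP_perm {n : ℕ} (σ : Equiv.Perm (Fin n)) (S : Set (Fin n → ℝ)) :
    unifP n ((fun x => x ∘ σ) ⁻¹' S) = unifP n S := by
  have h := (measurePreserving_piCongrLeft (α := fun _ : Fin n => ℝ)
    (fun _ => volume.restrict (Set.Icc (0:ℝ) 1)) σ.symm).measure_preimage_equiv S
  rw [← h]
  have e : (fun x : Fin n → ℝ => x ∘ σ) =
      MeasurableEquiv.piCongrLeft (fun _ : Fin n => ℝ) σ.symm := by
    funext x i
    obtain ⟨j, rfl⟩ := σ.symm.surjective i
    rw [MeasurableEquiv.piCongrLeft_apply_apply]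
    simp
  rw [e]

lemma ae_injective (n : ℕ) : ∀ᵐ x ∂unifP n, Function.Injective x := by
  have : ∀ i j : Fin n, i ≠ j → ∀ᵐ x ∂unifP n, x i ≠ x j := by
    intro i j hij
    rw [unifP_eq]
    refine ae_restrict_of_ae ?_
    have h := Measure.addHaar_submodule (volume : Measure (Fin n → ℝ))
      (LinearMap.ker ((LinearMap.proj i : (Fin n → ℝ) →ₗ[ℝ] ℝ) - (LinearMap.proj j : (Fin n → ℝ) →ₗ[ℝ] ℝ))) ?_
    · rw [ae_iff]
      convert h using 2
      ext x
      simp [sub_eq_zero]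
    · intro htop
      have : Pi.single i (1:ℝ) ∈
          (LinearMap.ker ((LinearMap.proj i : (Fin n → ℝ) →ₗ[ℝ] ℝ) - (LinearMap.proj j : (Fin n → ℝ) →ₗ[ℝ] ℝ))) := by
        rw [htop]; trivial
      simp [hij.symm] at this
  have h2 : ∀ᵐ x ∂unifP n, ∀ i j : Fin n, i ≠ j → x i ≠ x j := by
    rw [ae_all_iff]; intro i
    rw [ae_all_iff]; intro j
    by_cases h : i = j
    · simp [h]
    · filter_upwards [this i j h] with x hx _ using hx
  filter_upwards [h2] with x hx i j hij
  by_contra h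
  exact hx i j h hij

lemma unifP_map {f : ℝ → ℝ} (hmeas : Measurable f)
    (hmp : Measure.map f (volume.restrict (Set.Icc (0:ℝ) 1)) =
      volume.restrict (Set.Icc (0:ℝ) 1)) (n : ℕ) :
    MeasurePreserving (fun (x : Fin n → ℝ) i => f (x i)) (unifP n) (unifP n) :=
  measurePreserving_pi _ _ fun _ => ⟨hmeas, hmp⟩

lemma ae_injective_f {f : ℝ → ℝ} (hmeas : Measurable f)
    (hmp : Measure.map f (volume.restrict (Set.Icc (0:ℝ) 1)) =
      volume.restrict (Set.Icc (0:ℝ) 1)) (n : ℕ) :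
    ∀ᵐ x ∂unifP n, Function.Injective (f ∘ x) :=
  (unifP_map hmeas hmp n).quasiMeasurePreserving.ae (ae_injective n)

lemma exists_sort {n : ℕ} (y : Fin n → ℝ) (hy : Function.Injective y) :
    ∃ σ : Equiv.Perm (Fin n), StrictMono (y ∘ σ) :=
  ⟨Tuple.sort y, (Tuple.monotone_sort y).strictMono_of_injective (hy.comp (Equiv.injective _))⟩

lemma sort_unique {n : ℕ} (y : Fin n → ℝ) (σ τ : Equiv.Perm (Fin n))
    (h1 : StrictMono (y ∘ σ)) (h2 : StrictMono (y ∘ τ)) : σ = τ := by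
  have h := Tuple.unique_monotone h1.monotone h2.monotone
  have hy : Function.Injective y := by
    have := h1.injective.comp σ.symm.injective
    simpa [Function.comp_assoc] using this
  ext i
  exact congrArg _ (hy (congrFun h i))

lemma measurableSet_strictMono {n : ℕ} {f : ℝ → ℝ} (hmeas : Measurable f) (σ : Fin n → Fin n) :
    MeasurableSet {x : Fin n → ℝ | StrictMono (f ∘ x ∘ σ)} := by
  have : {x : Fin n → ℝ | StrictMono (f ∘ x ∘ σ)} =
      ⋂ i, ⋂ j, ⋂ (_ : i < j), {x | f (x (σ i)) < f (x (σ j))} := by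
    ext x; simp [StrictMono]
  rw [this]
  refine MeasurableSet.iInter fun i => MeasurableSet.iInter fun j => MeasurableSet.iInter fun _ => ?_
  exact measurableSet_lt (by fun_prop) (by fun_prop)

lemma unifP_split {f : ℝ → ℝ} (hmeas : Measurable f)
    (hmp : Measure.map f (volume.restrict (Set.Icc (0:ℝ) 1)) =
      volume.restrict (Set.Icc (0:ℝ) 1)) (n : ℕ) (G : Set (Fin n → ℝ)) (hG : MeasurableSet G) :
    unifP n G = ∑ σ : Equiv.Perm (Fin n), unifP n (G ∩ {x | StrictMono (f ∘ x ∘ σ)}) := by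
  rw [← tsum_fintype (L := .unconditional _), ← measure_iUnion]
  · refine measure_congr ?_
    filter_upwards [ae_injective_f hmeas hmp n] with x hx
    refine propext ⟨fun h => ?_, fun h => ?_⟩
    · obtain ⟨σ, hσ⟩ := exists_sort _ hx
      exact Set.mem_iUnion.2 ⟨σ, h, hσ⟩
    · obtain ⟨σ, h1, h2⟩ := Set.mem_iUnion.1 h
      exact h1
  · intro σ τ hne
    refine Set.disjoint_left.2 fun x h1 h2 => hne ?_
    exact sort_unique (f ∘ x) _ _ h1.2 h2.2
  · intro σ
    exact hG.inter (measurableSet_strictMono hmeas σ)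

lemma factorial_mul_strictMono (n : ℕ) :
    (n.factorial : ℝ) * (unifP n).real {x | StrictMono x} = 1 := by
  have h := unifP_split measurable_id Measure.map_id n Set.univ MeasurableSet.univ
  have h2 : ∀ σ : Equiv.Perm (Fin n), unifP n (Set.univ ∩ {x | StrictMono (id ∘ x ∘ σ)}) =
      unifP n {x | StrictMono x} := by
    intro σ
    rw [← unifP_perm σ {x | StrictMono x}]
    congr 1; ext x; simp
  simp only [h2] at h
  simp only [measure_univ, Finset.sum_const, Finset.card_univ, Fintype.card_perm,
    Fintype.card_fin, nsmul_eq_mul] at h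
  have := congrArg ENNReal.toReal h
  simpa [Measure.real] using this.symm

lemma volume_affine_preimage {n : ℕ} (s c : Fin n → ℝ) (hs : ∀ i, s i ≠ 0)
    (S : Set (Fin n → ℝ)) (hS : MeasurableSet S) :
    volume ((fun (x : Fin n → ℝ) i => c i + s i * x i) ⁻¹' S) =
      ENNReal.ofReal (∏ i, |s i|⁻¹) * volume S := by
  have hdet : Matrix.det (Matrix.diagonal s) ≠ 0 := by
    rw [Matrix.det_diagonal]; exact Finset.prod_ne_zero_iff.2 fun i _ => hs i
  have h := Real.smul_map_diagonal_volume_pi hdet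
  have hS' : MeasurableSet ((fun y => c + y) ⁻¹' S) := hS.preimage (by fun_prop)
  have h1 := congrArg (fun μ : Measure (Fin n → ℝ) => μ ((fun y => c + y) ⁻¹' S)) h
  simp only [Measure.smul_apply, smul_eq_mul, measure_preimage_add] at h1
  rw [Measure.map_apply (LinearMap.continuous_on_pi _).measurable hS'] at h1
  rw [← h1, ← mul_assoc, ← ENNReal.ofReal_mul (by positivity), Matrix.det_diagonal,
    Finset.abs_prod, ← Finset.prod_mul_distrib]
  have : ∏ i, |s i|⁻¹ * |s i| = 1 := Finset.prod_eq_one fun i _ => by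
    have := hs i
    field_simp
  rw [this, ENNReal.ofReal_one, one_mul]
  congr 1
  ext x
  simp only [Set.mem_preimage]
  have : (fun i => c i + s i * x i) = c + (Matrix.toLin' (Matrix.diagonal s)) x := by
    ext i; simp [Matrix.mulVec_diagonal]
  rw [this]

/-- The standing data. -/
structure PAData {k : ℕ} (f : ℝ → ℝ) (x : Fin (k + 1) → ℝ) (s c : Fin k → ℝ) : Prop where
  hmeas : Measurable f
  hmaps : Set.MapsTo f (Set.Icc (0:ℝ) 1) (Set.Icc (0:ℝ) 1)
  hmp : Measure.map f (volume.restrict (Set.Icc (0:ℝ) 1)) = volume.restrict (Set.Icc (0:ℝ) 1)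
  hx0 : x 0 = 0
  hxk : x (Fin.last k) = 1
  hmono : StrictMono x
  hs : ∀ i, s i ≠ 0
  haff : ∀ i : Fin k, ∀ t ∈ Set.Icc (x i.castSucc) (x i.succ), f t = c i + s i * t

/-- The pieces. -/
def piece {k : ℕ} (x : Fin (k + 1) → ℝ) (j : Fin k) : Set ℝ := Set.Ioc (x j.castSucc) (x j.succ)

/-- Points whose images are sorted and whose pieces are prescribed. -/
def Aset {k n : ℕ} (f : ℝ → ℝ) (x : Fin (k + 1) → ℝ) (w : Fin n → Fin k) : Set (Fin n → ℝ) :=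
  {z | (∀ i, z i ∈ piece x (w i)) ∧ StrictMono (f ∘ z)}

/-- Normalized mass. -/
noncomputable def Tm {k n : ℕ} (f : ℝ → ℝ) (x : Fin (k + 1) → ℝ) (w : Fin n → Fin k) : ℝ :=
  (n.factorial : ℝ) * (unifP n).real (Aset f x w)

lemma PAData.piece_lt {k : ℕ} {f : ℝ → ℝ} {x : Fin (k + 1) → ℝ} {s c : Fin k → ℝ}
    (h : PAData f x s c) {i j : Fin k} (hij : i < j) {a b : ℝ} (ha : a ∈ piece x i)
    (hb : b ∈ piece x j) : a < b := by
  have : x i.succ ≤ x j.castSucc := h.hmono.monotone (by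
    simp only [Fin.le_def, Fin.lt_def, Fin.val_succ, Fin.val_castSucc] at *; omega)
  exact (ha.2.trans this).trans_lt hb.1

lemma PAData.piece_eq {k : ℕ} {f : ℝ → ℝ} {x : Fin (k + 1) → ℝ} {s c : Fin k → ℝ}
    (h : PAData f x s c) {i j : Fin k} {a : ℝ} (ha : a ∈ piece x i)
    (hb : a ∈ piece x j) : i = j := by
  rcases lt_trichotomy i j with hij | hij | hij
  · exact absurd (h.piece_lt hij ha hb) (lt_irrefl _)
  · exact hij
  · exact absurd (h.piece_lt hij hb ha) (lt_irrefl _)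

lemma PAData.piece_sub {k : ℕ} {f : ℝ → ℝ} {x : Fin (k + 1) → ℝ} {s c : Fin k → ℝ}
    (h : PAData f x s c) (j : Fin k) : piece x j ⊆ Set.Icc 0 1 := by
  intro a ha
  have h1 := h.hmono.monotone (Fin.zero_le j.castSucc)
  have h2 := h.hmono.monotone (Fin.le_last j.succ)
  rw [h.hx0] at h1; rw [h.hxk] at h2
  exact ⟨h1.trans ha.1.le, ha.2.trans h2⟩

lemma PAData.f_eq {k : ℕ} {f : ℝ → ℝ} {x : Fin (k + 1) → ℝ} {s c : Fin k → ℝ}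
    (h : PAData f x s c) {j : Fin k} {a : ℝ} (ha : a ∈ piece x j) : f a = c j + s j * a :=
  h.haff j a ⟨ha.1.le, ha.2⟩

lemma PAData.piece_cover {k : ℕ} {f : ℝ → ℝ} {x : Fin (k + 1) → ℝ} {s c : Fin k → ℝ}
    (h : PAData f x s c) {a : ℝ} (ha : a ∈ Set.Ioc (0:ℝ) 1) : ∃ j, a ∈ piece x j := by
  classical
  obtain ⟨j, hj, hmax⟩ := (Finset.univ.filter fun j => x j < a).exists_max_image id
    ⟨0, by simp [h.hx0, ha.1]⟩
  simp only [Finset.mem_filter, Finset.mem_univ, true_and, id] at hj hmax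
  have hne : j ≠ Fin.last k := by
    rintro rfl; rw [h.hxk] at hj; exact absurd ha.2 (not_le.2 hj)
  obtain ⟨i, rfl⟩ := Fin.exists_castSucc_eq.2 hne
  refine ⟨i, hj, ?_⟩
  by_contra hc
  have := hmax i.succ (not_le.1 hc)
  exact absurd this (not_le.2 Fin.castSucc_lt_succ)

lemma PAData.Aset_meas {k n : ℕ} {f : ℝ → ℝ} {x : Fin (k + 1) → ℝ} {s c : Fin k → ℝ}
    (h : PAData f x s c) (w : Fin n → Fin k) : MeasurableSet (Aset f x w) := by
  refine MeasurableSet.inter (s₁ := {z | ∀ i, z i ∈ piece x (w i)}) ?_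
    (measurableSet_strictMono h.hmeas id)
  have : {z : Fin n → ℝ | ∀ i, z i ∈ piece x (w i)} = Set.univ.pi fun i => piece x (w i) := by
    ext; simp
  rw [this]
  exact MeasurableSet.univ_pi fun i => measurableSet_Ioc

lemma PAData.Tm_le {k n : ℕ} {f : ℝ → ℝ} {x : Fin (k + 1) → ℝ} {s c : Fin k → ℝ}
    (h : PAData f x s c) (w : Fin n → Fin k) : Tm f x w ≤ ∏ i, |s (w i)|⁻¹ := by
  set S : Set (Fin n → ℝ) := {y | StrictMono y} ∩ Set.univ.pi fun _ => Set.Icc (0:ℝ) 1 with hS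
  have hSm : MeasurableSet {y : Fin n → ℝ | StrictMono y} :=
    measurableSet_strictMono measurable_id id
  have hSm' : MeasurableSet S := hSm.inter (MeasurableSet.univ_pi fun _ => measurableSet_Icc)
  have h1 : unifP n (Aset f x w) ≤
      ENNReal.ofReal (∏ i, |s (w i)|⁻¹) * unifP n {y | StrictMono y} := by
    rw [unifP_eq, Measure.restrict_apply hSm, ← hS,
      ← volume_affine_preimage (fun i => s (w i)) (fun i => c (w i)) (fun i => h.hs _) S hSm']
    refine (Measure.restrict_apply_le _ _).trans (measure_mono ?_)
    rintro z ⟨hz, hz'⟩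
    have e : (fun i => c (w i) + s (w i) * z i) = f ∘ z := by
      funext i; exact (h.f_eq (hz i)).symm
    rw [Set.mem_preimage, e]
    exact ⟨hz', fun i _ => h.hmaps (h.piece_sub _ (hz i))⟩
  have hp : 0 ≤ ∏ i, |s (w i)|⁻¹ := Finset.prod_nonneg fun i _ => by positivity
  have h2 := ENNReal.toReal_mono (by finiteness) h1
  rw [ENNReal.toReal_mul, ENNReal.toReal_ofReal hp] at h2
  have h3 := factorial_mul_strictMono n
  calc Tm f x w ≤ n.factorial * ((∏ i, |s (w i)|⁻¹) * (unifP n).real {y | StrictMono y}) := by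
        unfold Tm; gcongr; exact h2
    _ = (∏ i, |s (w i)|⁻¹) * (n.factorial * (unifP n).real {y | StrictMono y}) := by ring
    _ = _ := by rw [h3, mul_one]

lemma PAData.box {k n : ℕ} {f : ℝ → ℝ} {x : Fin (k + 1) → ℝ} {s c : Fin k → ℝ}
    (h : PAData f x s c) (v : Fin n → Fin k) :
    ∏ i, (x (v i).succ - x (v i).castSucc) =
      ∑ σ : Equiv.Perm (Fin n), (unifP n).real (Aset f x (v ∘ σ)) := by
  have h1 := unifP_split h.hmeas h.hmp n (Set.univ.pi fun i => piece x (v i))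
    (MeasurableSet.univ_pi fun i => measurableSet_Ioc)
  have h2 : ∀ σ : Equiv.Perm (Fin n),
      unifP n ((Set.univ.pi fun i => piece x (v i)) ∩ {x | StrictMono (f ∘ x ∘ σ)}) =
      unifP n (Aset f x (v ∘ σ)) := by
    intro σ
    rw [← unifP_perm σ (Aset f x (v ∘ σ))]
    congr 1; ext z
    simp only [Aset, Set.mem_inter_iff, Set.mem_univ_pi, Set.mem_ofPred_eq, Set.mem_preimage,
      Function.comp_apply]
    rw [← σ.forall_congr_right (q := fun i => z i ∈ piece x (v i))]
  simp only [h2] at h1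
  rw [Measure.pi_pi] at h1
  have h3 : ∀ j, (volume.restrict (Set.Icc (0:ℝ) 1)) (piece x j) =
      ENNReal.ofReal (x j.succ - x j.castSucc) := by
    intro j
    rw [Measure.restrict_apply (show MeasurableSet (piece x j) from measurableSet_Ioc), Set.inter_eq_left.2 (h.piece_sub j), piece,
      Real.volume_Ioc]
  simp only [h3] at h1
  have h4 := congrArg ENNReal.toReal h1
  rw [ENNReal.toReal_prod, ENNReal.toReal_sum (by finiteness)] at h4
  rw [← Finset.prod_congr rfl fun i _ => ENNReal.toReal_ofReal ?_]
  · exact h4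
  · exact sub_nonneg.2 (h.hmono.monotone Fin.castSucc_lt_succ.le)

lemma PAData.sum_len {k : ℕ} {f : ℝ → ℝ} {x : Fin (k + 1) → ℝ} {s c : Fin k → ℝ}
    (h : PAData f x s c) : ∑ j : Fin k, (x j.succ - x j.castSucc) = 1 := by
  have h1 := Fin.sum_univ_succ x
  have h2 := Fin.sum_univ_castSucc x
  rw [Finset.sum_sub_distrib]
  have := h.hx0; have := h.hxk
  linarith

lemma PAData.sum_Tm {k n : ℕ} {f : ℝ → ℝ} {x : Fin (k + 1) → ℝ} {s c : Fin k → ℝ}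
    (h : PAData f x s c) (G : (Fin n → Fin k) → ℝ)
    (hG : ∀ v (σ : Equiv.Perm (Fin n)), G (v ∘ σ) = G v) :
    ∑ w, Tm f x w * G w =
      ∑ v : Fin n → Fin k, (∏ i, (x (v i).succ - x (v i).castSucc)) * G v := by
  simp_rw [h.box, Finset.sum_mul]
  rw [Finset.sum_comm]
  have : ∀ σ : Equiv.Perm (Fin n),
      ∑ v : Fin n → Fin k, (unifP n).real (Aset f x (v ∘ σ)) * G v =
      ∑ w, (unifP n).real (Aset f x w) * G w := by
    intro σ
    refine Fintype.sum_equiv (σ.symm.arrowCongr (Equiv.refl _)) _ _ fun v => ?_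
    have : (σ.symm.arrowCongr (Equiv.refl (Fin k))) v = v ∘ σ := by
      funext i; simp [Equiv.arrowCongr]
    rw [this, hG]
  simp only [this, Finset.sum_const, Finset.card_univ, Fintype.card_perm,
    Fintype.card_fin, nsmul_eq_mul]
  rw [Finset.mul_sum]
  exact Finset.sum_congr rfl fun w _ => by rw [Tm]; ring

lemma PAData.same_order {k n : ℕ} {f : ℝ → ℝ} {x : Fin (k + 1) → ℝ} {s c : Fin k → ℝ}
    (h : PAData f x s c) {w : Fin n → Fin k} {z z' : Fin n → ℝ} (hz : z ∈ Aset f x w)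
    (hz' : z' ∈ Aset f x w) {i j : Fin n} (hij : z i < z j) : z' i < z' j := by
  rcases lt_trichotomy (w i) (w j) with hw | hw | hw
  · exact h.piece_lt hw (hz'.1 i) (hz'.1 j)
  · have a1 := h.f_eq (hz.1 i)
    have a2 := h.f_eq (hz.1 j)
    have a3 := h.f_eq (hz'.1 i)
    have a4 := h.f_eq (hz'.1 j)
    rw [hw] at a1 a3
    rcases lt_or_gt_of_ne (h.hs (w j)) with hneg | hpos
    · have : f (z j) < f (z i) := by rw [a1, a2]; nlinarith
      have hji : j < i := hz.2.lt_iff_lt.1 this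
      have h2 : f (z' j) < f (z' i) := hz'.2 hji
      rw [a3, a4] at h2
      nlinarith
    · have : f (z i) < f (z j) := by rw [a1, a2]; nlinarith
      have hji : i < j := hz.2.lt_iff_lt.1 this
      have h2 : f (z' i) < f (z' j) := hz'.2 hji
      rw [a3, a4] at h2
      nlinarith
  · exact absurd (h.piece_lt hw (hz.1 j) (hz.1 i)) (not_lt.2 hij.le)

open Classical in
/-- words compatible with a permutation -/
noncomputable def Dset {k n : ℕ} (f : ℝ → ℝ) (x : Fin (k + 1) → ℝ) (p : Equiv.Perm (Fin n)) :
    Finset (Fin n → Fin k) :=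
  Finset.univ.filter fun w => ∃ z ∈ Aset f x w, StrictMono (z ∘ p)

lemma mem_Dset {k n : ℕ} {f : ℝ → ℝ} {x : Fin (k + 1) → ℝ} {p : Equiv.Perm (Fin n)}
    {w : Fin n → Fin k} : w ∈ Dset f x p ↔ ∃ z ∈ Aset f x w, StrictMono (z ∘ p) := by
  simp [Dset]

lemma PAData.Dset_card {k n : ℕ} {f : ℝ → ℝ} {x : Fin (k + 1) → ℝ} {s c : Fin k → ℝ}
    (h : PAData f x s c) (p : Equiv.Perm (Fin n)) : (Dset f x p).card ≤ (n + 1) ^ k := by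
  refine card_monotone_le _ p fun w hw => ?_
  obtain ⟨z, hz, hzp⟩ := mem_Dset.1 hw
  intro i j hij
  by_contra hc
  have h1 := h.piece_lt (not_le.1 hc) (hz.1 (p j)) (hz.1 (p i))
  exact absurd (hzp.monotone hij) (not_le.2 h1)

lemma PAData.Dset_unique {k n : ℕ} {f : ℝ → ℝ} {x : Fin (k + 1) → ℝ} {s c : Fin k → ℝ}
    (h : PAData f x s c) (w : Fin n → Fin k) (hw : Tm f x w ≠ 0) :
    ∃! p, w ∈ Dset f x p := by
  have hne : (Aset f x w).Nonempty := by
    by_contra hc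
    rw [Set.not_nonempty_iff_eq_empty] at hc
    simp [Tm, hc] at hw
  obtain ⟨z, hz⟩ := hne
  have hzi : Function.Injective z := hz.2.injective.of_comp
  obtain ⟨p, hp⟩ := exists_sort z hzi
  refine ⟨p, mem_Dset.2 ⟨z, hz, hp⟩, fun q hq => ?_⟩
  obtain ⟨z', hz', hq'⟩ := mem_Dset.1 hq
  exact sort_unique z _ _ (fun i j hij => h.same_order hz' hz (hq' hij)) hp

lemma ae_coord {p : ℝ → Prop} (n : ℕ) (h : ∀ᵐ t ∂(volume.restrict (Set.Icc (0:ℝ) 1)), p t) :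
    ∀ᵐ z ∂unifP n, ∀ i, p (z i) := by
  rw [ae_all_iff]; intro i
  exact (measurePreserving_eval (fun _ : Fin n => volume.restrict (Set.Icc (0:ℝ) 1))
    i).quasiMeasurePreserving.ae h

lemma PAData.patternProb_eq {k n : ℕ} {f : ℝ → ℝ} {x : Fin (k + 1) → ℝ} {s c : Fin k → ℝ}
    (h : PAData f x s c) (π : Equiv.Perm (Fin n)) :
    patternProb (graphPermuton f) π = ∑ w ∈ Dset f x π, Tm f x w := by
  have hg : Measurable fun t : ℝ => (t, f t) := measurable_id.prodMk h.hmeas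
  haveI : IsProbabilityMeasure (Measure.map (fun t => (t, f t))
      (volume.restrict (Set.Icc (0:ℝ) 1))) := Measure.isProbabilityMeasure_map hg.aemeasurable
  have hpi : (Measure.pi fun _ : Fin n => graphPermuton f) =
      Measure.map (fun (z : Fin n → ℝ) i => (z i, f (z i))) (unifP n) := by
    unfold graphPermuton
    rw [unifP, Measure.pi_map_pi (f := fun (_ : Fin n) (t : ℝ) => (t, f t))]
    exact fun i => hg.aemeasurable
  have hmE : MeasurableSet {p : Fin n → ℝ × ℝ | ∀ i j : Fin n, i < j →
        (p i).1 < (p j).1 ∧ ((p i).2 < (p j).2 ↔ π i < π j)} := by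
    have : {p : Fin n → ℝ × ℝ | ∀ i j : Fin n, i < j →
        (p i).1 < (p j).1 ∧ ((p i).2 < (p j).2 ↔ π i < π j)} =
        ⋂ i, ⋂ j, ⋂ (_ : i < j), ({p | (p i).1 < (p j).1} ∩
          {p | (p i).2 < (p j).2 ↔ π i < π j}) := by
      ext p; simp
    rw [this]
    refine MeasurableSet.iInter fun i => MeasurableSet.iInter fun j =>
      MeasurableSet.iInter fun _ => MeasurableSet.inter ?_ ?_
    · exact measurableSet_lt (by fun_prop) (by fun_prop)
    · by_cases hq : π i < π j
      · simp only [hq, iff_true]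
        exact measurableSet_lt (by fun_prop) (by fun_prop)
      · simp only [hq, iff_false, not_lt]
        exact measurableSet_le (by fun_prop) (by fun_prop)
  have hmg : Measurable (fun (z : Fin n → ℝ) (i : Fin n) => (z i, f (z i))) :=
    measurable_pi_lambda _ fun i => hg.comp (measurable_pi_apply i)
  set S : Set (Fin n → ℝ) := {z | StrictMono (f ∘ z) ∧ StrictMono (z ∘ π)} with hS
  have h1 : (Measure.pi fun _ : Fin n => graphPermuton f)
      {p : Fin n → ℝ × ℝ | ∀ i j : Fin n, i < j →
        (p i).1 < (p j).1 ∧ ((p i).2 < (p j).2 ↔ π i < π j)} = unifP n S := by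
    rw [hpi, Measure.map_apply hmg hmE, ← unifP_perm π.symm S]
    refine measure_congr ?_
    filter_upwards [ae_injective_f h.hmeas h.hmp n] with z hz
    refine propext ⟨fun hE => ?_, fun hE => ?_⟩
    · have hE' : ∀ i j : Fin n, i < j → z i < z j ∧ (f (z i) < f (z j) ↔ π i < π j) := hE
      refine ⟨fun a b hab => ?_, fun a b hab => ?_⟩
      · obtain ⟨i, rfl⟩ := π.surjective a
        obtain ⟨j, rfl⟩ := π.surjective b
        simp only [Function.comp_apply, Equiv.symm_apply_apply]
        rcases lt_trichotomy i j with hij | hij | hij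
        · exact (hE' i j hij).2.2 hab
        · subst hij; exact absurd hab (lt_irrefl _)
        · have := mt (hE' j i hij).2.1 (not_lt.2 hab.le)
          refine lt_of_le_of_ne (not_lt.1 this) fun he => ?_
          exact hij.ne' (hz he)
      · simpa using (hE' a b hab).1
    · obtain ⟨h1, h2⟩ := hE
      have h2' : StrictMono z := by simpa [Function.comp_assoc] using h2
      intro i j hij
      refine ⟨h2' hij, ?_⟩
      have := h1.lt_iff_lt (a := π i) (b := π j)
      simpa using this
  have hIoc : ∀ᵐ t ∂(volume.restrict (Set.Icc (0:ℝ) 1)), t ∈ Set.Ioc (0:ℝ) 1 := by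
    rw [← restrict_Ioc_eq_restrict_Icc]
    exact ae_restrict_mem measurableSet_Ioc
  have h2 : unifP n S = ∑ w ∈ Dset f x π, unifP n (Aset f x w) := by
    rw [← measure_biUnion_finset]
    · refine measure_congr ?_
      filter_upwards [ae_coord n hIoc] with z hz
      refine propext ⟨fun hE => ?_, fun hE => ?_⟩
      · choose w hw using fun i => h.piece_cover (hz i)
        have hA : z ∈ Aset f x w := ⟨hw, hE.1⟩
        exact Set.mem_biUnion (mem_Dset.2 ⟨z, hA, hE.2⟩ : w ∈ Dset f x π) hA
      · obtain ⟨w, hw, hA⟩ := Set.mem_iUnion₂.1 hE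
        obtain ⟨z', hz', hp⟩ := mem_Dset.1 hw
        exact ⟨hA.2, fun i j hij => h.same_order hz' hA (hp hij)⟩
    · intro w _ w' _ hne
      refine Set.disjoint_left.2 fun z h1 h2 => hne ?_
      funext i
      exact h.piece_eq (h1.1 i) (h2.1 i)
    · exact fun w _ => h.Aset_meas w
  unfold patternProb
  rw [h1, h2, ENNReal.toReal_sum (by finiteness), Finset.mul_sum]
  rfl

/-- Endpoints of image intervals. -/
noncomputable def endp {k : ℕ} (x : Fin (k + 1) → ℝ) (s c : Fin k → ℝ) (b : Fin k × Bool) : ℝ :=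
  c b.1 + s b.1 * (if b.2 then x b.1.succ else x b.1.castSucc)

open Classical in
/-- pieces whose image contains `y` -/
noncomputable def inside {k : ℕ} (x : Fin (k + 1) → ℝ) (s c : Fin k → ℝ) (y : ℝ) :
    Finset (Fin k) :=
  Finset.univ.filter fun j => ¬ (endp x s c (j, false) < y ↔ endp x s c (j, true) < y)

lemma PAData.mem_inside {k : ℕ} {f : ℝ → ℝ} {x : Fin (k + 1) → ℝ} {s c : Fin k → ℝ}
    (h : PAData f x s c) {j : Fin k} {t : ℝ} (ht : t ∈ piece x j)
    (hB : ∀ b, f t ≠ endp x s c b) : j ∈ inside x s c (f t) := by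
  have h0 := hB (j, false)
  have h1 := hB (j, true)
  have hf := h.f_eq ht
  simp only [endp, inside, Finset.mem_filter, Finset.mem_univ, true_and, if_true,
    Bool.false_eq_true, if_false, hf] at *
  have hlt : t < x j.succ := lt_of_le_of_ne ht.2 fun he => h1 (by rw [he])
  have hgt := ht.1
  rcases lt_or_gt_of_ne (h.hs j) with hneg | hpos
  · intro hh
    have := hh.2 (by nlinarith)
    nlinarith
  · intro hh
    have := hh.1 (by nlinarith)
    nlinarith

lemma PAData.inside_sum {k : ℕ} {f : ℝ → ℝ} {x : Fin (k + 1) → ℝ} {s c : Fin k → ℝ}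
    (h : PAData f x s c) {y : ℝ} (hB : ∀ b, y ≠ endp x s c b) :
    ∑ j ∈ inside x s c y, |s j|⁻¹ ≤ 1 := by
  have hopen : IsOpen (Set.range (endp x s c))ᶜ := (Set.finite_range _).isClosed.isOpen_compl
  obtain ⟨ε, hε, hball⟩ := Metric.isOpen_iff.1 hopen y (by
    rintro ⟨b, hb⟩; exact hB b hb.symm)
  have hU : ∀ b, ε ≤ |endp x s c b - y| := by
    intro b
    by_contra hc
    exact hball (show endp x s c b ∈ Metric.ball y ε by
      rw [Metric.mem_ball, Real.dist_eq]; exact not_le.1 hc) ⟨b, rfl⟩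
  have hkey : ∀ j ∈ inside x s c y, ∀ t ∈ Metric.ball ((y - c j) / s j) (ε * |s j|⁻¹),
      t ∈ piece x j ∧ f t ∈ Metric.ball y ε := by
    intro j hj t ht
    have hsj := h.hs j
    have hsp : 0 < |s j| := abs_pos.2 hsj
    have ht' : |c j + s j * t - y| < ε := by
      rw [Metric.mem_ball, Real.dist_eq] at ht
      have : c j + s j * t - y = s j * (t - (y - c j) / s j) := by field_simp; ring
      rw [this, abs_mul]
      calc |s j| * |t - (y - c j) / s j| < |s j| * (ε * |s j|⁻¹) := by gcongr
        _ = ε := by field_simp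
    have e0 := hU (j, false)
    have e1 := hU (j, true)
    simp only [endp, inside, Finset.mem_filter, Finset.mem_univ, true_and, if_true,
      Bool.false_eq_true, if_false] at hj e0 e1
    have hx : x j.castSucc < x j.succ := h.hmono Fin.castSucc_lt_succ
    rw [abs_lt] at ht'
    have hp : t ∈ piece x j := by
      rcases lt_or_gt_of_ne hsj with hneg | hpos
      · have hlt : c j + s j * x j.succ < c j + s j * x j.castSucc := by nlinarith
        have a0 : c j + s j * x j.succ < y := by
          by_contra hc; exact hj ⟨fun hh => absurd (hlt.trans hh) hc, fun hh => absurd hh hc⟩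
        have a1 : ¬ c j + s j * x j.castSucc < y := fun hc => hj ⟨fun _ => a0, fun _ => hc⟩
        rw [abs_of_neg (by linarith)] at e1
        rw [abs_of_nonneg (by linarith)] at e0
        constructor
        · by_contra hc; nlinarith
        · by_contra hc; nlinarith
      · have hlt : c j + s j * x j.castSucc < c j + s j * x j.succ := by nlinarith
        have a0 : c j + s j * x j.castSucc < y := by
          by_contra hc; exact hj ⟨fun hh => absurd hh hc, fun hh => absurd (hlt.trans hh) hc⟩
        have a1 : ¬ c j + s j * x j.succ < y := fun hc => hj ⟨fun _ => hc, fun _ => a0⟩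
        rw [abs_of_neg (by linarith)] at e0
        rw [abs_of_nonneg (by linarith)] at e1
        constructor
        · by_contra hc; nlinarith
        · by_contra hc; nlinarith
    refine ⟨hp, ?_⟩
    rw [Metric.mem_ball, Real.dist_eq, h.f_eq hp, abs_lt]; exact ht'
  have h1 : ∑ j ∈ inside x s c y, volume (Metric.ball ((y - c j) / s j) (ε * |s j|⁻¹)) ≤
      volume (Metric.ball y ε) := by
    rw [← measure_biUnion_finset]
    · calc _ ≤ volume.restrict (Set.Icc (0:ℝ) 1) (f ⁻¹' Metric.ball y ε) := by
            rw [Measure.restrict_apply (h.hmeas measurableSet_ball)]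
            refine measure_mono fun t ht => ?_
            obtain ⟨j, hj, ht⟩ := Set.mem_iUnion₂.1 ht
            have := hkey j hj t ht
            exact ⟨this.2, h.piece_sub j this.1⟩
        _ = volume.restrict (Set.Icc (0:ℝ) 1) (Metric.ball y ε) := by
            rw [← Measure.map_apply h.hmeas measurableSet_ball, h.hmp]
        _ ≤ _ := Measure.restrict_apply_le _ _
    · intro i hi j hj hne
      exact Set.disjoint_left.2 fun t h1 h2 =>
        hne (h.piece_eq (hkey i hi t h1).1 (hkey j hj t h2).1)
    · exact fun _ _ => measurableSet_ball
  simp only [Real.volume_ball] at h1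
  rw [← ENNReal.ofReal_sum_of_nonneg (fun j _ => by positivity),
    ENNReal.ofReal_le_ofReal_iff (by positivity), ← Finset.mul_sum, ← Finset.mul_sum] at h1
  by_contra hc
  nlinarith

lemma PAData.exists_witness {k n : ℕ} {f : ℝ → ℝ} {x : Fin (k + 1) → ℝ} {s c : Fin k → ℝ}
    (h : PAData f x s c) (w : Fin n → Fin k) (hw : Tm f x w ≠ 0) :
    ∃ y : Fin n → ℝ, StrictMono y ∧ (∀ i b, y i ≠ endp x s c b) ∧
      ∀ i, w i ∈ inside x s c (y i) := by
  have hae : ∀ᵐ t ∂(volume.restrict (Set.Icc (0:ℝ) 1)), ∀ b, f t ≠ endp x s c b := by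
    have hq : MeasurePreserving f (volume.restrict (Set.Icc (0:ℝ) 1))
      (volume.restrict (Set.Icc (0:ℝ) 1)) := ⟨h.hmeas, h.hmp⟩
    refine hq.quasiMeasurePreserving.ae (p := fun t => ∀ b, t ≠ endp x s c b) ?_
    rw [ae_all_iff]; intro b
    exact Measure.ae_ne _ _
  have h1 := ae_coord n hae
  have h2 : ∃ z ∈ Aset f x w, ∀ i b, f (z i) ≠ endp x s c b := by
    by_contra hc
    push Not at hc
    refine hw ?_
    have : unifP n (Aset f x w) = 0 := by
      refine measure_mono_null (fun z hz => ?_) (ae_iff.1 h1)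
      obtain ⟨i, b, hb⟩ := hc z hz
      exact fun hall => hall i b hb
    simp [Tm, Measure.real, this]
  obtain ⟨z, hz, hzB⟩ := h2
  exact ⟨f ∘ z, hz.2, hzB, fun i => h.mem_inside (hz.1 i) (hzB i)⟩

open Classical in
lemma PAData.Z_le {k n : ℕ} {f : ℝ → ℝ} {x : Fin (k + 1) → ℝ} {s c : Fin k → ℝ}
    (h : PAData f x s c) :
    ∑ w : Fin n → Fin k with Tm f x w ≠ 0, ∏ i, |s (w i)|⁻¹ ≤ ((n : ℝ) + 1) ^ (2 * k) := by
  have hch : ∀ w : Fin n → Fin k, ∃ y : Fin n → ℝ, Tm f x w ≠ 0 → StrictMono y ∧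
      (∀ i b, y i ≠ endp x s c b) ∧ ∀ i, w i ∈ inside x s c (y i) := by
    intro w
    by_cases hw : Tm f x w ≠ 0
    · obtain ⟨y, hy⟩ := h.exists_witness w hw
      exact ⟨y, fun _ => hy⟩
    · exact ⟨0, fun hh => absurd hh hw⟩
  choose Y hY using hch
  let θ : (Fin n → Fin k) → (Fin k × Bool → Fin (n + 1)) := fun w b =>
    cnt (Finset.univ.filter fun i => ¬ endp x s c b < Y w i)
  have hθ : ∀ w w', Tm f x w ≠ 0 → Tm f x w' ≠ 0 → θ w = θ w' → ∀ b i,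
      (endp x s c b < Y w i ↔ endp x s c b < Y w' i) := by
    intro w w' hw hw' he b i
    have h1 := congrArg Fin.val (congrFun he b)
    simp only [θ, cnt] at h1
    have h2 := lower_eq_of_card _ _ ?_ ?_ h1
    · have := Finset.ext_iff.1 h2 i
      simp only [Finset.mem_filter, Finset.mem_univ, true_and] at this
      exact not_iff_not.1 this
    · intro a b hab hb
      simp only [Finset.mem_filter, Finset.mem_univ, true_and] at hb ⊢
      exact fun hh => hb (hh.trans_le ((hY w hw).1.monotone hab))
    · intro a b hab hb
      simp only [Finset.mem_filter, Finset.mem_univ, true_and] at hb ⊢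
      exact fun hh => hb (hh.trans_le ((hY w' hw').1.monotone hab))
  have hone : ∀ t : Fin k × Bool → Fin (n + 1),
      ∑ w ∈ (Finset.univ.filter fun w : Fin n → Fin k => Tm f x w ≠ 0).filter (fun w => θ w = t),
        ∏ i, |s (w i)|⁻¹ ≤ 1 := by
    intro t
    rcases ((Finset.univ.filter fun w : Fin n → Fin k => Tm f x w ≠ 0).filter
      (fun w => θ w = t)).eq_empty_or_nonempty with he | ⟨w0, hw0⟩
    · rw [he]; simp
    · simp only [Finset.mem_filter, Finset.mem_univ, true_and] at hw0
      calc _ ≤ ∑ w ∈ Fintype.piFinset fun i => inside x s c (Y w0 i), ∏ i, |s (w i)|⁻¹ := by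
            refine Finset.sum_le_sum_of_subset_of_nonneg ?_
              fun w _ _ => Finset.prod_nonneg fun i _ => by positivity
            intro w hw
            simp only [Finset.mem_filter, Finset.mem_univ, true_and] at hw
            rw [Fintype.mem_piFinset]
            intro i
            have h1 := (hY w hw.1).2.2 i
            have h2 := hθ w w0 hw.1 hw0.1 (hw.2.trans hw0.2.symm)
            simpa [inside, h2] using h1
        _ = ∏ i, ∑ j ∈ inside x s c (Y w0 i), |s j|⁻¹ :=
            (Finset.prod_univ_sum _ (fun _ j => |s j|⁻¹)).symm
        _ ≤ 1 := Finset.prod_le_one (fun i _ => Finset.sum_nonneg fun j _ => by positivity)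
            fun i _ => h.inside_sum ((hY w0 hw0.1).2.1 i)
  rw [← Finset.sum_fiberwise (Finset.univ.filter fun w : Fin n → Fin k => Tm f x w ≠ 0) θ]
  refine (Finset.sum_le_sum fun t _ => hone t).trans ?_
  simp [mul_comm]

lemma PAData.entropy {k : ℕ} {f : ℝ → ℝ} {x : Fin (k + 1) → ℝ} {s c : Fin k → ℝ}
    (h : PAData f x s c) (n : ℕ) :
    |samplingEntropy (graphPermuton f) n -
      n * (∑ i : Fin k, (x i.succ - x i.castSucc) * Real.log |s i|)| ≤
      2 * k * Real.log (n + 1) := by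
  classical
  have h1n : (1:ℝ) ≤ (n:ℝ) + 1 := by have : (0:ℝ) ≤ n := n.cast_nonneg; linarith
  have hsum : ∑ w : Fin n → Fin k, Tm f x w = 1 := by
    have := h.sum_Tm (n := n) (fun _ => 1) (by simp)
    simp only [mul_one] at this
    rw [this]; exact sum_prod_one (fun j => x j.succ - x j.castSucc) h.sum_len
  have hE := entropy_bounds (fun π : Equiv.Perm (Fin n) => patternProb (graphPermuton f) π)
    (Tm f x) (fun w : Fin n → Fin k => ∏ i, |s (w i)|⁻¹) (Dset f x)
    (((n : ℝ) + 1) ^ k) (((n : ℝ) + 1) ^ (2 * k)) (one_le_pow₀ h1n) (one_le_pow₀ h1n)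
    (fun w => by unfold Tm; positivity)
    (fun w => Finset.prod_pos fun i _ => inv_pos.2 (abs_pos.2 (h.hs _)))
    h.Tm_le h.patternProb_eq h.Dset_unique
    (fun p => by exact_mod_cast h.Dset_card p) hsum h.Z_le
  have hlog : ∀ w : Fin n → Fin k, -Real.log (∏ i, |s (w i)|⁻¹) = ∑ i, Real.log |s (w i)| := by
    intro w
    rw [Real.log_prod (fun i _ => inv_ne_zero (abs_ne_zero.2 (h.hs _)))]
    simp [Real.log_inv]
  simp only [hlog] at hE
  rw [h.sum_Tm (n := n) (fun w => ∑ i, Real.log |s (w i)|)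
    (fun v σ => Equiv.sum_comp σ (fun i => Real.log |s (v i)|)),
    sum_prod_additive (fun j => x j.succ - x j.castSucc) (fun j => Real.log |s j|) h.sum_len,
    Real.log_pow, Real.log_pow] at hE
  have hl : 0 ≤ k * Real.log (n + 1) := mul_nonneg k.cast_nonneg (Real.log_nonneg h1n)
  push_cast at hE
  rw [abs_le]
  unfold samplingEntropy
  constructor <;> linarith [hE.1, hE.2]

/-- If f : [0,1] → [0,1] preserves Lebesgue measure and is piecewise affine with nonzero
slopes s_i on the pieces [x_{i-1}, x_i], then
H_n(μ_f)/n → ∑ᵢ (xᵢ - xᵢ₋₁) log |sᵢ| = ∫₀¹ log |f'|. -/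
theorem samplingEntropy_div_tendsto_of_piecewiseAffine
    (f : ℝ → ℝ) (hmeas : Measurable f)
    (hmaps : Set.MapsTo f (Set.Icc (0:ℝ) 1) (Set.Icc (0:ℝ) 1))
    (hmp : Measure.map f (volume.restrict (Set.Icc (0:ℝ) 1)) =
      volume.restrict (Set.Icc (0:ℝ) 1))
    (k : ℕ) (x : Fin (k + 1) → ℝ) (hx0 : x 0 = 0) (hxk : x (Fin.last k) = 1)
    (hmono : StrictMono x)
    (s c : Fin k → ℝ) (hs : ∀ i, s i ≠ 0)
    (haff : ∀ i : Fin k, ∀ t ∈ Set.Icc (x i.castSucc) (x i.succ), f t = c i + s i * t) :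
    Tendsto (fun n : ℕ => samplingEntropy (graphPermuton f) n / n) atTop
      (nhds (∑ i : Fin k, (x i.succ - x i.castSucc) * Real.log |s i|)) := by
  have h : PAData f x s c := ⟨hmeas, hmaps, hmp, hx0, hxk, hmono, hs, haff⟩
  set H : ℝ := ∑ i : Fin k, (x i.succ - x i.castSucc) * Real.log |s i| with hH
  have hlim : Tendsto (fun n : ℕ => 2 * k * (Real.log (n + 1) / n)) atTop (nhds 0) := by
    have h1 : Tendsto (fun t : ℝ => Real.log t / (t - 1)) atTop (nhds 0) := by
      have := Real.tendsto_pow_log_div_mul_add_atTop 1 (-1) 1 one_ne_zero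
      simpa [sub_eq_add_neg] using this
    have h2 : Tendsto (fun n : ℕ => ((n : ℝ) + 1)) atTop atTop :=
      tendsto_atTop_add_const_right _ _ tendsto_natCast_atTop_atTop
    have h3 := (h1.comp h2).const_mul (2 * (k:ℝ))
    simpa [Function.comp_def] using h3
  rw [tendsto_iff_norm_sub_tendsto_zero]
  refine squeeze_zero' (Eventually.of_forall fun n => norm_nonneg _) ?_ hlim
  filter_upwards [eventually_gt_atTop 0] with n hn
  have hn' : (0:ℝ) < n := by exact_mod_cast hn
  have hb := h.entropy n
  rw [← hH] at hb
  have e : samplingEntropy (graphPermuton f) n / n - H =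
      (samplingEntropy (graphPermuton f) n - n * H) / n := by field_simp
  rw [Real.norm_eq_abs, e, abs_div, abs_of_pos hn', ← mul_div_assoc]
  gcongr
end
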